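/- arXiv:1910.08572 — 2 statements merged into one kernel-verified Lean document; each statement's English description precedes it below -/
import Mathlib

section
/- Equidistribution of Gauss sum angles (Deligne, Theorem 1.1): For every continuous function f : S¹ → ℂ on the unit circle and every ε > 0, there exists Q such that for every finite field F_q with q ≥ Q elements (q > 2) and every nontrivial additive character ψ : (F_q,+) → ℂˣ, one has |(1/(q−2)) Σ_{χ nontrivial} f(g(ψ,χ)/√q) − (1/(2π)) ∫₀^{2π} f(e^{iθ}) dθ| < ε, where the sum runs over all nontrivial multiplicative characters χ : F_q^× → ℂˣ and g(ψ,χ)/√q lies on the unit circle. -/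
open Finset
open scoped Classical

instance {F : Type*} [Field F] [Fintype F] : Finite (Fˣ →* ℂˣ) :=
  Finite.of_equiv _ MulChar.equivToUnitHom

noncomputable instance {F : Type*} [Field F] [Fintype F] : Fintype (Fˣ →* ℂˣ) :=
  Fintype.ofFinite _

/-- The Gauss sum `g(ψ, χ) = ∑_{x ∈ F_q^×} ψ(x) χ(x)`. -/
noncomputable def gaussSum' {F : Type*} [Field F] [Fintype F]
    (ψ : AddChar F ℂ) (χ : Fˣ →* ℂˣ) : ℂ :=
  ∑ x : Fˣ, ψ (x : F) * (χ x : ℂ)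

namespace GS

open Matrix

set_option linter.unusedSectionVars false

variable {F : Type} [Field F] [Fintype F]

lemma conj_addChar {A : Type*} [AddCommGroup A] [Finite A] (e : AddChar A ℂ) (a : A) :
    (starRingEnd ℂ) (e a) = e (-a) := (AddChar.map_neg_eq_conj e a).symm

lemma parseval {A Y : Type*} [AddCommGroup A] [Fintype A] [Fintype Y]
    (e : Y → AddChar A ℂ) (he : Function.Injective e) (f : Y → ℂ) :
    ∑ a, ‖∑ y, e y a * f y‖ ^ 2 = Fintype.card A * ∑ y, ‖f y‖ ^ 2 := by
  have key : ∀ y y', ∑ a, e y a * (starRingEnd ℂ) (e y' a) = if y = y' then (Fintype.card A : ℂ) else 0 := by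
    intro y y'
    have h1 : ∀ a, e y a * (starRingEnd ℂ) (e y' a) = (e y * (e y')⁻¹) a := by
      intro a
      rw [conj_addChar, AddChar.mul_apply, AddChar.inv_apply]
    simp_rw [h1]
    rw [AddChar.sum_eq_ite]
    have : (e y * (e y')⁻¹ = 0) ↔ y = y' := by
      rw [← AddChar.one_eq_zero, mul_inv_eq_one]
      exact he.eq_iff
    simp [this]
  have h2 : ((∑ a, ‖∑ y, e y a * f y‖ ^ 2 : ℝ) : ℂ) = ((Fintype.card A * ∑ y, ‖f y‖ ^ 2 : ℝ) : ℂ) := by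
    push_cast
    have : ∀ a, ((‖∑ y, e y a * f y‖ : ℝ) : ℂ) ^ 2 = ∑ y, ∑ y', (e y a * (starRingEnd ℂ) (e y' a)) * (f y * (starRingEnd ℂ) (f y')) := by
      intro a
      rw [← Complex.mul_conj', map_sum, Finset.sum_mul_sum]
      refine Finset.sum_congr rfl fun y _ => Finset.sum_congr rfl fun y' _ => ?_
      rw [map_mul]; ring
    simp_rw [this]
    rw [Finset.sum_comm, Finset.mul_sum]
    refine Finset.sum_congr rfl fun y _ => ?_
    rw [Finset.sum_comm]
    simp_rw [← Finset.sum_mul, key]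
    simp [Complex.mul_conj']
  exact_mod_cast h2

/-- the convolution operator -/
noncomputable def T (ψ : AddChar F ℂ) {m : ℕ} (f : GL (Fin m) F → ℂ) : GL (Fin m) F → ℂ :=
  fun g => ∑ y, ψ (Matrix.trace ((g * y⁻¹ : GL (Fin m) F) : Matrix (Fin m) (Fin m) F)) * f y

lemma eq_zero_of_psi {ψ : AddChar F ℂ} (hψ : ψ ≠ 1) (x : F) (h : ∀ c, ψ (c * x) = 1) : x = 0 := by
  by_contra hx
  apply hψ
  ext z
  have := h (z / x)
  rwa [div_mul_cancel₀ _ hx] at this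

lemma trace_single_mul {m : ℕ} (i j : Fin m) (c : F) (B : Matrix (Fin m) (Fin m) F) :
    Matrix.trace (Matrix.single i j c * B) = c * B j i := by
  simp [Matrix.trace_single_mul]

noncomputable def trChar (ψ : AddChar F ℂ) {m : ℕ} (B : Matrix (Fin m) (Fin m) F) :
    AddChar (Matrix (Fin m) (Fin m) F) ℂ where
  toFun A := ψ (Matrix.trace (A * B))
  map_zero_eq_one' := by simp
  map_add_eq_mul' A A' := by
    rw [Matrix.add_mul, Matrix.trace_add, AddChar.map_add_eq_mul]

lemma trChar_inj {ψ : AddChar F ℂ} (hψ : ψ ≠ 1) {m : ℕ} :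
    Function.Injective (trChar ψ (m := m)) := by
  intro B B' h
  have h1 : ∀ A, ψ (Matrix.trace (A * (B - B'))) = 1 := by
    intro A
    have h2 : ψ (Matrix.trace (A * B)) = ψ (Matrix.trace (A * B')) := DFunLike.congr_fun h A
    rw [Matrix.mul_sub, Matrix.trace_sub, AddChar.map_sub_eq_div, h2, div_self]
    exact (ψ.val_isUnit _).ne_zero
  have h3 : B - B' = 0 := by
    ext i j
    apply eq_zero_of_psi hψ
    intro c
    have := h1 (Matrix.single j i c)
    rwa [GS.trace_single_mul] at this
  exact sub_eq_zero.mp h3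

lemma T_norm {ψ : AddChar F ℂ} (hψ : ψ ≠ 1) {m : ℕ} (f : GL (Fin m) F → ℂ) :
    ∑ g, ‖T ψ f g‖ ^ 2 ≤ (Fintype.card F : ℝ) ^ (m ^ 2) * ∑ g, ‖f g‖ ^ 2 := by
  have h := parseval (fun y : GL (Fin m) F => trChar ψ ((y⁻¹ : GL (Fin m) F) : Matrix (Fin m) (Fin m) F))
    (by
      intro y y' h
      have := trChar_inj hψ h
      have h2 : y⁻¹ = y'⁻¹ := Units.ext this
      exact inv_injective h2) f
  have hc : (Fintype.card (Matrix (Fin m) (Fin m) F) : ℝ) = (Fintype.card F : ℝ) ^ (m ^ 2) := by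
    rw [Fintype.card_congr (Matrix.of (m := Fin m) (n := Fin m) (α := F)).symm]
    simp [pow_two, pow_mul]
  rw [hc] at h
  rw [← h]
  have hinj : Function.Injective (fun g : GL (Fin m) F => (g : Matrix (Fin m) (Fin m) F)) := Units.val_injective
  calc ∑ g, ‖T ψ f g‖ ^ 2 = ∑ A ∈ Finset.univ.map ⟨_, hinj⟩, ‖∑ y : GL (Fin m) F, trChar ψ ((y⁻¹ : GL (Fin m) F) : Matrix (Fin m) (Fin m) F) A * f y‖ ^ 2 := by
        rw [Finset.sum_map]; rfl
    _ ≤ _ := Finset.sum_le_sum_of_subset_of_nonneg (Finset.subset_univ _) (fun _ _ _ => by positivity)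

lemma T_left (ψ : AddChar F ℂ) {m : ℕ} (f : GL (Fin m) F → ℂ) (h : GL (Fin m) F) :
    T ψ (fun g => f (h * g)) = fun g => T ψ f (h * g) := by
  funext g
  unfold T
  rw [← Equiv.sum_comp (Equiv.mulLeft h) (fun y => ψ (Matrix.trace ((h * g * y⁻¹ : GL (Fin m) F) : Matrix (Fin m) (Fin m) F)) * f y)]
  refine Finset.sum_congr rfl fun y _ => ?_
  simp only [Equiv.coe_mulLeft]
  congr 2
  have : h * g * (h * y)⁻¹ = h * (g * y⁻¹) * h⁻¹ := by group
  rw [this, Units.val_mul (h * (g * y⁻¹)) h⁻¹, Units.val_mul h (g * y⁻¹), Matrix.trace_units_conj]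

lemma T_right (ψ : AddChar F ℂ) {m : ℕ} (f : GL (Fin m) F → ℂ) (h : GL (Fin m) F) :
    T ψ (fun g => f (g * h)) = fun g => T ψ f (g * h) := by
  funext g
  unfold T
  rw [← Equiv.sum_comp (Equiv.mulRight h) (fun y => ψ (Matrix.trace ((g * h * y⁻¹ : GL (Fin m) F) : Matrix (Fin m) (Fin m) F)) * f y)]
  refine Finset.sum_congr rfl fun y _ => ?_
  simp only [Equiv.coe_mulRight]
  congr 4
  group

lemma T_sum (ψ : AddChar F ℂ) {m : ℕ} {ι : Type*} (s : Finset ι) (c : ι → ℂ) (f : ι → GL (Fin m) F → ℂ) :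
    T ψ (fun g => ∑ i ∈ s, c i * f i g) = fun g => ∑ i ∈ s, c i * T ψ (f i) g := by
  funext g
  unfold T
  simp_rw [Finset.mul_sum]
  rw [Finset.sum_comm]
  refine Finset.sum_congr rfl fun i _ => Finset.sum_congr rfl fun y _ => by ring

noncomputable def S (ψ : AddChar F ℂ) {m : ℕ} (n : ℕ) (f : GL (Fin m) F → ℂ) : GL (Fin m) F → ℂ :=
  (T ψ)^[n] f

lemma S_zero (ψ : AddChar F ℂ) {m : ℕ} (f : GL (Fin m) F → ℂ) : S ψ 0 f = f := rfl

lemma S_succ (ψ : AddChar F ℂ) {m : ℕ} (n : ℕ) (f : GL (Fin m) F → ℂ) : S ψ (n+1) f = T ψ (S ψ n f) := by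
  unfold S; rw [Function.iterate_succ_apply']

lemma S_norm {ψ : AddChar F ℂ} (hψ : ψ ≠ 1) {m : ℕ} (n : ℕ) (f : GL (Fin m) F → ℂ) :
    ∑ g, ‖S ψ n f g‖ ^ 2 ≤ ((Fintype.card F : ℝ) ^ (m ^ 2)) ^ n * ∑ g, ‖f g‖ ^ 2 := by
  induction n with
  | zero => simp [S_zero]
  | succ n ih =>
    rw [S_succ]
    refine (T_norm hψ _).trans ?_
    calc _ ≤ (Fintype.card F : ℝ) ^ (m ^ 2) * (((Fintype.card F : ℝ) ^ (m ^ 2)) ^ n * ∑ g, ‖f g‖ ^ 2) :=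
          mul_le_mul_of_nonneg_left ih (by positivity)
      _ = _ := by ring

lemma S_left (ψ : AddChar F ℂ) {m : ℕ} (n : ℕ) (f : GL (Fin m) F → ℂ) (h : GL (Fin m) F) :
    S ψ n (fun g => f (h * g)) = fun g => S ψ n f (h * g) := by
  induction n with
  | zero => simp [S_zero]
  | succ n ih => rw [S_succ, ih, T_left, S_succ]

lemma S_right (ψ : AddChar F ℂ) {m : ℕ} (n : ℕ) (f : GL (Fin m) F → ℂ) (h : GL (Fin m) F) :
    S ψ n (fun g => f (g * h)) = fun g => S ψ n f (g * h) := by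
  induction n with
  | zero => simp [S_zero]
  | succ n ih => rw [S_succ, ih, T_right, S_succ]

lemma S_sum (ψ : AddChar F ℂ) {m : ℕ} (n : ℕ) {ι : Type*} (s : Finset ι) (c : ι → ℂ) (f : ι → GL (Fin m) F → ℂ) :
    S ψ n (fun g => ∑ i ∈ s, c i * f i g) = fun g => ∑ i ∈ s, c i * S ψ n (f i) g := by
  induction n with
  | zero => simp [S_zero]
  | succ n ih => rw [S_succ, ih, T_sum]; simp_rw [S_succ]


/-- The subgroups `U_k`. -/
def UU {m : ℕ} (F : Type) [Field F] [Fintype F] (k : ℕ) : Subgroup (GL (Fin m) F) where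
  carrier := {g | ∀ i j : Fin m, (j.val < k ∨ j ≤ i) →
    (g : Matrix (Fin m) (Fin m) F) i j = (1 : Matrix (Fin m) (Fin m) F) i j}
  one_mem' := by intro i j _; rfl
  mul_mem' := by
    intro g h hg hh i j hij
    rw [Units.val_mul, Matrix.mul_apply]
    have key : ∀ l, (g : Matrix (Fin m) (Fin m) F) i l * (h : Matrix (Fin m) (Fin m) F) l j =
        (1 : Matrix (Fin m) (Fin m) F) i l * (1 : Matrix (Fin m) (Fin m) F) l j := by
      intro l
      rcases hij with hj | hj
      · rw [hh l j (Or.inl hj)]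
        by_cases hl : l = j
        · subst hl; rw [hg i l (Or.inl hj)]
        · rw [Matrix.one_apply_ne hl]; simp
      · by_cases hl : l ≤ i
        · rw [hg i l (Or.inr hl)]
          by_cases hli : i = l
          · subst hli; rw [hh i j (Or.inr hj)]
          · rw [Matrix.one_apply_ne hli]; simp
        · have : j < l := lt_of_le_of_lt hj (not_le.mp hl)
          rw [hh l j (Or.inr this.le), Matrix.one_apply_ne this.ne']; simp
    rw [Finset.sum_congr rfl fun l _ => key l, ← Matrix.mul_apply, one_mul]
  inv_mem' := by
    intro g hg
    have h1 : g⁻¹ ∈ Submonoid.powers g := by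
      rw [mem_powers_iff_mem_zpowers]
      exact inv_mem (Subgroup.mem_zpowers g)
    obtain ⟨n, hn⟩ := h1
    simp only at hn
    rw [← hn]
    clear hn
    induction n with
    | zero => intro i j _; simp
    | succ n ih =>
      rw [pow_succ]
      intro i j hij
      rw [Units.val_mul, Matrix.mul_apply]
      have key : ∀ l, ((g ^ n : GL (Fin m) F) : Matrix (Fin m) (Fin m) F) i l * (g : Matrix (Fin m) (Fin m) F) l j =
          (1 : Matrix (Fin m) (Fin m) F) i l * (1 : Matrix (Fin m) (Fin m) F) l j := by
        intro l
        rcases hij with hj | hj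
        · rw [hg l j (Or.inl hj)]
          by_cases hl : l = j
          · subst hl; rw [ih i l (Or.inl hj)]
          · rw [Matrix.one_apply_ne hl]; simp
        · by_cases hl : l ≤ i
          · rw [ih i l (Or.inr hl)]
            by_cases hli : i = l
            · subst hli; rw [hg i j (Or.inr hj)]
            · rw [Matrix.one_apply_ne hli]; simp
          · have : j < l := lt_of_le_of_lt hj (not_le.mp hl)
            rw [hg l j (Or.inr this.le), Matrix.one_apply_ne this.ne']; simp
      rw [Finset.sum_congr rfl fun l _ => key l, ← Matrix.mul_apply, one_mul]

lemma mem_UU {m k : ℕ} {g : GL (Fin m) F} : g ∈ UU F k ↔ ∀ i j : Fin m, (j.val < k ∨ j ≤ i) →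
    (g : Matrix (Fin m) (Fin m) F) i j = (1 : Matrix (Fin m) (Fin m) F) i j := Iff.rfl

lemma UU_anti {m k l : ℕ} (h : k ≤ l) : UU (m := m) F l ≤ UU F k := by
  intro g hg i j hij
  exact hg i j (hij.imp_left fun h' => lt_of_lt_of_le h' h)

lemma UU_top {m : ℕ} {g : GL (Fin m) F} : g ∈ UU F m ↔ g = 1 := by
  constructor
  · intro h
    ext i j
    exact h i j (Or.inl j.2)
  · rintro rfl; exact one_mem _

lemma UU_diag {m k : ℕ} {g : GL (Fin m) F} (h : g ∈ UU F k) (i : Fin m) :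
    (g : Matrix (Fin m) (Fin m) F) i i = 1 := by
  rw [h i i (Or.inr le_rfl)]; simp

lemma UU_low {m k : ℕ} {g : GL (Fin m) F} (h : g ∈ UU F k) {i j : Fin m} (hij : j < i) :
    (g : Matrix (Fin m) (Fin m) F) i j = 0 := by
  rw [h i j (Or.inr hij.le), Matrix.one_apply_ne hij.ne']

lemma UU_one {m : ℕ} : UU (m := m) F 1 = UU F 0 := by
  refine le_antisymm (UU_anti (by omega)) ?_
  intro g hg i j hij
  apply hg
  right
  rcases hij with h | h
  · exact Fin.le_def.mpr (by omega)
  · exact h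

def Up {m : ℕ} (A : Matrix (Fin m) (Fin m) F) : Prop := ∀ i j, j < i → A i j = 0

/-- transvections -/
def tv {m : ℕ} (i j : Fin m) (h : i ≠ j) (c : F) : GL (Fin m) F where
  val := Matrix.transvection i j c
  inv := Matrix.transvection i j (-c)
  val_inv := by rw [Matrix.transvection_mul_transvection_same (h := h)]; simp
  inv_val := by rw [Matrix.transvection_mul_transvection_same (h := h)]; simp

lemma tv_mem {m : ℕ} {i j : Fin m} (h : i < j) (c : F) : tv i j h.ne c ∈ UU F 0 := by
  intro a b hab
  have hab : b ≤ a := by rcases hab with h | h; omega; exact h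
  show Matrix.transvection i j c a b = _
  rw [Matrix.transvection, Matrix.add_apply, Matrix.single_apply_of_ne, add_zero]
  rintro ⟨rfl, rfl⟩
  exact absurd h (not_lt.mpr hab)

lemma up_trace {m : ℕ} {A : Matrix (Fin m) (Fin m) F} (hA : Up A) {v : GL (Fin m) F} (hv : v ∈ UU F 0) :
    Matrix.trace (A * (v : Matrix (Fin m) (Fin m) F)) = Matrix.trace A := by
  unfold Matrix.trace
  refine Finset.sum_congr rfl fun i _ => ?_
  rw [Matrix.diag_apply, Matrix.diag_apply, Matrix.mul_apply, Finset.sum_eq_single i]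
  · rw [UU_diag hv, mul_one]
  · intro l _ hl
    rcases lt_or_gt_of_ne hl with h | h
    · rw [hA _ _ h, zero_mul]
    · rw [UU_low hv h, mul_zero]
  · simp

/-- the averaging lemma -/
lemma averaging {ψ : AddChar F ℂ} (hψ : ψ ≠ 1) {m : ℕ} (A : Matrix (Fin m) (Fin m) F) :
    ∑ v : UU (m := m) F 0, ψ (Matrix.trace (A * ((v : GL (Fin m) F) : Matrix (Fin m) (Fin m) F))) =
      if Up A then (Fintype.card (UU (m := m) F 0) : ℂ) * ψ (Matrix.trace A) else 0 := by
  split_ifs with hA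
  · rw [Finset.sum_congr rfl fun v _ => by rw [up_trace hA v.2]]
    simp
  · unfold Up at hA
    push Not at hA
    obtain ⟨b, a0, hab0, hA0⟩ := hA
    -- minimal column
    obtain ⟨a, ha, hmin⟩ := Finset.exists_min_image
      (Finset.univ.filter fun a : Fin m => a < b ∧ A b a ≠ 0) id ⟨a0, by simp [hab0, hA0]⟩
    simp only [Finset.mem_filter, Finset.mem_univ, true_and, id] at ha hmin
    obtain ⟨hab, hAba⟩ := ha
    have hc : ∃ c, ψ (c * A b a) ≠ 1 := by
      by_contra hcon
      push Not at hcon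
      exact hAba (eq_zero_of_psi hψ _ hcon)
    obtain ⟨c, hc⟩ := hc
    set t : UU (m := m) F 0 := ⟨tv a b hab.ne c, tv_mem hab c⟩ with ht
    have hshift := Equiv.sum_comp (Equiv.mulRight t) (fun v : UU (m := m) F 0 =>
      ψ (Matrix.trace (A * ((v : GL (Fin m) F) : Matrix (Fin m) (Fin m) F))))
    have hterm : ∀ v : UU (m := m) F 0,
        ψ (Matrix.trace (A * (((v * t : UU (m := m) F 0) : GL (Fin m) F) : Matrix (Fin m) (Fin m) F))) =
        ψ (c * A b a) * ψ (Matrix.trace (A * ((v : GL (Fin m) F) : Matrix (Fin m) (Fin m) F))) := by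
      intro v
      have h1 : (((v * t : UU (m := m) F 0) : GL (Fin m) F) : Matrix (Fin m) (Fin m) F) =
          ((v : GL (Fin m) F) : Matrix (Fin m) (Fin m) F) * (1 + Matrix.single a b c) := rfl
      rw [h1, Matrix.mul_add, Matrix.mul_one, Matrix.mul_add, Matrix.trace_add, ← Matrix.mul_assoc,
        Matrix.trace_mul_comm _ (Matrix.single a b c), GS.trace_single_mul, Matrix.mul_apply,
        Finset.sum_eq_single a, UU_diag v.2, mul_one, add_comm, AddChar.map_add_eq_mul]
      · intro l _ hl
        rcases lt_or_gt_of_ne hl with h | h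
        · have : A b l = 0 := by
            by_contra hne
            exact absurd (hmin l ⟨h.trans hab, hne⟩) (not_le.mpr h)
          rw [this, zero_mul]
        · rw [UU_low v.2 h, mul_zero]
      · simp
    simp only [Equiv.coe_mulRight] at hshift
    rw [Finset.sum_congr rfl fun v _ => hterm v, ← Finset.mul_sum] at hshift
    have : (ψ (c * A b a) - 1) * ∑ v : UU (m := m) F 0, ψ (Matrix.trace (A * ((v : GL (Fin m) F) : Matrix (Fin m) (Fin m) F))) = 0 := by
      rw [sub_mul, hshift]; ring
    rcases mul_eq_zero.mp this with h | h
    · exact absurd (sub_eq_zero.mp h) hc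
    · exact h

def Om (m : ℕ) (F : Type) [Field F] : Matrix (Fin m) (Fin m) F :=
  Matrix.of fun i j => if i.val = j.val + 1 then 1 else 0

def ss {m : ℕ} (g : GL (Fin m) F) : F := Matrix.trace (Om m F * (g : Matrix (Fin m) (Fin m) F))

lemma trace_Om {m : ℕ} : Matrix.trace (Om m F) = 0 := by
  unfold Matrix.trace
  refine Finset.sum_eq_zero fun i _ => ?_
  simp [Om]

lemma ss_mul {m : ℕ} {u v : GL (Fin m) F} (hu : u ∈ UU F 0) (hv : v ∈ UU F 0) :
    ss (u * v) = ss u + ss v := by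
  unfold ss
  set N := (u : Matrix (Fin m) (Fin m) F) - 1 with hN
  set M := (v : Matrix (Fin m) (Fin m) F) - 1 with hM
  have hu1 : (u : Matrix (Fin m) (Fin m) F) = 1 + N := by simp [hN]
  have hv1 : (v : Matrix (Fin m) (Fin m) F) = 1 + M := by simp [hM]
  have h0 : Matrix.trace (Om m F * (N * M)) = 0 := by
    unfold Matrix.trace
    refine Finset.sum_eq_zero fun i _ => ?_
    rw [Matrix.diag_apply, Matrix.mul_apply]
    refine Finset.sum_eq_zero fun j _ => ?_
    by_cases hij : i.val = j.val + 1
    · rw [Matrix.mul_apply, Finset.sum_eq_zero, mul_zero]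
      intro l _
      by_cases hl : l ≤ j
      · have : N j l = 0 := by rw [hN, Matrix.sub_apply, hu j l (Or.inr hl), sub_self]
        rw [this, zero_mul]
      · have : M l i = 0 := by
          rw [hM, Matrix.sub_apply, hv l i (Or.inr ?_), sub_self]
          rw [Fin.le_def]; rw [not_le, Fin.lt_def] at hl; omega
        rw [this, mul_zero]
    · simp [Om, hij]
  rw [Units.val_mul, hu1, hv1]
  have : (1 + N) * (1 + M) = 1 + N + M + N * M := by noncomm_ring
  rw [this]
  simp only [Matrix.mul_add, Matrix.trace_add, h0, mul_one, trace_Om]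
  ring

lemma ss_one {m : ℕ} : ss (1 : GL (Fin m) F) = 0 := by
  simp [ss, trace_Om]

lemma ss_inv {m : ℕ} {u : GL (Fin m) F} (hu : u ∈ UU F 0) : ss u⁻¹ = - ss u := by
  have := ss_mul hu (inv_mem hu)
  rw [mul_inv_cancel, ss_one] at this
  exact eq_neg_of_add_eq_zero_right this.symm

/-- T applied to a left-equivariant function. -/
lemma T_equiv {ψ : AddChar F ℂ} (hψ : ψ ≠ 1) {m : ℕ} (θ : F) (f : GL (Fin m) F → ℂ)
    (hf : ∀ u ∈ UU (m := m) F 0, ∀ y, f (u * y) = ψ (θ * ss u) * f y) (g : GL (Fin m) F) :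
    T ψ f g = ∑ y : GL (Fin m) F, if Up (((g * y⁻¹ : GL (Fin m) F) : Matrix (Fin m) (Fin m) F) - θ • Om m F)
      then ψ (Matrix.trace ((g * y⁻¹ : GL (Fin m) F) : Matrix (Fin m) (Fin m) F)) * f y else 0 := by
  have hne : (Fintype.card (UU (m := m) F 0) : ℂ) ≠ 0 := by
    exact_mod_cast Fintype.card_ne_zero
  apply mul_left_cancel₀ hne
  have h1 : ∀ v : UU (m := m) F 0, T ψ f g = ∑ y : GL (Fin m) F,
      ψ (Matrix.trace ((((g * y⁻¹ : GL (Fin m) F) : Matrix (Fin m) (Fin m) F) - θ • Om m F) * ((v : GL (Fin m) F) : Matrix (Fin m) (Fin m) F))) * f y := by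
    intro v
    unfold T
    rw [← Equiv.sum_comp (Equiv.mulLeft (v : GL (Fin m) F)⁻¹) (fun y => ψ (Matrix.trace ((g * y⁻¹ : GL (Fin m) F) : Matrix (Fin m) (Fin m) F)) * f y)]
    refine Finset.sum_congr rfl fun y _ => ?_
    simp only [Equiv.coe_mulLeft]
    rw [hf _ (inv_mem v.2), ← mul_assoc, ← AddChar.map_add_eq_mul, ss_inv v.2]
    congr 2
    rw [Matrix.sub_mul, Matrix.trace_sub, Matrix.smul_mul, Matrix.trace_smul, ← Units.val_mul]
    have : g * ((v : GL (Fin m) F)⁻¹ * y)⁻¹ = g * y⁻¹ * v := by group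
    rw [this]
    simp [ss, sub_eq_add_neg]
  calc (Fintype.card (UU (m := m) F 0) : ℂ) * T ψ f g = ∑ v : UU (m := m) F 0, T ψ f g := by simp
    _ = _ := by
      rw [Finset.sum_congr rfl fun v _ => h1 v, Finset.sum_comm, Finset.mul_sum]
      refine Finset.sum_congr rfl fun y _ => ?_
      rw [← Finset.sum_mul, averaging hψ]
      split_ifs with h
      · rw [Matrix.trace_sub, Matrix.trace_smul, trace_Om, smul_zero, sub_zero]; ring
      · simp


lemma sum_two {M : Type*} [AddCommMonoid M] {G : Type*} [Group G] [Fintype G] (a b : G) (f : G → M) :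
    ∑ g, f g = ∑ g, f (a * g * b⁻¹) := by
  rw [← Equiv.sum_comp ((Equiv.mulLeft a).trans (Equiv.mulRight b⁻¹)) f]
  rfl

lemma S_smul (ψ : AddChar F ℂ) {m : ℕ} (n : ℕ) (c : ℂ) (f : GL (Fin m) F → ℂ) :
    S ψ n (fun g => c * f g) = fun g => c * S ψ n f g := by
  have := S_sum ψ n (Finset.univ : Finset Unit) (fun _ => c) (fun _ => f)
  simpa using this

noncomputable def qq (ψ : AddChar F ℂ) {m : ℕ} (k : ℕ) (g : GL (Fin m) F) : ℂ :=
  if g ∈ UU F k then ψ (ss g) else 0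

lemma qq_left (ψ : AddChar F ℂ) {m : ℕ} {u : GL (Fin m) F} (hu : u ∈ UU F 0) (g : GL (Fin m) F) :
    qq ψ 0 (u * g) = ψ (ss u) * qq ψ 0 g := by
  unfold qq
  rw [Subgroup.mul_mem_cancel_left _ hu]
  split_ifs with h
  · rw [ss_mul hu h, AddChar.map_add_eq_mul]
  · simp

lemma ff_left (ψ : AddChar F ℂ) {m : ℕ} (n : ℕ) {u : GL (Fin m) F} (hu : u ∈ UU F 0) (g : GL (Fin m) F) :
    S ψ n (qq ψ 0) (u * g) = ψ (ss u) * S ψ n (qq ψ 0) g := by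
  have h1 := congrFun (S_left ψ n (qq ψ 0) u) g
  rw [← h1]
  have h2 : (fun g => qq ψ 0 (u * g)) = fun g => ψ (ss u) * qq ψ 0 g := by
    funext g; exact qq_left ψ hu g
  rw [h2, S_smul]

lemma ff_succ {ψ : AddChar F ℂ} (hψ : ψ ≠ 1) {m : ℕ} (n : ℕ) (g : GL (Fin m) F) :
    S ψ (n + 1) (qq ψ 0) g = ∑ y : GL (Fin m) F,
      if Up (((g * y⁻¹ : GL (Fin m) F) : Matrix (Fin m) (Fin m) F) - Om m F)
      then ψ (Matrix.trace ((g * y⁻¹ : GL (Fin m) F) : Matrix (Fin m) (Fin m) F)) * S ψ n (qq ψ 0) y else 0 := by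
  rw [S_succ, T_equiv hψ 1]
  · simp
  · intro u hu y
    rw [ff_left ψ n hu, one_mul]

lemma up_Om {m : ℕ} {w : Matrix (Fin m) (Fin m) F} :
    Up (w - Om m F) ↔ ∀ i j : Fin m, j < i → w i j = if i.val = j.val + 1 then 1 else 0 := by
  unfold Up
  refine forall_congr' fun i => forall_congr' fun j => imp_congr_right fun _ => ?_
  rw [Matrix.sub_apply, sub_eq_zero]
  simp [Om]

lemma ff_support {ψ : AddChar F ℂ} (hψ : ψ ≠ 1) {m : ℕ} (n : ℕ) (g : GL (Fin m) F)
    (hg : S ψ n (qq ψ 0) g ≠ 0) (r l : Fin m) (hrl : l.val + n ≤ r.val) :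
    (g : Matrix (Fin m) (Fin m) F) r l = if l.val + n = r.val then 1 else 0 := by
  induction n generalizing g r l with
  | zero =>
    rw [S_zero] at hg
    unfold qq at hg
    have hg : g ∈ UU F 0 := by by_contra h; simp [h] at hg
    rw [hg r l (Or.inr (Fin.le_def.mpr (by omega))), Matrix.one_apply]
    simp only [add_zero, Fin.ext_iff, eq_comm]
  | succ n ih =>
    rw [ff_succ hψ] at hg
    obtain ⟨y, _, hy⟩ := Finset.exists_ne_zero_of_sum_ne_zero hg
    have hup : Up (((g * y⁻¹ : GL (Fin m) F) : Matrix (Fin m) (Fin m) F) - Om m F) := by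
      by_contra h; exact hy (if_neg h)
    rw [if_pos hup] at hy
    have hfy := right_ne_zero_of_mul hy
    rw [up_Om] at hup
    have hgy : (g : Matrix (Fin m) (Fin m) F) = ((g * y⁻¹ : GL (Fin m) F) : Matrix (Fin m) (Fin m) F) * (y : Matrix (Fin m) (Fin m) F) := by
      rw [← Units.val_mul]; simp
    rw [hgy, Matrix.mul_apply]
    have hr : r.val - 1 < m := by omega
    rw [Finset.sum_eq_single ⟨r.val - 1, hr⟩]
    · rw [hup r _ (Fin.lt_def.mpr (by simp; omega)), ih y hfy _ _ (by simp; omega)]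
      simp only
      rw [if_pos (by omega), one_mul]
      congr 1
      apply propext; omega
    · intro t _ ht
      by_cases htr : t < r
      · rw [hup r t htr, if_neg, zero_mul]
        intro h; apply ht; ext; simp; omega
      · rw [ih y hfy t l (by rw [Fin.lt_def] at htr; omega), if_neg, mul_zero]
        rw [Fin.lt_def] at htr; omega
    · simp

/-- diagonal matrices -/
def dg {m : ℕ} (δ : Fin m → Fˣ) : GL (Fin m) F where
  val := Matrix.diagonal fun i => (δ i : F)
  inv := Matrix.diagonal fun i => ((δ i)⁻¹ : Fˣ)
  val_inv := by simp
  inv_val := by simp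

lemma dg_mul_apply {m : ℕ} (δ ε : Fin m → Fˣ) (g : GL (Fin m) F) (i j : Fin m) :
    ((dg δ * g * (dg ε)⁻¹ : GL (Fin m) F) : Matrix (Fin m) (Fin m) F) i j =
      δ i * (g : Matrix (Fin m) (Fin m) F) i j * ((ε j)⁻¹ : Fˣ) := by
  have : ((dg δ * g * (dg ε)⁻¹ : GL (Fin m) F) : Matrix (Fin m) (Fin m) F) =
    Matrix.diagonal (fun i => (δ i : F)) * (g : Matrix (Fin m) (Fin m) F) * Matrix.diagonal (fun i => (((ε i)⁻¹ : Fˣ) : F)) := rfl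
  rw [this, Matrix.mul_diagonal, Matrix.diagonal_mul]

lemma dg_det {m : ℕ} (δ : Fin m → Fˣ) : Matrix.GeneralLinearGroup.det (dg δ) = ∏ i, δ i := by
  ext
  show Matrix.det (Matrix.diagonal fun i => (δ i : F)) = _
  rw [Matrix.det_diagonal]; simp

def DD {m : ℕ} (d : Fˣ) (n : ℕ) : Fin m → Fˣ := fun r => if r.val ≤ n then d else 1

lemma ff_D {ψ : AddChar F ℂ} (hψ : ψ ≠ 1) {m : ℕ} (h1 : 1 < m) (d : Fˣ) (n : ℕ) (hn : n < m) (g : GL (Fin m) F) :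
    S ψ n (qq ψ 0) (dg (DD d n) * g * (dg (DD d 0))⁻¹) =
      ψ ((d - 1) * (g : Matrix (Fin m) (Fin m) F) ⟨n, hn⟩ ⟨1, h1⟩) * S ψ n (qq ψ 0) g := by
  induction n generalizing g with
  | zero =>
    rw [S_zero]
    have hmem : (dg (DD d 0) * g * (dg (DD d 0))⁻¹) ∈ UU F 0 ↔ g ∈ UU F 0 := by
      rw [mem_UU, mem_UU]
      refine forall_congr' fun i => forall_congr' fun j => imp_congr_right fun _ => ?_
      rw [dg_mul_apply, Matrix.one_apply]
      split_ifs with h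
      · subst h
        rw [mul_right_comm, ← Units.val_mul]; simp
      · simp
    unfold qq
    simp only [hmem]
    split_ifs with h
    · rw [← AddChar.map_add_eq_mul]
      congr 1
      unfold ss Matrix.trace
      simp only [Matrix.diag_apply, Matrix.mul_apply, dg_mul_apply]
      have hterm : ∀ i j : Fin m, Om m F i j * ((DD d 0 j : F) * (g : Matrix (Fin m) (Fin m) F) j i * ((DD d 0 i)⁻¹ : Fˣ)) =
          Om m F i j * (g : Matrix (Fin m) (Fin m) F) j i + if i = ⟨1, h1⟩ ∧ j = ⟨0, hn⟩ then (d - 1) * (g : Matrix (Fin m) (Fin m) F) j i else 0 := by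
        intro i j
        unfold Om DD
        simp only [Matrix.of_apply, Fin.ext_iff]
        by_cases hij : i.val = j.val + 1
        · by_cases hj : j.val = 0
          · have : i.val = 1 := by omega
            simp [hj, this]; ring
          · have : i.val ≠ 1 := by omega
            have : i.val ≠ 0 := by omega
            simp [hij, hj]
        · have : ¬ (i.val = 1 ∧ j.val = 0) := by omega
          rw [if_neg hij, if_neg this]; simp
      simp only [hterm, Finset.sum_add_distrib]
      rw [add_comm]
      congr 1
      rw [Finset.sum_eq_single ⟨1, h1⟩, Finset.sum_eq_single ⟨0, hn⟩]
      · simp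
      · intro j _ hj; simp [hj]
      · simp
      · intro i _ hi; simp [hi]
      · simp
    · simp
  | succ n ih =>
    have hn' : n < m := by omega
    rw [ff_succ hψ, ff_succ hψ, Finset.mul_sum]
    rw [sum_two (dg (DD d n)) (dg (DD d 0))]
    refine Finset.sum_congr rfl fun y _ => ?_
    rw [ih hn']
    set w := g * y⁻¹ with hw
    have hW : dg (DD d (n+1)) * g * (dg (DD d 0))⁻¹ * (dg (DD d n) * y * (dg (DD d 0))⁻¹)⁻¹ =
      dg (DD d (n+1)) * w * (dg (DD d n))⁻¹ := by rw [hw]; group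
    rw [hW]
    have hup : Up (((dg (DD d (n+1)) * w * (dg (DD d n))⁻¹ : GL (Fin m) F) : Matrix (Fin m) (Fin m) F) - Om m F) ↔
        Up ((w : Matrix (Fin m) (Fin m) F) - Om m F) := by
      rw [up_Om, up_Om]
      refine forall_congr' fun i => forall_congr' fun j => imp_congr_right fun _ => ?_
      rw [dg_mul_apply]
      split_ifs with hij
      · have : DD d (n+1) i = DD d n j := by
          unfold DD; congr 1; apply propext; omega
        rw [this, mul_right_comm, ← Units.val_mul]; simp
      · simp
    rw [hup]
    split_ifs with hu
    · by_cases hfy : S ψ n (qq ψ 0) y = 0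
      · simp [hfy]
      have hsup := ff_support hψ n y hfy
      have htr : Matrix.trace ((dg (DD d (n+1)) * w * (dg (DD d n))⁻¹ : GL (Fin m) F) : Matrix (Fin m) (Fin m) F) =
          Matrix.trace (w : Matrix (Fin m) (Fin m) F) + (d - 1) * (w : Matrix (Fin m) (Fin m) F) ⟨n+1, hn⟩ ⟨n+1, hn⟩ := by
        unfold Matrix.trace
        simp only [Matrix.diag_apply, dg_mul_apply]
        have : ∀ i : Fin m, (DD d (n+1) i : F) * (w : Matrix (Fin m) (Fin m) F) i i * ((DD d n i)⁻¹ : Fˣ) =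
            (w : Matrix (Fin m) (Fin m) F) i i + if i = ⟨n+1, hn⟩ then (d - 1) * (w : Matrix (Fin m) (Fin m) F) i i else 0 := by
          intro i
          unfold DD
          simp only [Fin.ext_iff]
          by_cases h : i.val = n + 1
          · simp [h]; ring
          · by_cases h' : i.val ≤ n
            · have : i.val ≤ n + 1 := by omega
              simp [h, h', this, mul_comm]
            · have : ¬ i.val ≤ n + 1 := by omega
              simp [h, h', this]
        simp only [this, Finset.sum_add_distrib]
        simp
      have hg : (g : Matrix (Fin m) (Fin m) F) ⟨n+1, hn⟩ ⟨1, h1⟩ = (y : Matrix (Fin m) (Fin m) F) ⟨n, hn'⟩ ⟨1, h1⟩ + (w : Matrix (Fin m) (Fin m) F) ⟨n+1, hn⟩ ⟨n+1, hn⟩ := by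
        have hgy : (g : Matrix (Fin m) (Fin m) F) = (w : Matrix (Fin m) (Fin m) F) * (y : Matrix (Fin m) (Fin m) F) := by
          rw [← Units.val_mul, hw]; simp
        rw [up_Om] at hu
        rw [hgy, Matrix.mul_apply]
        have hne : (⟨n, hn'⟩ : Fin m) ≠ ⟨n+1, hn⟩ := by simp
        rw [← Finset.sum_subset (Finset.subset_univ {⟨n, hn'⟩, ⟨n+1, hn⟩}), Finset.sum_pair hne]
        · rw [hu _ _ (Fin.lt_def.mpr (by simp)), hsup ⟨n+1, hn⟩ ⟨1, h1⟩ (by simp; omega)]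
          rw [if_pos (by simp), if_pos (by simp; omega)]; ring
        · intro t _ ht
          simp only [Finset.mem_insert, Finset.mem_singleton, Fin.ext_iff, not_or] at ht
          by_cases htn : t.val < n + 1
          · rw [hu _ _ (Fin.lt_def.mpr (by simpa using htn)), if_neg (by simp; omega), zero_mul]
          · rw [hsup t _ (by simp; omega), if_neg (by simp; omega), mul_zero]
      rw [htr, hg, mul_add, AddChar.map_add_eq_mul, AddChar.map_add_eq_mul]
      ring
    · simp

noncomputable def Qd {m : ℕ} (e : Fˣ) (f : GL (Fin m) F → ℂ) : ℝ :=
  ∑ g : GL (Fin m) F, if Matrix.GeneralLinearGroup.det g = e then ‖f g‖ ^ 2 else 0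

lemma Qd_le {m : ℕ} (e : Fˣ) (f : GL (Fin m) F → ℂ) : Qd e f ≤ ∑ g, ‖f g‖ ^ 2 := by
  unfold Qd
  refine Finset.sum_le_sum fun g _ => ?_
  split_ifs
  · exact le_rfl
  · positivity

lemma norm_psi (ψ : AddChar F ℂ) (x : F) : ‖ψ x‖ = 1 := AddChar.norm_apply ψ x

lemma qq_norm (ψ : AddChar F ℂ) {m : ℕ} (k : ℕ) :
    ∑ g : GL (Fin m) F, ‖qq ψ k g‖ ^ 2 = Fintype.card (UU (m := m) F k) := by
  have : ∀ g : GL (Fin m) F, ‖qq ψ k g‖ ^ 2 = if g ∈ UU F k then 1 else 0 := by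
    intro g; unfold qq; split_ifs <;> simp [norm_psi]
  simp_rw [this]
  rw [Finset.sum_boole, Fintype.card_subtype]

lemma card_roots_le (n : ℕ) (hn : 0 < n) (e a : Fˣ) :
    (Finset.univ.filter fun s : Fˣ => a = e * s ^ n).card ≤ n := by
  have h : (Finset.univ.filter fun s : Fˣ => a = e * s ^ n).map ⟨_, Units.val_injective⟩ ⊆
      (Polynomial.nthRoots n ((e⁻¹ * a : Fˣ) : F)).toFinset := by
    intro x hx
    simp only [Finset.mem_map, Finset.mem_filter, Finset.mem_univ, true_and, Function.Embedding.coeFn_mk] at hx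
    obtain ⟨s, hs, rfl⟩ := hx
    rw [Multiset.mem_toFinset, Polynomial.mem_nthRoots hn, hs]
    simp
  calc _ = _ := (Finset.card_map _).symm
    _ ≤ _ := Finset.card_le_card h
    _ ≤ _ := Multiset.toFinset_card_le _
    _ ≤ n := Polynomial.card_nthRoots _ _

lemma R1_bound {ψ : AddChar F ℂ} (hψ : ψ ≠ 1) (n : ℕ) (hn : 0 < n) (e : Fˣ) :
    ((Fintype.card F : ℝ) - 1) * Qd e (S ψ n (qq ψ (m := n + 1) 0)) ≤
      n * (((Fintype.card F : ℝ) ^ ((n + 1) ^ 2)) ^ n * Fintype.card (UU (m := n + 1) F 0)) := by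
  set f := S ψ n (qq ψ (m := n + 1) 0) with hf
  have hQ : ∀ s : Fˣ, Qd e f = Qd (e * s ^ n) f := by
    intro s
    unfold Qd
    rw [sum_two (dg (DD s n)) (dg (DD s 0))
      (fun g => if Matrix.GeneralLinearGroup.det g = e * s ^ n then ‖f g‖ ^ 2 else 0)]
    refine Finset.sum_congr rfl fun g _ => ?_
    rw [hf, ff_D hψ (by omega) s n (by omega), norm_mul, norm_psi, one_mul]
    have h1 : ∏ i : Fin (n+1), DD s n i = s ^ (n + 1) := by
      rw [Finset.prod_congr rfl (g := fun _ => s)]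
      · simp
      · intro i _; unfold DD; rw [if_pos (by omega)]
    have h0 : ∏ i : Fin (n+1), DD s 0 i = s := by
      rw [Fin.prod_univ_succ]; simp [DD]
    have : Matrix.GeneralLinearGroup.det (dg (DD s n) * g * (dg (DD s 0))⁻¹) = Matrix.GeneralLinearGroup.det g * s ^ n := by
      rw [map_mul, map_mul, map_inv, dg_det, dg_det, h1, h0, pow_succ]
      rw [mul_comm (s ^ n * s), mul_assoc, mul_assoc]; simp
    simp only [this, mul_left_inj]
  have hcard : ((Fintype.card F : ℝ) - 1) = Fintype.card Fˣ := by
    rw [Fintype.card_units, Nat.cast_sub Fintype.card_pos]; simp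
  calc ((Fintype.card F : ℝ) - 1) * Qd e f = ∑ s : Fˣ, Qd (e * s ^ n) f := by
        rw [hcard, ← Finset.sum_congr rfl fun s _ => hQ s]; simp
    _ = ∑ g, ((Finset.univ.filter fun s : Fˣ => Matrix.GeneralLinearGroup.det g = e * s ^ n).card : ℝ) * ‖f g‖ ^ 2 := by
        unfold Qd
        rw [Finset.sum_comm]
        refine Finset.sum_congr rfl fun g _ => ?_
        rw [← Finset.sum_filter]; simp
    _ ≤ ∑ g, (n : ℝ) * ‖f g‖ ^ 2 := by
        refine Finset.sum_le_sum fun g _ => ?_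
        have := card_roots_le n hn e (Matrix.GeneralLinearGroup.det g)
        gcongr
    _ = n * ∑ g, ‖f g‖ ^ 2 := by rw [Finset.mul_sum]
    _ ≤ _ := by
        refine mul_le_mul_of_nonneg_left ?_ (by positivity)
        rw [← qq_norm ψ]
        exact S_norm hψ n _


/-- rank one updates of the identity -/
noncomputable def r1 {m : ℕ} (u v : Fin m → F) (hc : 1 + v ⬝ᵥ u ≠ 0) : GL (Fin m) F where
  val := 1 + Matrix.vecMulVec u v
  inv := 1 - (1 + v ⬝ᵥ u)⁻¹ • Matrix.vecMulVec u v
  val_inv := by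
    have h2 : Matrix.vecMulVec u v * Matrix.vecMulVec u v = (v ⬝ᵥ u) • Matrix.vecMulVec u v := by
      rw [Matrix.vecMulVec_mul_vecMulVec]
      ext i j
      simp [Matrix.vecMulVec_apply]
      try ring
    rw [add_mul, one_mul, mul_sub, mul_one, Matrix.mul_smul, h2, smul_smul]
    ext i j
    simp only [Matrix.add_apply, Matrix.sub_apply, Matrix.smul_apply, smul_eq_mul]
    field_simp
    ring
  inv_val := by
    have h2 : Matrix.vecMulVec u v * Matrix.vecMulVec u v = (v ⬝ᵥ u) • Matrix.vecMulVec u v := by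
      rw [Matrix.vecMulVec_mul_vecMulVec]
      ext i j
      simp [Matrix.vecMulVec_apply]
      try ring
    rw [sub_mul, one_mul, mul_add, mul_one, Matrix.smul_mul, h2, smul_smul]
    ext i j
    simp only [Matrix.add_apply, Matrix.sub_apply, Matrix.smul_apply, smul_eq_mul]
    field_simp
    ring

noncomputable def ex {m : ℕ} {k : Fin m} (y : {i : Fin m // i < k} → F) (i : Fin m) : F :=
  if h : i < k then y ⟨i, h⟩ else 0

lemma ex_k {m : ℕ} {k : Fin m} (y : {i : Fin m // i < k} → F) : ex y k = 0 := by simp [ex]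

lemma ex_lt {m : ℕ} {k : Fin m} (y : {i : Fin m // i < k} → F) (i : {i : Fin m // i < k}) : ex y i = y i := by
  simp [ex, i.2]

lemma ex_not_lt {m : ℕ} {k : Fin m} (y : {i : Fin m // i < k} → F) {i : Fin m} (h : ¬ i < k) : ex y i = 0 := by
  simp [ex, h]

lemma sum_ex {m : ℕ} {k : Fin m} (y : {i : Fin m // i < k} → F) (c : Fin m → F) :
    ∑ i, ex y i * c i = ∑ i : {i : Fin m // i < k}, y i * c i := by
  have h := Finset.sum_subtype_of_mem (s := Finset.univ.filter fun i => i < k) (p := fun i => i < k)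
    (fun i => ex y i * c i) (by simp)
  rw [← Finset.sum_subset (Finset.subset_univ (Finset.univ.filter fun i => i < k)), ← h]
  · apply Finset.sum_congr
    · ext x; simp [x.2]
    · intro i _; rw [ex_lt]
  · intro i _ hi
    simp only [Finset.mem_filter, Finset.mem_univ, true_and] at hi
    rw [ex_not_lt y hi, zero_mul]

noncomputable def av {m : ℕ} {k : Fin m} (y : {i : Fin m // i < k} → F) : GL (Fin m) F :=
  r1 (ex y) (Pi.single k 1) (by simp [ex_k])

lemma av_mul_apply {m : ℕ} {k : Fin m} (y : {i : Fin m // i < k} → F) (g : GL (Fin m) F) (i j : Fin m) :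
    ((av y * g : GL (Fin m) F) : Matrix (Fin m) (Fin m) F) i j =
      (g : Matrix (Fin m) (Fin m) F) i j + ex y i * (g : Matrix (Fin m) (Fin m) F) k j := by
  have : ((av y * g : GL (Fin m) F) : Matrix (Fin m) (Fin m) F) =
    (1 + Matrix.vecMulVec (ex y) (Pi.single k 1)) * (g : Matrix (Fin m) (Fin m) F) := rfl
  rw [this, add_mul, one_mul, Matrix.add_apply, Matrix.mul_apply]
  congr 1
  rw [Finset.sum_eq_single k]
  · simp [Matrix.vecMulVec_apply]
  · intro l _ hl; simp [Matrix.vecMulVec_apply, hl]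
  · simp

lemma av_inv_mul_apply {m : ℕ} {k : Fin m} (y : {i : Fin m // i < k} → F) (g : GL (Fin m) F) (i j : Fin m) :
    (((av y)⁻¹ * g : GL (Fin m) F) : Matrix (Fin m) (Fin m) F) i j =
      (g : Matrix (Fin m) (Fin m) F) i j - ex y i * (g : Matrix (Fin m) (Fin m) F) k j := by
  have h := fun i => av_mul_apply y ((av y)⁻¹ * g) i j
  rw [mul_inv_cancel_left] at h
  have hk := h k
  rw [ex_k, zero_mul, add_zero] at hk
  rw [h i, hk]; ring

lemma av_mem {m : ℕ} {k : Fin m} (y : {i : Fin m // i < k} → F) : av y ∈ UU F k.val := by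
  intro i j hij
  have := av_mul_apply y 1 i j
  rw [mul_one] at this
  rw [this, Units.val_one]
  rcases hij with h | h
  · rw [Matrix.one_apply_ne (i := k) (j := j), mul_zero, add_zero]
    rintro rfl; omega
  · by_cases hj : k = j
    · subst hj
      rw [ex_not_lt y (not_lt.mpr h)]; simp
    · rw [Matrix.one_apply_ne hj]; simp

lemma UU_det {m : ℕ} {k : ℕ} {g : GL (Fin m) F} (hg : g ∈ UU F k) : Matrix.GeneralLinearGroup.det g = 1 := by
  ext
  show Matrix.det (g : Matrix (Fin m) (Fin m) F) = 1
  rw [Matrix.det_of_isUpperTriangular]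
  · simp [UU_diag hg]
  · intro i j hij
    exact UU_low hg hij

lemma av_inv_mem_iff {m : ℕ} {k : Fin m} (y : {i : Fin m // i < k} → F) (g : GL (Fin m) F) :
    (av y)⁻¹ * g ∈ UU F (k.val + 1) ↔ g ∈ UU F k.val ∧ y = fun i : {i : Fin m // i < k} => (g : Matrix (Fin m) (Fin m) F) i k := by
  constructor
  · intro h
    have h1 : g ∈ UU F k.val := by
      have := mul_mem (av_mem y) (UU_anti (Nat.le_succ _) h)
      rwa [mul_inv_cancel_left] at this
    refine ⟨h1, ?_⟩
    funext i
    have h2 := h i k (Or.inl (Nat.lt_succ_self _))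
    rw [av_inv_mul_apply, UU_diag h1, ex_lt, mul_one, Matrix.one_apply_ne i.2.ne] at h2
    exact (sub_eq_zero.mp h2).symm
  · rintro ⟨h, rfl⟩ i j hij
    rw [av_inv_mul_apply]
    by_cases hjk : j = k
    · subst hjk
      rw [UU_diag h, mul_one]
      by_cases hi : i < j
      · rw [Matrix.one_apply_ne hi.ne]
        simp [ex, hi]
      · rw [ex_not_lt _ hi, sub_zero]
        exact h i j (Or.inr (not_lt.mp hi))
    · have hij' : j.val < k.val ∨ j ≤ i := by
        rcases hij with h' | h'
        · left
          have : j.val ≠ k.val := fun h => hjk (Fin.ext h)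
          omega
        · right; exact h'
      rw [h i j hij']
      have : ex (fun i : {i : Fin m // i < k} => (g : Matrix (Fin m) (Fin m) F) i k) i * (g : Matrix (Fin m) (Fin m) F) k j = 0 := by
        rcases lt_or_gt_of_ne hjk with h' | h'
        · rw [UU_low h h', mul_zero]
        · rcases hij' with h'' | h''
          · rw [Fin.lt_def] at h'; omega
          · rw [ex_not_lt, zero_mul]
            exact not_lt.mpr (h'.le.trans h'')
      rw [this, sub_zero]

noncomputable def qe (ψ : AddChar F ℂ) {m : ℕ} (k : Fin m) (η : {i : Fin m // i < k} → F) (g : GL (Fin m) F) : ℂ :=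
  if g ∈ UU F k.val then ψ (∑ i, η i * (g : Matrix (Fin m) (Fin m) F) i k + ss g) else 0

lemma qe_eq (ψ : AddChar F ℂ) {m : ℕ} (k : Fin m) (η : {i : Fin m // i < k} → F) (g : GL (Fin m) F) :
    qe ψ k η g = ∑ y : {i : Fin m // i < k} → F,
      ψ (∑ i, η i * y i) * ψ (ss (av y)) * qq ψ (k.val + 1) ((av y)⁻¹ * g) := by
  unfold qe
  split_ifs with h
  · rw [Finset.sum_eq_single (fun i : {i : Fin m // i < k} => (g : Matrix (Fin m) (Fin m) F) i k)]
    · unfold qq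
      rw [if_pos ((av_inv_mem_iff _ g).mpr ⟨h, rfl⟩)]
      have h0 : ∀ {x : GL (Fin m) F}, x ∈ UU F k.val → x ∈ UU F 0 := fun hx => UU_anti (Nat.zero_le _) hx
      rw [ss_mul (h0 (inv_mem (av_mem _))) (h0 h), ss_inv (h0 (av_mem _)), ← AddChar.map_add_eq_mul, ← AddChar.map_add_eq_mul]
      congr 1; ring
    · intro y _ hy
      unfold qq
      rw [if_neg, mul_zero]
      intro h'
      exact hy ((av_inv_mem_iff _ g).mp h').2
    · simp
  · symm
    refine Finset.sum_eq_zero fun y _ => ?_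
    unfold qq
    rw [if_neg, mul_zero]
    intro h'
    exact h ((av_inv_mem_iff _ g).mp h').1

noncomputable def dotChar (ψ : AddChar F ℂ) {I : Type} [Fintype I] (y : I → F) : AddChar (I → F) ℂ where
  toFun η := ψ (∑ i, η i * y i)
  map_zero_eq_one' := by simp
  map_add_eq_mul' η η' := by
    rw [← AddChar.map_add_eq_mul, ← Finset.sum_add_distrib]
    congr 1
    exact Finset.sum_congr rfl fun i _ => by simp [add_mul]

lemma dotChar_inj {ψ : AddChar F ℂ} (hψ : ψ ≠ 1) {I : Type} [Fintype I] :
    Function.Injective (dotChar ψ (I := I)) := by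
  intro y y' h
  funext i
  apply sub_eq_zero.mp
  apply eq_zero_of_psi hψ
  intro c
  have h1 : ψ (∑ j, (Pi.single i c : I → F) j * y j) = ψ (∑ j, (Pi.single i c : I → F) j * y' j) := DFunLike.congr_fun h (Pi.single i c : I → F)
  have h2 : ∀ z : I → F, ∑ j, (Pi.single i c : I → F) j * z j = c * z i := by
    intro z
    rw [Finset.sum_eq_single i]
    · simp
    · intro j _ hj; simp [hj]
    · simp
  rw [h2, h2] at h1
  rw [mul_sub, AddChar.map_sub_eq_div, h1, div_self]
  exact (ψ.val_isUnit _).ne_zero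

lemma card_I {m : ℕ} (k : Fin m) : Fintype.card {i : Fin m // i < k} = k.val := by
  rw [Fintype.card_subtype]
  have : (Finset.univ.filter fun i : Fin m => i < k) = Finset.Iio k := by ext; simp
  rw [this, Fin.card_Iio]

lemma S_qe (ψ : AddChar F ℂ) {m : ℕ} (n : ℕ) (k : Fin m) (η : {i : Fin m // i < k} → F) (g : GL (Fin m) F) :
    S ψ n (qe ψ k η) g = ∑ y : {i : Fin m // i < k} → F,
      dotChar ψ y η * (ψ (ss (av y)) * S ψ n (qq ψ (k.val + 1)) ((av y)⁻¹ * g)) := by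
  have h : qe ψ k η = fun g => ∑ y : {i : Fin m // i < k} → F, (ψ (∑ i, η i * y i) * ψ (ss (av y))) * (fun g => qq ψ (k.val + 1) ((av y)⁻¹ * g)) g := by
    funext g; exact qe_eq ψ k η g
  rw [h, S_sum]
  refine Finset.sum_congr rfl fun y _ => ?_
  rw [S_left, mul_assoc]
  rfl

lemma Qd_left {m : ℕ} (e : Fˣ) (f : GL (Fin m) F → ℂ) (h : GL (Fin m) F) (hh : Matrix.GeneralLinearGroup.det h = 1) :
    Qd e (fun g => f (h * g)) = Qd e f := by
  unfold Qd
  rw [sum_two h 1 (fun g => if Matrix.GeneralLinearGroup.det g = e then ‖f g‖ ^ 2 else 0)]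
  refine Finset.sum_congr rfl fun g _ => ?_
  simp [hh]

lemma Qd_conj {m : ℕ} (e : Fˣ) (f : GL (Fin m) F → ℂ) (h : GL (Fin m) F) :
    Qd e (fun g => f (h * g * h⁻¹)) = Qd e f := by
  unfold Qd
  rw [sum_two h h (fun g => if Matrix.GeneralLinearGroup.det g = e then ‖f g‖ ^ 2 else 0)]
  refine Finset.sum_congr rfl fun g _ => ?_
  have : Matrix.GeneralLinearGroup.det (h * g * h⁻¹) = Matrix.GeneralLinearGroup.det g := by
    rw [map_mul, map_mul, map_inv, mul_comm, inv_mul_cancel_left]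
  simp only [this]

lemma pars_pt {ψ : AddChar F ℂ} (hψ : ψ ≠ 1) {m : ℕ} (n : ℕ) (k : Fin m) (g : GL (Fin m) F) :
    ∑ η : {i : Fin m // i < k} → F, ‖S ψ n (qe ψ k η) g‖ ^ 2 =
      (Fintype.card F : ℝ) ^ k.val * ∑ y : {i : Fin m // i < k} → F, ‖S ψ n (qq ψ (k.val + 1)) ((av y)⁻¹ * g)‖ ^ 2 := by
  simp_rw [S_qe]
  rw [parseval (dotChar ψ) (dotChar_inj hψ)]
  congr 1
  · rw [Fintype.card_fun, card_I]; simp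
  · refine Finset.sum_congr rfl fun y _ => ?_
    rw [norm_mul, norm_psi, one_mul]

lemma pars_Q {ψ : AddChar F ℂ} (hψ : ψ ≠ 1) {m : ℕ} (n : ℕ) (k : Fin m) (e : Fˣ) :
    ∑ η : {i : Fin m // i < k} → F, Qd e (S ψ n (qe ψ k η)) =
      (Fintype.card F : ℝ) ^ k.val * ((Fintype.card F : ℝ) ^ k.val * Qd e (S ψ n (qq ψ (m := m) (k.val + 1)))) := by
  have h1 : ∑ η : {i : Fin m // i < k} → F, Qd e (S ψ n (qe ψ k η)) =
      (Fintype.card F : ℝ) ^ k.val * ∑ y : {i : Fin m // i < k} → F, Qd e (fun g => S ψ n (qq ψ (k.val + 1)) ((av y)⁻¹ * g)) := by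
    unfold Qd
    rw [Finset.sum_comm, Finset.sum_comm (s := (Finset.univ : Finset ({i : Fin m // i < k} → F))), Finset.mul_sum]
    refine Finset.sum_congr rfl fun g _ => ?_
    split_ifs with h
    · exact pars_pt hψ n k g
    · simp
  rw [h1]
  congr 1
  rw [Finset.sum_congr rfl fun y _ => Qd_left e _ _ (UU_det (inv_mem (av_mem y)))]
  simp [card_I]

lemma qe_norm (ψ : AddChar F ℂ) {m : ℕ} (k : Fin m) (η : {i : Fin m // i < k} → F) :
    ∑ g : GL (Fin m) F, ‖qe ψ k η g‖ ^ 2 = Fintype.card (UU (m := m) F k.val) := by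
  have : ∀ g : GL (Fin m) F, ‖qe ψ k η g‖ ^ 2 = if g ∈ UU F k.val then 1 else 0 := by
    intro g; unfold qe; split_ifs
    · rw [norm_psi, one_pow]
    · simp
  simp_rw [this]
  rw [Finset.sum_boole, Fintype.card_subtype]

lemma card_UU {m : ℕ} (ψ : AddChar F ℂ) (hψ : ψ ≠ 1) (k : Fin m) :
    (Fintype.card (UU (m := m) F k.val) : ℝ) = (Fintype.card F : ℝ) ^ k.val * Fintype.card (UU (m := m) F (k.val + 1)) := by
  have h1 : ∑ η : {i : Fin m // i < k} → F, ∑ g : GL (Fin m) F, ‖qe ψ k η g‖ ^ 2 =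
      (Fintype.card F : ℝ) ^ k.val * ∑ y : {i : Fin m // i < k} → F, ∑ g : GL (Fin m) F, ‖qq ψ (k.val + 1) ((av y)⁻¹ * g)‖ ^ 2 := by
    rw [Finset.sum_comm, Finset.sum_comm (s := (Finset.univ : Finset ({i : Fin m // i < k} → F))), Finset.mul_sum]
    exact Finset.sum_congr rfl fun g _ => pars_pt hψ 0 k g
  have h2 : ∀ y : {i : Fin m // i < k} → F, ∑ g : GL (Fin m) F, ‖qq ψ (k.val + 1) ((av y)⁻¹ * g)‖ ^ 2 = Fintype.card (UU (m := m) F (k.val + 1)) := by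
    intro y
    rw [← qq_norm ψ]
    exact Equiv.sum_comp (Equiv.mulLeft (av y)⁻¹) (fun g => ‖qq ψ (k.val + 1) g‖ ^ 2)
  simp_rw [h2, qe_norm] at h1
  simp only [Finset.sum_const, Finset.card_univ, Fintype.card_fun, card_I, nsmul_eq_mul, Nat.cast_pow] at h1
  have hq : (Fintype.card F : ℝ) ^ k.val ≠ 0 := by
    have : (Fintype.card F : ℝ) ≠ 0 := by exact_mod_cast Fintype.card_ne_zero
    positivity
  exact mul_left_cancel₀ hq h1

/-- conjugation preserves `U_k` if the rows `≥ k` of `h` are those of the identity -/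
lemma conj_UU {m : ℕ} {k : ℕ} (h : GL (Fin m) F)
    (hh : ∀ i j : Fin m, k ≤ i.val → (h : Matrix (Fin m) (Fin m) F) i j = (1 : Matrix (Fin m) (Fin m) F) i j)
    {g : GL (Fin m) F} (hg : g ∈ UU F k) :
    ((h * g * h⁻¹ : GL (Fin m) F) : Matrix (Fin m) (Fin m) F) =
      1 + (h : Matrix (Fin m) (Fin m) F) * ((g : Matrix (Fin m) (Fin m) F) - 1) ∧ h * g * h⁻¹ ∈ UU F k := by
  set N := (g : Matrix (Fin m) (Fin m) F) - 1 with hN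
  have hN0 : ∀ i j : Fin m, (j.val < k ∨ j ≤ i) → N i j = 0 := by
    intro i j hij
    rw [hN, Matrix.sub_apply, hg i j hij, sub_self]
  have hNh : N * (h : Matrix (Fin m) (Fin m) F) = N := by
    ext i j
    have : ∀ l, N i l * (h : Matrix (Fin m) (Fin m) F) l j = N i l * (1 : Matrix (Fin m) (Fin m) F) l j := by
      intro l
      by_cases hl : k ≤ l.val
      · rw [hh l j hl]
      · rw [hN0 i l (Or.inl (not_le.mp hl))]; simp
    rw [Matrix.mul_apply, Finset.sum_congr rfl fun l _ => this l, ← Matrix.mul_apply, mul_one]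
  have hform : ((h * g * h⁻¹ : GL (Fin m) F) : Matrix (Fin m) (Fin m) F) =
      1 + (h : Matrix (Fin m) (Fin m) F) * N := by
    have hx : N * ((h⁻¹ : GL (Fin m) F) : Matrix (Fin m) (Fin m) F) = N := by
      conv_lhs => rw [← hNh]
      rw [Matrix.mul_assoc, ← Units.val_mul, mul_inv_cancel, Units.val_one, mul_one]
    have hg1 : (g : Matrix (Fin m) (Fin m) F) = 1 + N := by rw [hN]; simp
    rw [Units.val_mul, Units.val_mul, hg1, mul_add, mul_one, add_mul, Matrix.mul_assoc _ N, hx, ← Units.val_mul, mul_inv_cancel, Units.val_one]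
  refine ⟨hform, ?_⟩
  intro i j hij
  rw [hform, Matrix.add_apply]
  suffices H : ((h : Matrix (Fin m) (Fin m) F) * N) i j = 0 by rw [H, add_zero]
  rw [Matrix.mul_apply]
  by_cases hj : j.val < k
  · refine Finset.sum_eq_zero fun l _ => ?_
    rw [hN0 l j (Or.inl hj), mul_zero]
  · have hji : j ≤ i := by
      rcases hij with h | h
      · exact absurd h hj
      · exact h
    have hki : k ≤ i.val := by rw [Fin.le_def] at hji; omega
    rw [Finset.sum_congr rfl fun l _ => by rw [hh i l hki], ← Matrix.mul_apply, one_mul]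
    exact hN0 i j (Or.inr hji)

lemma rows_inv {m : ℕ} {k : ℕ} (h : GL (Fin m) F)
    (hh : ∀ i j : Fin m, k ≤ i.val → (h : Matrix (Fin m) (Fin m) F) i j = (1 : Matrix (Fin m) (Fin m) F) i j) :
    ∀ i j : Fin m, k ≤ i.val → ((h⁻¹ : GL (Fin m) F) : Matrix (Fin m) (Fin m) F) i j = (1 : Matrix (Fin m) (Fin m) F) i j := by
  intro i j hi
  have h1 : ((h : Matrix (Fin m) (Fin m) F) * ((h⁻¹ : GL (Fin m) F) : Matrix (Fin m) (Fin m) F)) i j = (1 : Matrix (Fin m) (Fin m) F) i j := by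
    rw [← Units.val_mul, mul_inv_cancel, Units.val_one]
  rw [Matrix.mul_apply, Finset.sum_congr rfl fun l _ => by rw [hh i l hi], ← Matrix.mul_apply, one_mul] at h1
  exact h1

def kp {m : ℕ} (k : Fin m) (hk : 0 < k.val) : {i : Fin m // i < k} :=
  ⟨⟨k.val - 1, by omega⟩, Fin.lt_def.mpr (by simp; omega)⟩

lemma qe_conj (ψ : AddChar F ℂ) {m : ℕ} (k : Fin m) (hk : 0 < k.val) (η : {i : Fin m // i < k} → F)
    (hη : η (kp k hk) ≠ -1) : ∃ h : GL (Fin m) F, ∀ g, qe ψ k η g = qq ψ k.val (h * g * h⁻¹) := by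
  have hc : 1 + ex η ⬝ᵥ Pi.single (kp k hk : Fin m) (1 : F) ≠ 0 := by
    rw [dotProduct_single, mul_one, ex_lt]
    intro h
    exact hη (eq_neg_of_add_eq_zero_right h)
  set h := r1 (Pi.single (kp k hk : Fin m) (1 : F)) (ex η) hc with hdef
  have hval : (h : Matrix (Fin m) (Fin m) F) = 1 + Matrix.vecMulVec (Pi.single (kp k hk : Fin m) (1 : F)) (ex η) := rfl
  have hh : ∀ i j : Fin m, k.val ≤ i.val → (h : Matrix (Fin m) (Fin m) F) i j = (1 : Matrix (Fin m) (Fin m) F) i j := by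
    intro i j hi
    rw [hval, Matrix.add_apply, Matrix.vecMulVec_apply, Pi.single_eq_of_ne, zero_mul, add_zero]
    rintro rfl
    have := (kp k hk).2
    rw [Fin.lt_def] at this
    omega
  refine ⟨h, fun g => ?_⟩
  have hmem : h * g * h⁻¹ ∈ UU F k.val ↔ g ∈ UU F k.val := by
    constructor
    · intro hg
      have := (conj_UU h⁻¹ (rows_inv h hh) hg).2
      have h3 : h⁻¹ * (h * g * h⁻¹) * h⁻¹⁻¹ = g := by group
      rwa [h3] at this
    · intro hg; exact (conj_UU h hh hg).2
  unfold qe qq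
  simp only [hmem]
  split_ifs with hg
  · congr 1
    unfold ss
    rw [(conj_UU h hh hg).1, hval]
    set N := (g : Matrix (Fin m) (Fin m) F) - 1 with hN
    have hg1 : (g : Matrix (Fin m) (Fin m) F) = 1 + N := by rw [hN]; simp
    have e1 : Matrix.trace (Om m F * (Matrix.vecMulVec (Pi.single (kp k hk : Fin m) (1 : F)) (ex η) * N)) =
        ∑ i, η i * (g : Matrix (Fin m) (Fin m) F) i k := by
      rw [← Matrix.mul_assoc, Matrix.mul_vecMulVec, Matrix.vecMulVec_mul, Matrix.trace_vecMulVec]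
      have : Om m F *ᵥ Pi.single (kp k hk : Fin m) 1 = Pi.single k 1 := by
        rw [Matrix.mulVec_single_one]
        ext i
        simp only [Matrix.col_apply, Om, Matrix.of_apply, kp, Pi.single_apply, Fin.ext_iff]
        congr 1
        apply propext; omega
      rw [this, single_dotProduct, one_mul]
      show ∑ i, ex η i * N i k = _
      rw [sum_ex]
      refine Finset.sum_congr rfl fun i _ => ?_
      rw [hN, Matrix.sub_apply, Matrix.one_apply_ne i.2.ne, sub_zero]
    rw [← e1, hg1]
    simp only [mul_add, add_mul, one_mul, mul_one, Matrix.trace_add]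
    ring
  · rfl

lemma card_bad {I : Type} [Fintype I] [DecidableEq I] (κ : I) :
    Fintype.card F * (Finset.univ.filter fun η : I → F => η κ = -1).card = Fintype.card F ^ Fintype.card I := by
  have : (Finset.univ.filter fun η : I → F => η κ = -1) = Fintype.piFinset (fun i => if i = κ then {-1} else Finset.univ) := by
    ext η
    simp only [Finset.mem_filter, Finset.mem_univ, true_and, Fintype.mem_piFinset]
    constructor
    · intro h i
      split_ifs with hi
      · subst hi; simp [h]
      · simp
    · intro h
      simpa using h κ
  rw [this, Fintype.card_piFinset, ← Finset.mul_prod_erase _ _ (Finset.mem_univ κ)]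
  rw [Finset.prod_congr rfl (g := fun _ => Fintype.card F)]
  · simp only [if_true, Finset.card_singleton, one_mul, Finset.prod_const, Finset.card_erase_of_mem (Finset.mem_univ κ), Finset.card_univ]
    rw [← pow_succ']
    congr 1
    have : 0 < Fintype.card I := Fintype.card_pos_iff.mpr ⟨κ⟩
    omega
  · intro i hi
    rw [if_neg (Finset.ne_of_mem_erase hi)]; rfl

lemma chain_step {ψ : AddChar F ℂ} (hψ : ψ ≠ 1) {m : ℕ} (n : ℕ) (k : Fin m) (hk : 0 < k.val) (e : Fˣ) (B : ℝ)
    (hB : Qd e (S ψ n (qq ψ (m := m) k.val)) ≤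
      ((Fintype.card F : ℝ) ^ (m ^ 2)) ^ n * Fintype.card (UU (m := m) F k.val) * B) :
    Qd e (S ψ n (qq ψ (m := m) (k.val + 1))) ≤
      ((Fintype.card F : ℝ) ^ (m ^ 2)) ^ n * Fintype.card (UU (m := m) F (k.val + 1)) * (B + 1 / Fintype.card F) := by
  set q : ℝ := (Fintype.card F : ℝ) with hq
  have hq0 : 0 < q := by rw [hq]; exact_mod_cast Fintype.card_pos
  set C := (q ^ (m ^ 2)) ^ n with hC
  have hC0 : 0 < C := by positivity
  set Nk : ℝ := (Fintype.card (UU (m := m) F k.val) : ℝ) with hNk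
  set X := Qd e (S ψ n (qq ψ (m := m) k.val)) with hX
  have hX0 : 0 ≤ X := by
    rw [hX]; unfold Qd
    refine Finset.sum_nonneg fun g _ => ?_
    split_ifs <;> positivity
  have hterm : ∀ η : {i : Fin m // i < k} → F, Qd e (S ψ n (qe ψ k η)) ≤ X + if η (kp k hk) = -1 then C * Nk else 0 := by
    intro η
    split_ifs with h
    · refine (Qd_le _ _).trans ((S_norm hψ n _).trans ?_)
      rw [qe_norm]
      linarith
    · obtain ⟨t, ht⟩ := qe_conj ψ k hk η h
      have : qe ψ k η = fun g => (fun g' => qq ψ k.val (t * g')) (g * t⁻¹) := by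
        funext g
        rw [ht, mul_assoc]
      rw [this, S_right ψ n (fun g' => qq ψ k.val (t * g')) t⁻¹, S_left, add_zero]
      have h2 := Qd_conj e (S ψ n (qq ψ (m := m) k.val)) t
      simp_rw [mul_assoc] at h2
      rw [hX, h2]
  have hsum := Finset.sum_le_sum fun η (_ : η ∈ (Finset.univ : Finset ({i : Fin m // i < k} → F))) => hterm η
  rw [pars_Q hψ, Finset.sum_add_distrib, ← Finset.sum_filter] at hsum
  simp only [Finset.sum_const, nsmul_eq_mul, Finset.card_univ, Fintype.card_fun, card_I, Nat.cast_pow] at hsum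
  have hbad := card_bad (F := F) (kp k hk)
  rw [card_I] at hbad
  have hbad' : q * ((Finset.univ.filter fun η : {i : Fin m // i < k} → F => η (kp k hk) = -1).card : ℝ) = q ^ k.val := by
    rw [hq]; exact_mod_cast hbad
  set b : ℝ := ((Finset.univ.filter fun η : {i : Fin m // i < k} → F => η (kp k hk) = -1).card : ℝ)
  have hNN : Nk = q ^ k.val * Fintype.card (UU (m := m) F (k.val + 1)) := card_UU ψ hψ k
  set N1 : ℝ := (Fintype.card (UU (m := m) F (k.val + 1)) : ℝ)
  have hb : b = q ^ k.val / q := by field_simp; linarith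
  rw [← hq, hb] at hsum
  have hP : 0 < q ^ k.val := by positivity
  set P := q ^ k.val
  have h5 : P * (P * Qd e (S ψ n (qq ψ (m := m) (k.val + 1)))) ≤ P * (P * (C * N1 * (B + 1 / q))) := by
    calc _ ≤ P * X + P / q * (C * Nk) := hsum
      _ ≤ P * (C * Nk * B) + P / q * (C * Nk) := by gcongr
      _ = _ := by rw [hNN]; field_simp
  exact le_of_mul_le_mul_left (le_of_mul_le_mul_left h5 hP) hP

lemma chain {ψ : AddChar F ℂ} (hψ : ψ ≠ 1) (n : ℕ) (hn : 0 < n) (e : Fˣ) (j : ℕ) (hj : j ≤ n) :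
    Qd e (S ψ n (qq ψ (m := n + 1) (j + 1))) ≤
      ((Fintype.card F : ℝ) ^ ((n + 1) ^ 2)) ^ n * Fintype.card (UU (m := n + 1) F (j + 1)) *
        (n / ((Fintype.card F : ℝ) - 1) + j / Fintype.card F) := by
  have h1 : (0 : ℝ) < (Fintype.card F : ℝ) - 1 := by
    have : 1 < Fintype.card F := Fintype.one_lt_card
    have : (1 : ℝ) < Fintype.card F := by exact_mod_cast this
    linarith
  induction j with
  | zero =>
    have h := R1_bound hψ n hn e
    have hqq : qq ψ (m := n + 1) (0 + 1) = qq ψ 0 := by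
      funext g; unfold qq; rw [zero_add, UU_one]
    have hU : UU (m := n + 1) F (0 + 1) = UU F 0 := UU_one
    rw [hqq]
    simp only [hU]
    rw [Nat.cast_zero, zero_div, add_zero, mul_div_assoc', le_div_iff₀ h1]
    linarith
  | succ j ih =>
    have h := chain_step hψ n (⟨j + 1, by omega⟩ : Fin (n + 1)) (by simp) e _ (ih (by omega))
    refine h.trans (le_of_eq ?_)
    push_cast
    ring

/-- upper bound for the delta function kernel -/
lemma K_upper {ψ : AddChar F ℂ} (hψ : ψ ≠ 1) (n : ℕ) (hn : 0 < n) (e : Fˣ) :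
    Qd e (S ψ n (fun g : GL (Fin (n + 1)) F => if g = 1 then 1 else 0)) ≤
      ((Fintype.card F : ℝ) ^ ((n + 1) ^ 2)) ^ n * (2 * n / ((Fintype.card F : ℝ) - 1)) := by
  have h1 : (0 : ℝ) < (Fintype.card F : ℝ) - 1 := by
    have : 1 < Fintype.card F := Fintype.one_lt_card
    have : (1 : ℝ) < Fintype.card F := by exact_mod_cast this
    linarith
  have h := chain hψ n hn e n le_rfl
  have hqq : qq ψ (m := n + 1) (n + 1) = fun g => if g = 1 then 1 else 0 := by
    funext g; unfold qq
    simp only [UU_top]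
    split_ifs with h
    · rw [h, ss_one]; simp
    · rfl
  have hc : Fintype.card (UU (m := n + 1) F (n + 1)) = 1 := by
    rw [Fintype.card_eq_one_iff]
    exact ⟨1, fun g => Subtype.ext (UU_top.mp g.2)⟩
  rw [hqq, hc, Nat.cast_one, mul_one] at h
  refine h.trans ?_
  apply mul_le_mul_of_nonneg_left _ (by positivity)
  have : (n : ℝ) / Fintype.card F ≤ n / ((Fintype.card F : ℝ) - 1) := by
    gcongr; linarith
  calc _ ≤ (n : ℝ) / ((Fintype.card F : ℝ) - 1) + n / ((Fintype.card F : ℝ) - 1) := by linarith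
    _ = _ := by ring

/-- the order of `U`, squared -/
lemma card_U_aux {ψ : AddChar F ℂ} (hψ : ψ ≠ 1) (m j : ℕ) (hj : j ≤ m) :
    (Fintype.card (UU (m := m) F 0) : ℝ) ^ 2 = (Fintype.card F : ℝ) ^ (j * (j - 1)) * (Fintype.card (UU (m := m) F j) : ℝ) ^ 2 := by
  induction j with
  | zero => simp
  | succ j ih =>
    rw [ih (by omega), card_UU ψ hψ ⟨j, by omega⟩, mul_pow, ← mul_assoc, ← pow_mul, ← pow_add]
    congr 2
    rcases j with _ | j
    · rfl
    · simp; ring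

lemma card_U {ψ : AddChar F ℂ} (hψ : ψ ≠ 1) (m : ℕ) :
    (Fintype.card (UU (m := m) F 0) : ℝ) ^ 2 = (Fintype.card F : ℝ) ^ (m * (m - 1)) := by
  have hc : Fintype.card (UU (m := m) F m) = 1 := by
    rw [Fintype.card_eq_one_iff]
    exact ⟨1, fun g => Subtype.ext (UU_top.mp g.2)⟩
  rw [card_U_aux hψ m m le_rfl, hc]; simp


lemma psi_sum (ψ : AddChar F ℂ) {I : Type*} (s : Finset I) (f : I → F) :
    ψ (∑ i ∈ s, f i) = ∏ i ∈ s, ψ (f i) := by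
  induction s using Finset.induction_on with
  | empty => simp
  | insert a s ha ih => rw [Finset.sum_insert ha, Finset.prod_insert ha, AddChar.map_add_eq_mul, ih]

noncomputable def kl (ψ : AddChar F ℂ) : ℕ → Fˣ → ℂ
  | 0, a => if a = 1 then 1 else 0
  | n + 1, a => ∑ t : Fˣ, ψ ((a * t⁻¹ : Fˣ) : F) * kl ψ n t

lemma Up_mul {m : ℕ} {A B : Matrix (Fin m) (Fin m) F} (hA : Up A) (hB : Up B) : Up (A * B) := by
  intro i j hij
  rw [Matrix.mul_apply]
  refine Finset.sum_eq_zero fun l _ => ?_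
  by_cases h : l < i
  · rw [hA _ _ h, zero_mul]
  · rw [hB _ _ (lt_of_lt_of_le hij (not_lt.mp h)), mul_zero]

lemma UU_up {m k : ℕ} {g : GL (Fin m) F} (h : g ∈ UU F k) : Up (g : Matrix (Fin m) (Fin m) F) :=
  fun _ _ hij => UU_low h hij

lemma dg_up {m : ℕ} (δ : Fin m → Fˣ) : Up ((dg δ : GL (Fin m) F) : Matrix (Fin m) (Fin m) F) := by
  intro i j hij
  show Matrix.diagonal _ i j = 0
  rw [Matrix.diagonal_apply_ne _ hij.ne']

lemma mul_dg_apply {m : ℕ} (δ : Fin m → Fˣ) (g : GL (Fin m) F) (i j : Fin m) :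
    ((g * dg δ : GL (Fin m) F) : Matrix (Fin m) (Fin m) F) i j = (g : Matrix (Fin m) (Fin m) F) i j * δ j := by
  have : ((g * dg δ : GL (Fin m) F) : Matrix (Fin m) (Fin m) F) =
    (g : Matrix (Fin m) (Fin m) F) * Matrix.diagonal (fun i => (δ i : F)) := rfl
  rw [this, Matrix.mul_diagonal]

lemma dg_mul_inv {m : ℕ} (δ ε : Fin m → Fˣ) : (dg δ * (dg ε)⁻¹ : GL (Fin m) F) = dg (fun i => δ i * (ε i)⁻¹) := by
  rw [mul_inv_eq_iff_eq_mul]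
  ext i j
  rw [mul_dg_apply]
  show Matrix.diagonal _ i j = Matrix.diagonal _ i j * _
  by_cases h : i = j
  · subst h; simp
  · simp [Matrix.diagonal_apply_ne _ h]

lemma dg_inv {m : ℕ} (ε : Fin m → Fˣ) : ((dg ε)⁻¹ : GL (Fin m) F) = dg (fun i => (ε i)⁻¹) := by
  have h1 : (dg (fun _ => 1) : GL (Fin m) F) = 1 := by
    ext i j
    show Matrix.diagonal _ i j = _
    simp
  have := dg_mul_inv (fun _ => 1) ε
  rw [h1, one_mul] at this
  simpa using this

lemma up_decomp {m : ℕ} {g : GL (Fin m) F} (h : Up (g : Matrix (Fin m) (Fin m) F)) :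
    ∃ u ∈ UU (m := m) F 0, ∃ t : Fin m → Fˣ, g = u * dg t := by
  have hdet : Matrix.det (g : Matrix (Fin m) (Fin m) F) ≠ 0 := (Matrix.GeneralLinearGroup.det g).ne_zero
  rw [Matrix.det_of_isUpperTriangular (fun i j hij => h i j hij)] at hdet
  have hne : ∀ i, (g : Matrix (Fin m) (Fin m) F) i i ≠ 0 := fun i => Finset.prod_ne_zero_iff.mp hdet i (Finset.mem_univ i)
  set t : Fin m → Fˣ := fun i => Units.mk0 _ (hne i) with ht
  refine ⟨g * (dg t)⁻¹, ?_, t, by simp⟩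
  intro i j hij
  have hij : j ≤ i := by rcases hij with h | h; omega; exact h
  rw [dg_inv, mul_dg_apply]
  rcases hij.eq_or_lt with h' | h'
  · subst h'; simp [ht, hne]
  · rw [h i j h', Matrix.one_apply_ne h'.ne', zero_mul]

noncomputable def phi {m : ℕ} (p : UU (m := m) F 0 × (Fin m → Fˣ)) : GL (Fin m) F := (p.1 : GL (Fin m) F) * dg p.2

lemma phi_inj {m : ℕ} : Function.Injective (phi (F := F) (m := m)) := by
  rintro ⟨u, t⟩ ⟨u', t'⟩ h
  unfold phi at h
  simp only at h
  have ht : t = t' := by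
    funext i
    have := congrArg (fun g : GL (Fin m) F => (g : Matrix (Fin m) (Fin m) F) i i) h
    simp only [mul_dg_apply, UU_diag u.2, UU_diag u'.2, one_mul] at this
    exact Units.ext this
  subst ht
  have := mul_right_cancel h
  rw [Subtype.ext this]

noncomputable def oneU {m : ℕ} (g : GL (Fin m) F) : ℂ := if g ∈ UU (m := m) F 0 then 1 else 0

lemma oneU_left (ψ : AddChar F ℂ) {m : ℕ} (n : ℕ) {u : GL (Fin m) F} (hu : u ∈ UU F 0) (g : GL (Fin m) F) :
    S ψ n oneU (u * g) = S ψ n oneU g := by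
  have h1 := congrFun (S_left ψ n oneU u) g
  rw [← h1]
  have h2 : (fun g => oneU (u * g)) = (oneU : GL (Fin m) F → ℂ) := by
    funext g; unfold oneU
    rw [Subgroup.mul_mem_cancel_left _ hu]
  rw [h2]

lemma Fn_formula {ψ : AddChar F ℂ} (hψ : ψ ≠ 1) {m : ℕ} (n : ℕ) :
    (∀ u ∈ UU (m := m) F 0, ∀ t : Fin m → Fˣ, S ψ n oneU (u * dg t) =
      (Fintype.card (UU (m := m) F 0) : ℂ) ^ n * ∏ i, kl ψ n (t i)) ∧
    (∀ g : GL (Fin m) F, ¬ Up (g : Matrix (Fin m) (Fin m) F) → S ψ n oneU g = 0) := by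
  induction n with
  | zero =>
    constructor
    · intro u hu t
      rw [S_zero]
      unfold oneU
      rw [Subgroup.mul_mem_cancel_left _ hu]
      have : (dg t : GL (Fin m) F) ∈ UU F 0 ↔ ∀ i, t i = 1 := by
        constructor
        · intro h i
          have := UU_diag h i
          have h2 : Matrix.diagonal (fun i => (t i : F)) i i = 1 := this
          rw [Matrix.diagonal_apply_eq] at h2
          exact Units.ext h2
        · intro h i j _
          show Matrix.diagonal (fun i => (t i : F)) i j = _
          simp [h]
      simp only [this, kl, pow_zero, one_mul]
      split_ifs with h
      · simp [h]
      · push Not at h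
        obtain ⟨i, hi⟩ := h
        symm
        exact Finset.prod_eq_zero (Finset.mem_univ i) (by simp [hi])
    · intro g hg
      rw [S_zero]
      unfold oneU
      rw [if_neg]
      exact fun h => hg (UU_up h)
  | succ n ih =>
    obtain ⟨ih1, ih2⟩ := ih
    have hT : ∀ g : GL (Fin m) F, S ψ (n + 1) oneU g = ∑ y : GL (Fin m) F, if Up ((g * y⁻¹ : GL (Fin m) F) : Matrix (Fin m) (Fin m) F)
        then ψ (Matrix.trace ((g * y⁻¹ : GL (Fin m) F) : Matrix (Fin m) (Fin m) F)) * S ψ n oneU y else 0 := by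
      intro g
      rw [S_succ, T_equiv hψ 0]
      · simp
      · intro u hu y
        rw [oneU_left ψ n hu]; simp
    constructor
    · intro u hu t
      rw [hT]
      have hsum := Fintype.sum_of_injective phi phi_inj (fun p : UU (m := m) F 0 × (Fin m → Fˣ) =>
          (Fintype.card (UU (m := m) F 0) : ℂ) ^ n * ∏ i, (ψ ((t i * (p.2 i)⁻¹ : Fˣ) : F) * kl ψ n (p.2 i)))
        (fun y : GL (Fin m) F => if Up ((u * dg t * y⁻¹ : GL (Fin m) F) : Matrix (Fin m) (Fin m) F)
        then ψ (Matrix.trace ((u * dg t * y⁻¹ : GL (Fin m) F) : Matrix (Fin m) (Fin m) F)) * S ψ n oneU y else 0) ?_ ?_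
      · rw [← hsum, ← Finset.mul_sum, Fintype.sum_prod_type]
        simp only [Finset.sum_const, Finset.card_univ, nsmul_eq_mul]
        have hps := Finset.prod_univ_sum (fun _ : Fin m => (Finset.univ : Finset Fˣ)) (fun i s => ψ ((t i * s⁻¹ : Fˣ) : F) * kl ψ n s)
        rw [Fintype.piFinset_univ] at hps
        rw [← hps]
        simp only [kl]
        ring
      · intro y hy
        have : ¬ Up (y : Matrix (Fin m) (Fin m) F) := by
          intro h
          obtain ⟨u', hu', t', h'⟩ := up_decomp h
          exact hy ⟨(⟨u', hu'⟩, t'), h'.symm⟩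
        rw [ih2 y this]; simp
      · rintro ⟨v, s⟩
        have hform : u * dg t * (phi (v, s))⁻¹ = u * dg (fun i => t i * (s i)⁻¹) * (v : GL (Fin m) F)⁻¹ := by
          unfold phi
          rw [← dg_mul_inv]; group
        have hup : Up ((u * dg (fun i => t i * (s i)⁻¹) : GL (Fin m) F) : Matrix (Fin m) (Fin m) F) :=
          Up_mul (UU_up hu) (dg_up _)
        have hup2 : Up ((u * dg t * (phi (v, s))⁻¹ : GL (Fin m) F) : Matrix (Fin m) (Fin m) F) := by
          rw [hform]
          exact Up_mul hup (UU_up (inv_mem v.2))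
        have htr : Matrix.trace ((u * dg t * (phi (v, s))⁻¹ : GL (Fin m) F) : Matrix (Fin m) (Fin m) F) =
            ∑ i, ((t i * (s i)⁻¹ : Fˣ) : F) := by
          rw [hform, Units.val_mul _ (v : GL (Fin m) F)⁻¹, up_trace hup (inv_mem v.2), Units.val_mul, Matrix.trace_mul_comm, up_trace (dg_up _) hu]
          show Matrix.trace (Matrix.diagonal _) = _
          rw [Matrix.trace_diagonal]
        rw [if_pos hup2, htr]
        have : S ψ n oneU (phi (v, s)) = (Fintype.card (UU (m := m) F 0) : ℂ) ^ n * ∏ i, kl ψ n (s i) := ih1 _ v.2 s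
        rw [this, psi_sum, Finset.prod_mul_distrib]
        ring
    · intro g hg
      rw [hT]
      refine Finset.sum_eq_zero fun y _ => ?_
      split_ifs with h
      · by_cases hy : Up (y : Matrix (Fin m) (Fin m) F)
        · exfalso
          apply hg
          have := Up_mul h hy
          rwa [← Units.val_mul, inv_mul_cancel_right] at this
        · rw [ih2 y hy, mul_zero]
      · rfl

noncomputable def KK (ψ : AddChar F ℂ) {m : ℕ} (n : ℕ) : GL (Fin m) F → ℂ :=
  S ψ n (fun g : GL (Fin m) F => if g = 1 then 1 else 0)

lemma KK_conj (ψ : AddChar F ℂ) {m : ℕ} (n : ℕ) (h g : GL (Fin m) F) :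
    KK ψ n (h * g * h⁻¹) = KK ψ n g := by
  unfold KK
  set δ : GL (Fin m) F → ℂ := fun g => if g = 1 then 1 else 0 with hδ
  have h1 : δ = fun g => (fun g' => δ (h * g')) (g * h⁻¹) := by
    funext g
    simp only [hδ]
    congr 1
    apply propext
    rw [← mul_assoc, conj_eq_one_iff]
  conv_rhs => rw [h1, S_right ψ n (fun g' => δ (h * g')) h⁻¹, S_left]
  rw [mul_assoc]

lemma KK_sum {ψ : AddChar F ℂ} (hψ : ψ ≠ 1) {m : ℕ} (n : ℕ) :
    ∑ g : GL (Fin m) F, (if g ∈ UU (m := m) F 0 then KK ψ n g else 0) =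
      (Fintype.card (UU (m := m) F 0) : ℂ) ^ n * (kl ψ n 1) ^ m := by
  have h1 := (Fn_formula hψ (m := m) n).1 1 (one_mem _) (fun _ => 1)
  have h2 : (dg (fun _ => 1) : GL (Fin m) F) = 1 := by
    ext i j
    show Matrix.diagonal _ i j = _
    simp
  rw [h2, one_mul, Finset.prod_const, Finset.card_univ, Fintype.card_fin] at h1
  rw [← h1]
  have h3 : (oneU : GL (Fin m) F → ℂ) = fun g => ∑ u : GL (Fin m) F, (if u ∈ UU (m := m) F 0 then (1:ℂ) else 0) * (fun g => (fun g : GL (Fin m) F => if g = 1 then (1:ℂ) else 0) (u * g)) g := by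
    funext g
    unfold oneU
    rw [Finset.sum_eq_single g⁻¹]
    · simp
    · intro b _ hb
      simp only
      rw [if_neg (c := b * g = 1), mul_zero]
      intro h; exact hb (eq_inv_of_mul_eq_one_left h)
    · simp
  rw [h3, S_sum]
  refine Finset.sum_congr rfl fun u _ => ?_
  have h4 := congrFun (S_left ψ n (fun g : GL (Fin m) F => if g = 1 then (1:ℂ) else 0) u) 1
  simp only [mul_one] at h4
  rw [h4]
  unfold KK
  split_ifs <;> simp

noncomputable def EE {m : ℕ} (B : GL (Fin m) F) : ℝ := ∑ h : GL (Fin m) F, if h⁻¹ * B * h ∈ UU (m := m) F 0 then 1 else 0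

lemma EE_conj {m : ℕ} (h B : GL (Fin m) F) : EE (h * B * h⁻¹) = EE B := by
  unfold EE
  rw [sum_two h 1]
  refine Finset.sum_congr rfl fun g _ => ?_
  have : (h * g * 1⁻¹)⁻¹ * (h * B * h⁻¹) * (h * g * 1⁻¹) = g⁻¹ * B * g := by group
  rw [this]

lemma class_sum {m : ℕ} {R : Type*} [CommRing R] (f : GL (Fin m) F → R) (hf : ∀ h g, f (h * g * h⁻¹) = f g) :
    ∑ B, f B * ∑ h : GL (Fin m) F, (if h⁻¹ * B * h ∈ UU (m := m) F 0 then (1:R) else 0) =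
      Fintype.card (GL (Fin m) F) * ∑ g, if g ∈ UU (m := m) F 0 then f g else 0 := by
  simp_rw [Finset.mul_sum]
  rw [Finset.sum_comm]
  have : ∀ h : GL (Fin m) F, ∑ B, f B * (if h⁻¹ * B * h ∈ UU (m := m) F 0 then (1:R) else 0) =
      ∑ g, if g ∈ UU (m := m) F 0 then f g else 0 := by
    intro h
    rw [sum_two h h]
    refine Finset.sum_congr rfl fun g _ => ?_
    have e : h⁻¹ * (h * g * h⁻¹) * h = g := by group
    rw [hf, e]
    simp
  rw [Finset.sum_congr rfl fun h _ => this h]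
  rw [Finset.sum_const, Finset.card_univ, nsmul_eq_mul, ← Finset.mul_sum]

lemma EE_sq {m : ℕ} : ∑ B : GL (Fin m) F, EE B ^ 2 = Fintype.card (GL (Fin m) F) * ∑ g, if g ∈ UU (m := m) F 0 then EE g else 0 := by
  rw [← class_sum EE EE_conj]
  refine Finset.sum_congr rfl fun B _ => ?_
  rw [pow_two]; rfl

lemma EE_zero {m : ℕ} {B : GL (Fin m) F} (hB : Matrix.GeneralLinearGroup.det B ≠ 1) : EE B = 0 := by
  unfold EE
  refine Finset.sum_eq_zero fun h _ => ?_
  rw [if_neg]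
  intro hm
  have := UU_det hm
  rw [map_mul, map_mul, map_inv, mul_comm, mul_inv_cancel_left] at this
  exact hB this

lemma CS_bound {ψ : AddChar F ℂ} (hψ : ψ ≠ 1) {m : ℕ} (n : ℕ) :
    ((Fintype.card (GL (Fin m) F) : ℝ) * ((Fintype.card (UU (m := m) F 0) : ℝ) ^ n * ‖kl ψ n 1‖ ^ m)) ^ 2 ≤
      Qd 1 (KK ψ (m := m) n) * ∑ B : GL (Fin m) F, EE B ^ 2 := by
  have h := class_sum (KK ψ (m := m) n) (KK_conj ψ n)
  rw [KK_sum hψ] at h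
  have h2 := congrArg norm h
  rw [norm_mul, norm_mul, norm_pow, norm_pow] at h2
  simp only [Complex.norm_natCast] at h2
  rw [← h2]
  set D := Finset.univ.filter fun B : GL (Fin m) F => Matrix.GeneralLinearGroup.det B = 1
  have h3 : ‖∑ B, KK ψ n B * ∑ h : GL (Fin m) F, (if h⁻¹ * B * h ∈ UU (m := m) F 0 then (1:ℂ) else 0)‖ ≤
      ∑ B ∈ D, ‖KK ψ n B‖ * EE B := by
    have e : ∀ B : GL (Fin m) F, ∑ h : GL (Fin m) F, (if h⁻¹ * B * h ∈ UU (m := m) F 0 then (1:ℂ) else 0) = (EE B : ℂ) := by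
      intro B; unfold EE; push_cast; exact Finset.sum_congr rfl fun h _ => by split_ifs <;> simp
    have e0 : ∀ B : GL (Fin m) F, 0 ≤ EE B := by
      intro B; unfold EE
      refine Finset.sum_nonneg fun h _ => ?_
      split_ifs <;> norm_num
    refine (norm_sum_le _ _).trans (le_of_eq ?_)
    rw [← Finset.sum_subset (Finset.subset_univ D)]
    · refine Finset.sum_congr rfl fun B _ => ?_
      rw [norm_mul, e, Complex.norm_real, Real.norm_of_nonneg (e0 B)]
    · intro B _ hB
      have : EE B = 0 := by
        apply EE_zero
        intro hd
        exact hB (by simp [D, hd])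
      rw [e, this]; simp
  calc _ ≤ (∑ B ∈ D, ‖KK ψ n B‖ * EE B) ^ 2 := by gcongr
    _ ≤ (∑ B ∈ D, ‖KK ψ n B‖ ^ 2) * ∑ B ∈ D, EE B ^ 2 := Finset.sum_mul_sq_le_sq_mul_sq _ _ _
    _ ≤ _ := by
      unfold Qd
      rw [← Finset.sum_filter]
      apply mul_le_mul_of_nonneg_left _ (Finset.sum_nonneg fun _ _ => by positivity)
      exact Finset.sum_le_sum_of_subset_of_nonneg (Finset.subset_univ _) (fun _ _ _ => by positivity)


/-- column operation -/
lemma mul_r1_apply {m : ℕ} (j : Fin m) (v : Fin m → F) (hc : 1 + v ⬝ᵥ (Pi.single j 1) ≠ 0) (g : GL (Fin m) F) (r t : Fin m) :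
    ((g * r1 (Pi.single j 1) v hc : GL (Fin m) F) : Matrix (Fin m) (Fin m) F) r t =
      (g : Matrix (Fin m) (Fin m) F) r t + (g : Matrix (Fin m) (Fin m) F) r j * v t := by
  have : ((g * r1 (Pi.single j 1) v hc : GL (Fin m) F) : Matrix (Fin m) (Fin m) F) =
    (g : Matrix (Fin m) (Fin m) F) * (1 + Matrix.vecMulVec (Pi.single j 1) v) := rfl
  rw [this, mul_add, mul_one, Matrix.add_apply, Matrix.mul_apply]
  congr 1
  rw [Finset.sum_eq_single j]
  · simp [Matrix.vecMulVec_apply]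
  · intro l _ hl; simp [Matrix.vecMulVec_apply, hl]
  · simp

lemma col_ne_zero {m : ℕ} (g : GL (Fin m) F) (j : Fin m) : ∃ i, (g : Matrix (Fin m) (Fin m) F) i j ≠ 0 := by
  by_contra h
  push Not at h
  have h1 : ((g⁻¹ * g : GL (Fin m) F) : Matrix (Fin m) (Fin m) F) j j = 0 := by
    rw [Units.val_mul, Matrix.mul_apply]
    exact Finset.sum_eq_zero fun l _ => by rw [h, mul_zero]
  rw [inv_mul_cancel] at h1
  simp at h1

lemma elim_aux {m : ℕ} (h : GL (Fin m) F) (j : ℕ) (hj : j ≤ m) :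
    ∃ a ∈ UU (m := m) F 0, ∃ b ∈ UU (m := m) F 0, ∃ σ : Fin m → Fin m,
      ∀ l : Fin m, l.val < j → (∀ r, r ≠ σ l → ((a * h * b : GL (Fin m) F) : Matrix (Fin m) (Fin m) F) r l = 0) ∧
        (∀ t, t ≠ l → ((a * h * b : GL (Fin m) F) : Matrix (Fin m) (Fin m) F) (σ l) t = 0) := by
  induction j with
  | zero => exact ⟨1, one_mem _, 1, one_mem _, id, fun l hl => absurd hl (by omega)⟩
  | succ j ih =>
    obtain ⟨a, ha, b, hb, σ, H⟩ := ih (by omega)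
    set X := a * h * b with hX
    set J : Fin m := ⟨j, by omega⟩ with hJ
    obtain ⟨i, hi, hmax⟩ : ∃ i, (X : Matrix (Fin m) (Fin m) F) i J ≠ 0 ∧ ∀ r, i < r → (X : Matrix (Fin m) (Fin m) F) r J = 0 := by
      have hne : (Finset.univ.filter fun i => (X : Matrix (Fin m) (Fin m) F) i J ≠ 0).Nonempty := by
        obtain ⟨i, hi⟩ := col_ne_zero X J
        exact ⟨i, by simp [hi]⟩
      refine ⟨Finset.max' _ hne, ?_, ?_⟩
      · have := Finset.max'_mem _ hne
        simpa using this
      · intro r hr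
        by_contra hc
        exact absurd (Finset.le_max' _ r (by simpa using hc)) (not_le.mpr hr)
    set x : F := (X : Matrix (Fin m) (Fin m) F) i J with hx
    set y : {r : Fin m // r < i} → F := fun r => - (X : Matrix (Fin m) (Fin m) F) r J / x with hy
    set v : Fin m → F := fun t => if J < t then - (X : Matrix (Fin m) (Fin m) F) i t / x else 0 with hv
    have hvJ : v J = 0 := by simp [hv]
    have hc : 1 + v ⬝ᵥ (Pi.single J 1) ≠ 0 := by simp [hvJ]
    have hlow : ∀ l : Fin m, l < J → (X : Matrix (Fin m) (Fin m) F) i l = 0 := by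
      intro l hl
      have := H l hl
      by_contra hne
      have h1 : i = σ l := by
        by_contra h2; exact hne (this.1 i h2)
      apply hi
      have h3 := this.2 J hl.ne'
      rwa [← h1] at h3
    have e1 : ∀ r t, ((av y * X * r1 (Pi.single J 1) v hc : GL (Fin m) F) : Matrix (Fin m) (Fin m) F) r t =
      ((X : Matrix (Fin m) (Fin m) F) r t + ex y r * (X : Matrix (Fin m) (Fin m) F) i t) + ((X : Matrix (Fin m) (Fin m) F) r J + ex y r * x) * v t := by
      intro r t
      rw [mul_r1_apply, av_mul_apply, av_mul_apply]
    have e2 : ∀ r, r ≠ i → (X : Matrix (Fin m) (Fin m) F) r J + ex y r * x = 0 := by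
      intro r hr
      rcases lt_or_gt_of_ne hr with h1 | h1
      · have := ex_lt y ⟨r, h1⟩
        simp only at this
        rw [this, hy]
        field_simp
        ring
      · rw [hmax r h1, ex_not_lt y (not_lt.mpr h1.le)]; simp
    refine ⟨av y * a, mul_mem (UU_anti (Nat.zero_le _) (av_mem y)) ha, b * r1 (Pi.single J 1) v hc, mul_mem hb ?_, Function.update σ J i, ?_⟩
    · intro r t hrt
      have hrt : t ≤ r := by rcases hrt with h | h; omega; exact h
      show (1 + Matrix.vecMulVec (Pi.single J 1) v) r t = _
      rw [Matrix.add_apply, Matrix.vecMulVec_apply]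
      by_cases h1 : r = J
      · have : v t = 0 := by
          simp only [hv]; rw [if_neg]; rw [← h1]; exact not_lt.mpr hrt
        rw [this]; simp
      · rw [Pi.single_eq_of_ne h1]; simp
    · have e0 : av y * a * h * (b * r1 (Pi.single J 1) v hc) = av y * X * r1 (Pi.single J 1) v hc := by
        rw [hX]; simp only [mul_assoc]
      rw [e0]
      intro l hl
      by_cases hlJ : l = J
      · subst hlJ
        rw [Function.update_self]
        constructor
        · intro r hr
          rw [e1, ← hx, e2 r hr]; simp
        · intro t ht
          rw [e1, ex_k, zero_mul, zero_mul, add_zero, add_zero]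
          rcases lt_or_gt_of_ne ht with h1 | h1
          · rw [hlow t h1]
            have : v t = 0 := by simp only [hv]; rw [if_neg (not_lt.mpr h1.le)]
            rw [this]; simp
          · have : v t = - (X : Matrix (Fin m) (Fin m) F) i t / x := by simp only [hv]; rw [if_pos h1]
            rw [this, ← hx]
            field_simp
            ring
      · have hl' : l < J := by
          rw [Fin.lt_def]
          have : l.val ≠ j := fun h => hlJ (Fin.ext h)
          show l.val < j
          omega
        rw [Function.update_of_ne hlJ]
        obtain ⟨H1, H2⟩ := H l hl'
        have hvl : v l = 0 := by simp only [hv]; rw [if_neg (not_lt.mpr hl'.le)]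
        constructor
        · intro r hr
          rw [e1, H1 r hr, hlow l hl', hvl]; simp
        · intro t ht
          have hsi : σ l ≠ i := by
            intro h1
            have := H2 J hl'.ne'
            rw [h1] at this
            exact hi this
          rw [e1, e2 _ hsi, H2 t ht]
          have := e2 _ hsi
          rw [H2 J hl'.ne', zero_add] at this
          rcases mul_eq_zero.mp this with h1 | h1
          · rw [h1]; simp
          · exact absurd h1 hi

def mon {m : ℕ} (σ : Fin m → Fin m) (c : Fin m → F) : Matrix (Fin m) (Fin m) F :=
  fun i j => if i = σ j then c j else 0

lemma elim {m : ℕ} (h : GL (Fin m) F) : ∃ a b : UU (m := m) F 0, ∃ σ : Fin m → Fin m, ∃ c : Fin m → F,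
    (h : Matrix (Fin m) (Fin m) F) = ((a : GL (Fin m) F) : Matrix (Fin m) (Fin m) F) * mon σ c * ((b : GL (Fin m) F) : Matrix (Fin m) (Fin m) F) := by
  obtain ⟨a, ha, b, hb, σ, H⟩ := elim_aux h m le_rfl
  refine ⟨⟨a⁻¹, inv_mem ha⟩, ⟨b⁻¹, inv_mem hb⟩, σ, fun j => ((a * h * b : GL (Fin m) F) : Matrix (Fin m) (Fin m) F) (σ j) j, ?_⟩
  have : mon σ (fun j => ((a * h * b : GL (Fin m) F) : Matrix (Fin m) (Fin m) F) (σ j) j) = ((a * h * b : GL (Fin m) F) : Matrix (Fin m) (Fin m) F) := by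
    ext i j
    unfold mon
    split_ifs with h1
    · rw [h1]
    · rw [(H j j.2).1 i h1]
  rw [this]
  simp only [← Units.val_mul]
  congr 1
  group

lemma EE_count {m : ℕ} : (∑ g, if g ∈ UU (m := m) F 0 then EE g else 0) ≤
    (m : ℝ) ^ m * (Fintype.card F : ℝ) ^ m * (Fintype.card (UU (m := m) F 0) : ℝ) ^ 2 := by
  choose a b σ c H using elim (F := F) (m := m)
  set N := Finset.univ.filter fun p : GL (Fin m) F × GL (Fin m) F => p.1 ∈ UU (m := m) F 0 ∧ p.2⁻¹ * p.1 * p.2 ∈ UU (m := m) F 0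
  have h1 : (∑ g, if g ∈ UU (m := m) F 0 then EE g else 0) = (N.card : ℝ) := by
    rw [Finset.card_filter, Fintype.sum_prod_type]
    push_cast
    refine Finset.sum_congr rfl fun g _ => ?_
    unfold EE
    by_cases hg : g ∈ UU (m := m) F 0
    · simp [hg]
    · simp [hg]
  rw [h1]
  let Φ : {p // p ∈ N} → ((Fin m → Fin m) × (Fin m → F)) × (UU (m := m) F 0 × UU (m := m) F 0) := fun p =>
    ((σ p.1.2, c p.1.2), (⟨p.1.1, (Finset.mem_filter.mp p.2).2.1⟩ * a p.1.2,
      b p.1.2 * (⟨p.1.2⁻¹ * p.1.1 * p.1.2, (Finset.mem_filter.mp p.2).2.2⟩)⁻¹))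
  have hrec : ∀ p : {p // p ∈ N}, (p.1.2 : Matrix (Fin m) (Fin m) F) =
      (((Φ p).2.1 : GL (Fin m) F) : Matrix (Fin m) (Fin m) F) * mon (Φ p).1.1 (Φ p).1.2 * (((Φ p).2.2 : GL (Fin m) F) : Matrix (Fin m) (Fin m) F) := by
    rintro ⟨⟨u, h⟩, hp⟩
    have h2 : (u * h * (h⁻¹ * u * h)⁻¹) = h := by group
    show (h : Matrix (Fin m) (Fin m) F) = ((u * (a h : GL (Fin m) F) : GL (Fin m) F) : Matrix (Fin m) (Fin m) F) * mon (σ h) (c h) *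
      (((b h : GL (Fin m) F) * (h⁻¹ * u * h)⁻¹ : GL (Fin m) F) : Matrix (Fin m) (Fin m) F)
    conv_lhs => rw [← h2]
    rw [Units.val_mul _ (h⁻¹ * u * h)⁻¹, Units.val_mul u h, Units.val_mul u, Units.val_mul (b h : GL (Fin m) F)]
    conv_lhs => rw [H h]
    simp only [Matrix.mul_assoc]
  have hinj : Function.Injective Φ := by
    intro p p' he
    have e1 : p.1.2 = p'.1.2 := by
      apply Units.ext
      rw [hrec p, hrec p', he]
    have e2 := congrArg (fun z => (z.2.1 : GL (Fin m) F)) he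
    have e2 : p.1.1 * (a p.1.2 : GL (Fin m) F) = p'.1.1 * (a p'.1.2 : GL (Fin m) F) := e2
    rw [e1] at e2
    exact Subtype.ext (Prod.ext (mul_right_cancel e2) e1)
  have hcard := Fintype.card_le_of_injective Φ hinj
  rw [Fintype.card_coe, Fintype.card_prod, Fintype.card_prod, Fintype.card_prod, Fintype.card_fun, Fintype.card_fun, Fintype.card_fin] at hcard
  calc (N.card : ℝ) ≤ _ := Nat.cast_le.mpr hcard
    _ = _ := by push_cast; ring

lemma card_G_ge (m : ℕ) : ((Fintype.card F : ℝ) ^ (m ^ 2)) ≤ 2 ^ m * (Fintype.card (GL (Fin m) F) : ℝ) := by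
  have h := Matrix.card_GL_field (𝔽 := F) m
  have hq : 2 ≤ Fintype.card F := Fintype.one_lt_card
  rw [Nat.card_eq_fintype_card] at h
  rw [h]
  have h2 : ∀ i : Fin m, Fintype.card F ^ m ≤ 2 * (Fintype.card F ^ m - Fintype.card F ^ i.val) := by
    intro i
    have : 2 * Fintype.card F ^ i.val ≤ Fintype.card F ^ m := by
      calc 2 * Fintype.card F ^ i.val ≤ Fintype.card F * Fintype.card F ^ i.val := Nat.mul_le_mul_right _ hq
        _ = Fintype.card F ^ (i.val + 1) := by rw [pow_succ]; ring
        _ ≤ _ := Nat.pow_le_pow_right (by omega) (by omega)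
    omega
  have h3 := Finset.prod_le_prod' (s := Finset.univ) (fun i _ => h2 i)
  rw [Finset.prod_const, Finset.prod_mul_distrib, Finset.prod_const, Finset.card_univ, Fintype.card_fin, ← pow_mul, ← pow_two] at h3
  exact_mod_cast h3

/-- the key estimate for the Kloosterman type sums -/
lemma kl_bound {ψ : AddChar F ℂ} (hψ : ψ ≠ 1) (n : ℕ) (hn : 0 < n) :
    ‖kl ψ n 1‖ ^ (2 * (n + 1)) ≤ (2 ^ (n + 1) * ((n : ℝ) + 1) ^ (n + 1) * (2 * n)) * (Fintype.card F : ℝ) ^ ((n + 1) * n) / ((Fintype.card F : ℝ) - 1) := by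
  set q : ℝ := (Fintype.card F : ℝ) with hq
  have hq1 : 1 < q := by
    have : 1 < Fintype.card F := Fintype.one_lt_card
    rw [hq]; exact_mod_cast this
  have hq0 : 0 < q := by linarith
  have hqm : 0 < q - 1 := by linarith
  have h1 := CS_bound hψ (m := n + 1) n
  have h2 := K_upper hψ n hn 1
  have h3 := EE_count (F := F) (m := n + 1)
  have h4 := card_G_ge (F := F) (n + 1)
  have h5 := card_U hψ (n + 1)
  rw [EE_sq] at h1
  change Qd 1 (KK ψ (m := n + 1) n) ≤ _ at h2
  rw [← hq] at h2 h3 h4 h5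
  simp only [Nat.add_sub_cancel] at h5
  rw [h5] at h3
  set G : ℝ := (Fintype.card (GL (Fin (n + 1)) F) : ℝ) with hG
  set U : ℝ := (Fintype.card (UU (m := n + 1) F 0) : ℝ) with hU
  set k := ‖kl ψ n 1‖ with hk
  have hG0 : 0 < G := by rw [hG]; exact_mod_cast Fintype.card_pos
  have hA : G * (q ^ ((n + 1) * n)) ^ n * k ^ (2 * (n + 1)) ≤
      (q ^ ((n + 1) ^ 2)) ^ n * (2 * n / (q - 1)) * (((n + 1 : ℕ) : ℝ) ^ (n + 1) * q ^ (n + 1) * q ^ ((n + 1) * n)) := by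
    have h6 : G * (G * (q ^ ((n + 1) * n)) ^ n * k ^ (2 * (n + 1))) ≤ G * ((q ^ ((n + 1) ^ 2)) ^ n * (2 * n / (q - 1)) * (((n + 1 : ℕ) : ℝ) ^ (n + 1) * q ^ (n + 1) * q ^ ((n + 1) * n))) := by
      calc G * (G * (q ^ ((n + 1) * n)) ^ n * k ^ (2 * (n + 1))) = (G * (U ^ n * k ^ (n + 1))) ^ 2 := by
            rw [← h5]; ring
        _ ≤ _ := h1
        _ ≤ (q ^ ((n + 1) ^ 2)) ^ n * (2 * n / (q - 1)) * (G * (((n + 1 : ℕ) : ℝ) ^ (n + 1) * q ^ (n + 1) * q ^ ((n + 1) * n))) := by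
            have hE : 0 ≤ ∑ g : GL (Fin (n + 1)) F, if g ∈ UU (m := n + 1) F 0 then EE g else 0 := by
              refine Finset.sum_nonneg fun g _ => ?_
              split_ifs
              · unfold EE
                exact Finset.sum_nonneg fun h _ => by split_ifs <;> norm_num
              · exact le_rfl
            apply mul_le_mul h2 (mul_le_mul_of_nonneg_left h3 hG0.le) (mul_nonneg hG0.le hE)
            positivity
        _ = _ := by ring
    exact le_of_mul_le_mul_left h6 hG0
  rw [le_div_iff₀ hqm]
  have hP : 0 < q ^ ((n + 1) ^ 2) * (q ^ ((n + 1) * n)) ^ n := by positivity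
  apply le_of_mul_le_mul_left _ hP
  calc q ^ ((n + 1) ^ 2) * (q ^ ((n + 1) * n)) ^ n * (k ^ (2 * (n + 1)) * (q - 1))
      ≤ (2 ^ (n + 1) * G) * (q ^ ((n + 1) * n)) ^ n * (k ^ (2 * (n + 1)) * (q - 1)) := by gcongr
    _ = 2 ^ (n + 1) * (q - 1) * (G * (q ^ ((n + 1) * n)) ^ n * k ^ (2 * (n + 1))) := by ring
    _ ≤ 2 ^ (n + 1) * (q - 1) * ((q ^ ((n + 1) ^ 2)) ^ n * (2 * n / (q - 1)) * (((n + 1 : ℕ) : ℝ) ^ (n + 1) * q ^ (n + 1) * q ^ ((n + 1) * n))) := by gcongr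
    _ = (2 ^ (n + 1) * ((n : ℝ) + 1) ^ (n + 1) * (2 * n)) * ((q ^ ((n + 1) ^ 2)) ^ n * q ^ (n + 1) * q ^ ((n + 1) * n)) := by
        push_cast; field_simp
    _ = _ := by
        have : (q ^ ((n + 1) ^ 2)) ^ n * q ^ (n + 1) * q ^ ((n + 1) * n) = q ^ ((n + 1) ^ 2) * (q ^ ((n + 1) * n)) ^ n * q ^ ((n + 1) * n) := by
          simp only [← pow_mul, ← pow_add]
          congr 1; ring
        rw [this]; ring


lemma gauss_pow (ψ : AddChar F ℂ) (χ : Fˣ →* ℂˣ) (n : ℕ) :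
    ∑ a : Fˣ, kl ψ n a * (χ a : ℂ) = gaussSum' ψ χ ^ n := by
  induction n with
  | zero => simp [kl]
  | succ n ih =>
    simp only [kl]
    rw [pow_succ, ← ih, Finset.sum_mul]
    simp_rw [Finset.sum_mul]
    rw [Finset.sum_comm]
    refine Finset.sum_congr rfl fun t _ => ?_
    unfold gaussSum'
    rw [Finset.mul_sum, ← Equiv.sum_comp (Equiv.mulRight t)]
    refine Finset.sum_congr rfl fun x _ => ?_
    simp only [Equiv.coe_mulRight, mul_inv_cancel_right, map_mul, Units.val_mul]
    ring

lemma card_chars : Fintype.card (Fˣ →* ℂˣ) = Fintype.card F - 1 := by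
  have : NeZero (Monoid.exponent Fˣ) := ⟨Monoid.exponent_ne_zero_of_finite⟩
  have h := CommGroup.card_monoidHom_of_hasEnoughRootsOfUnity Fˣ ℂ
  rw [Nat.card_eq_fintype_card, Nat.card_eq_fintype_card] at h
  rw [h, Fintype.card_units]

lemma char_orth (a : Fˣ) : ∑ χ : Fˣ →* ℂˣ, (χ a : ℂ) = if a = 1 then ((Fintype.card F : ℂ) - 1) else 0 := by
  split_ifs with h
  · subst h
    have h1 : 1 ≤ Fintype.card F := Fintype.card_pos
    simp [card_chars, Nat.cast_sub h1]
  · have : NeZero (Monoid.exponent Fˣ) := ⟨Monoid.exponent_ne_zero_of_finite⟩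
    obtain ⟨χ₀, h0⟩ := CommGroup.exists_apply_ne_one_of_hasEnoughRootsOfUnity Fˣ ℂ h
    have h1 : ∑ χ : Fˣ →* ℂˣ, (χ a : ℂ) = (χ₀ a : ℂ) * ∑ χ : Fˣ →* ℂˣ, (χ a : ℂ) := by
      conv_lhs => rw [← Equiv.sum_comp (Equiv.mulLeft χ₀)]
      rw [Finset.mul_sum]
      refine Finset.sum_congr rfl fun χ _ => ?_
      simp
    have h2 : ((χ₀ a : ℂ) - 1) * ∑ χ : Fˣ →* ℂˣ, (χ a : ℂ) = 0 := by
      rw [sub_mul, one_mul, ← h1, sub_self]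
    rcases mul_eq_zero.mp h2 with h3 | h3
    · exfalso; apply h0; apply Units.ext; simpa [sub_eq_zero] using h3
    · exact h3

lemma gauss_moment (ψ : AddChar F ℂ) (n : ℕ) :
    ∑ χ : Fˣ →* ℂˣ, gaussSum' ψ χ ^ n = ((Fintype.card F : ℂ) - 1) * kl ψ n 1 := by
  simp_rw [← gauss_pow]
  rw [Finset.sum_comm]
  simp_rw [← Finset.mul_sum, char_orth]
  simp [mul_comm]

lemma gauss_eq (ψ : AddChar F ℂ) (χ : Fˣ →* ℂˣ) : gaussSum' ψ χ = gaussSum (MulChar.ofUnitHom χ) ψ := by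
  unfold gaussSum' gaussSum
  symm
  rw [← Finset.sum_subset (Finset.subset_univ (Finset.univ.filter fun x : F => x ≠ 0))]
  · symm
    refine Finset.sum_bij (fun x _ => (x : F)) ?_ ?_ ?_ ?_
    · intro x _; simp
    · intro x _ y _ h; exact Units.ext h
    · intro x hx
      exact ⟨Units.mk0 x (by simpa using hx), by simp, rfl⟩
    · intro x _
      rw [MulChar.ofUnitHom_coe, mul_comm]
  · intro x _ hx
    have : x = 0 := by simpa using hx
    rw [this, MulChar.map_zero, zero_mul]

lemma gauss_one {ψ : AddChar F ℂ} (hψ : ψ ≠ 1) : gaussSum' ψ 1 = -1 := by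
  have : MulChar.ofUnitHom (1 : Fˣ →* ℂˣ) = (1 : MulChar F ℂ) := by
    ext x; simp
  rw [gauss_eq, this, gaussSum_one_left hψ]

lemma gauss_norm {ψ : AddChar F ℂ} (hψ : ψ ≠ 1) {χ : Fˣ →* ℂˣ} (hχ : χ ≠ 1) :
    ‖gaussSum' ψ χ‖ = Real.sqrt (Fintype.card F) := by
  have h1 : MulChar.ofUnitHom χ ≠ (1 : MulChar F ℂ) := by
    intro h
    apply hχ
    ext x
    have := congrArg (fun z : MulChar F ℂ => z (x : F)) h
    simpa using this
  have h := gaussSum_mul_gaussSum_eq_card h1 (AddChar.IsPrimitive.of_ne_one hψ)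
  rw [← star_gaussSum_eq, ← gauss_eq] at h
  have h2 : ((‖gaussSum' ψ χ‖ ^ 2 : ℝ) : ℂ) = (Fintype.card F : ℝ) := by
    rw [← Complex.normSq_eq_norm_sq, ← Complex.mul_conj]
    push_cast
    exact h
  have h3 : ‖gaussSum' ψ χ‖ ^ 2 = (Fintype.card F : ℝ) := by exact_mod_cast h2
  rw [← h3, Real.sqrt_sq (norm_nonneg _)]

lemma moment_bound (n : ℕ) (hn : 0 < n) (ε : ℝ) (hε : 0 < ε) :
    ∃ Q : ℕ, ∀ (F : Type) [Field F] [Fintype F],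
      Q ≤ Fintype.card F → 2 < Fintype.card F → ∀ ψ : AddChar F ℂ, ψ ≠ 1 →
      ‖(1 / ((Fintype.card F : ℂ) - 2)) *
          (∑ χ ∈ Finset.univ.filter (fun χ : Fˣ →* ℂˣ => χ ≠ 1),
            (gaussSum' ψ χ / ((Real.sqrt (Fintype.card F) : ℝ) : ℂ)) ^ n)‖ < ε := by
  set C : ℝ := (2 ^ (n + 1) * ((n : ℝ) + 1) ^ (n + 1) * (2 * n)) with hC
  have hC0 : 0 ≤ C := by positivity
  set δ : ℝ := ε / 4 with hδ
  have hδ0 : 0 < δ := by positivity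
  obtain ⟨Q1, hQ1⟩ := exists_nat_gt (C / δ ^ (2 * (n + 1)) + 1)
  obtain ⟨Q2, hQ2⟩ := exists_nat_gt (2 / ε + 2)
  refine ⟨max Q1 Q2, ?_⟩
  intro F _ _ hQ h2 ψ hψ
  set q : ℝ := (Fintype.card F : ℝ) with hq
  have hq1 : C / δ ^ (2 * (n + 1)) + 1 < q := hQ1.trans_le (by rw [hq]; exact_mod_cast (le_max_left _ _).trans hQ)
  have hq2 : 2 / ε + 2 < q := hQ2.trans_le (by rw [hq]; exact_mod_cast (le_max_right _ _).trans hQ)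
  have hq3 : 3 ≤ q := by rw [hq]; exact_mod_cast h2
  have hqc : ((Fintype.card F : ℂ)) = (q : ℂ) := by rw [hq]; simp
  set s : ℝ := Real.sqrt q with hs
  have hs0 : 0 < s := Real.sqrt_pos.mpr (by linarith)
  have hs1 : 1 ≤ s := Real.one_le_sqrt.mpr (by linarith)
  have hss : s ^ 2 = q := Real.sq_sqrt (by linarith)
  set z : ℝ := ‖kl ψ n 1‖ / s ^ n with hz
  have hz0 : 0 ≤ z := by positivity
  have hzb : z ≤ δ := by
    have h := kl_bound hψ n hn
    rw [← hC, ← hq] at h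
    have h4 : z ^ (2 * (n + 1)) ≤ δ ^ (2 * (n + 1)) := by
      have e : (s ^ n) ^ (2 * (n + 1)) = q ^ ((n + 1) * n) := by
        rw [← hss, ← pow_mul, ← pow_mul]; congr 1; ring
      rw [hz, div_pow, e, div_le_iff₀ (by positivity)]
      refine h.trans ?_
      rw [div_le_iff₀ (by linarith)]
      have : C ≤ δ ^ (2 * (n + 1)) * (q - 1) := by
        rw [← div_le_iff₀' (by positivity)]; linarith
      calc C * q ^ ((n + 1) * n) ≤ δ ^ (2 * (n + 1)) * (q - 1) * q ^ ((n + 1) * n) := by gcongr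
        _ = _ := by ring
    exact le_of_pow_le_pow_left₀ (by omega) hδ0.le h4
  have hsum : ∑ χ ∈ Finset.univ.filter (fun χ : Fˣ →* ℂˣ => χ ≠ 1), (gaussSum' ψ χ / (s : ℂ)) ^ n =
      (((q : ℂ) - 1) * kl ψ n 1 - (-1) ^ n) / (s : ℂ) ^ n := by
    have hf : (Finset.univ.filter (fun χ : Fˣ →* ℂˣ => χ ≠ 1)) = Finset.univ.erase 1 := by
      ext χ; simp
    rw [← hqc, ← gauss_moment, ← gauss_one hψ, hf]
    simp_rw [div_pow]
    rw [← Finset.sum_div, Finset.sum_erase_eq_sub (Finset.mem_univ _)]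
  rw [hqc, hsum, norm_mul, norm_div, norm_div, norm_one]
  have e1 : ‖(q : ℂ) - 2‖ = q - 2 := by
    have : (q : ℂ) - 2 = ((q - 2 : ℝ) : ℂ) := by push_cast; rfl
    rw [this, Complex.norm_real, Real.norm_of_nonneg (by linarith)]
  have e2 : ‖((q : ℂ) - 1) * kl ψ n 1 - (-1) ^ n‖ ≤ (q - 1) * ‖kl ψ n 1‖ + 1 := by
    refine (norm_sub_le _ _).trans ?_
    have : (q : ℂ) - 1 = ((q - 1 : ℝ) : ℂ) := by push_cast; rfl
    rw [norm_mul, this, Complex.norm_real, Real.norm_of_nonneg (by linarith), norm_pow, norm_neg, norm_one, one_pow]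
  have e3 : ‖(s : ℂ) ^ n‖ = s ^ n := by
    rw [norm_pow, Complex.norm_real, Real.norm_of_nonneg hs0.le]
  rw [e1, e3]
  have hsn : 1 ≤ s ^ n := one_le_pow₀ hs1
  calc 1 / (q - 2) * (‖((q : ℂ) - 1) * kl ψ n 1 - (-1) ^ n‖ / s ^ n)
      ≤ 1 / (q - 2) * (((q - 1) * ‖kl ψ n 1‖ + 1) / s ^ n) := by
        have : 0 < q - 2 := by linarith
        gcongr
    _ = 1 / (q - 2) * ((q - 1) * z + 1 / s ^ n) := by rw [hz]; ring
    _ ≤ 1 / (q - 2) * ((q - 1) * δ + 1) := by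
        have h5 : 0 < q - 2 := by linarith
        have h6 : 0 < q - 1 := by linarith
        have : 1 / s ^ n ≤ 1 := by rw [div_le_one (by linarith)]; exact hsn
        gcongr
    _ < ε := by
        have h5 : 0 < q - 2 := by linarith
        rw [one_div, inv_mul_lt_iff₀ h5]
        have h7 : 2 / ε < q - 2 := by linarith
        rw [div_lt_iff₀ hε] at h7
        rw [hδ]
        nlinarith


noncomputable def ww (ψ : AddChar F ℂ) (χ : Fˣ →* ℂˣ) : ℂ := gaussSum' ψ χ / ((Real.sqrt (Fintype.card F) : ℝ) : ℂ)

lemma ww_norm {ψ : AddChar F ℂ} (hψ : ψ ≠ 1) {χ : Fˣ →* ℂˣ} (hχ : χ ≠ 1) : ‖ww ψ χ‖ = 1 := by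
  have h : 0 < Real.sqrt (Fintype.card F) := Real.sqrt_pos.mpr (by exact_mod_cast Fintype.card_pos)
  unfold ww
  rw [norm_div, gauss_norm hψ hχ, Complex.norm_real, Real.norm_of_nonneg h.le, div_self h.ne']

lemma ww_exp {ψ : AddChar F ℂ} (hψ : ψ ≠ 1) {χ : Fˣ →* ℂˣ} (hχ : χ ≠ 1) :
    Complex.exp ((Complex.arg (ww ψ χ) : ℝ) * Complex.I) = ww ψ χ := by
  have h := Complex.norm_mul_exp_arg_mul_I (ww ψ χ)
  rwa [ww_norm hψ hχ, Complex.ofReal_one, one_mul] at h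

/-- the discrepancy functional -/
noncomputable def Lam (ψ : AddChar F ℂ) (p : ℝ → ℂ) : ℂ :=
  (1 / ((Fintype.card F : ℂ) - 2)) *
    (∑ χ ∈ Finset.univ.filter (fun χ : Fˣ →* ℂˣ => χ ≠ 1), p (Complex.arg (ww ψ χ))) -
        (1 / (2 * (Real.pi : ℂ))) * ∫ θ in (0:ℝ)..(2 * Real.pi), p θ

lemma card_nontriv : (Finset.univ.filter (fun χ : Fˣ →* ℂˣ => χ ≠ 1)).card = Fintype.card F - 2 := by
  have hf : (Finset.univ.filter (fun χ : Fˣ →* ℂˣ => χ ≠ 1)) = Finset.univ.erase 1 := by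
    ext χ; simp
  rw [hf, Finset.card_erase_of_mem (Finset.mem_univ _), Finset.card_univ, card_chars]
  omega

lemma Lam_add (ψ : AddChar F ℂ) {p r : ℝ → ℂ} (hp : Continuous p) (hr : Continuous r) :
    Lam ψ (fun x => p x + r x) = Lam ψ p + Lam ψ r := by
  unfold Lam
  rw [intervalIntegral.integral_add (hp.intervalIntegrable _ _) (hr.intervalIntegrable _ _), Finset.sum_add_distrib]
  ring

lemma Lam_smul (ψ : AddChar F ℂ) (c : ℂ) (p : ℝ → ℂ) :
    Lam ψ (fun x => c * p x) = c * Lam ψ p := by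
  unfold Lam
  rw [intervalIntegral.integral_const_mul, ← Finset.mul_sum]
  ring

lemma card_sub_two (h2 : 2 < Fintype.card F) : ((Fintype.card F : ℂ) - 2) = ((Fintype.card F - 2 : ℕ) : ℂ) := by
  rw [Nat.cast_sub h2.le]; simp

lemma Lam_bound (h2 : 2 < Fintype.card F) (ψ : AddChar F ℂ) (p : ℝ → ℂ) (B : ℝ) (hB : ∀ x, ‖p x‖ ≤ B) :
    ‖Lam ψ p‖ ≤ 2 * B := by
  unfold Lam
  have hpos : 0 < Fintype.card F - 2 := by omega
  have hpos' : (0:ℝ) < ((Fintype.card F - 2 : ℕ) : ℝ) := by exact_mod_cast hpos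
  rw [card_sub_two h2]
  have h3 : ‖∑ χ ∈ Finset.univ.filter (fun χ : Fˣ →* ℂˣ => χ ≠ 1), p (Complex.arg (ww ψ χ))‖ ≤ ((Fintype.card F - 2 : ℕ) : ℝ) * B := by
    refine (norm_sum_le_of_le _ (fun χ _ => hB _)).trans ?_
    rw [Finset.sum_const, card_nontriv, nsmul_eq_mul]
  have h4 : ‖∫ θ in (0:ℝ)..(2 * Real.pi), p θ‖ ≤ B * (2 * Real.pi) := by
    have := intervalIntegral.norm_integral_le_of_norm_le_const (a := 0) (b := 2 * Real.pi) (f := p) (C := B) (fun x _ => hB x)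
    rwa [sub_zero, abs_of_pos Real.two_pi_pos] at this
  refine (norm_sub_le _ _).trans ?_
  rw [norm_mul, norm_mul, two_mul B]
  apply add_le_add
  · rw [norm_div, norm_one, Complex.norm_natCast, one_div, inv_mul_le_iff₀ hpos']
    exact h3
  · have : ‖(1 / (2 * (Real.pi : ℂ)))‖ = 1 / (2 * Real.pi) := by
      rw [norm_div, norm_one, norm_mul, Complex.norm_real, Real.norm_of_nonneg Real.pi_pos.le]; simp
    rw [this, one_div, inv_mul_le_iff₀ Real.two_pi_pos]
    exact h4.trans (le_of_eq (mul_comm _ _))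

/-- good test functions -/
def Good (p : ℝ → ℂ) : Prop := ∀ ε : ℝ, 0 < ε → ∃ Q : ℕ, ∀ (F : Type) [Field F] [Fintype F],
      Q ≤ Fintype.card F → 2 < Fintype.card F → ∀ ψ : AddChar F ℂ, ψ ≠ 1 → ‖Lam ψ p‖ < ε

lemma Good_add {p r : ℝ → ℂ} (hp : Continuous p) (hr : Continuous r) (gp : Good p) (gr : Good r) :
    Good (fun x => p x + r x) := by
  intro ε hε
  obtain ⟨Q1, h1⟩ := gp (ε / 2) (by positivity)
  obtain ⟨Q2, h2⟩ := gr (ε / 2) (by positivity)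
  refine ⟨max Q1 Q2, fun F _ _ hQ h ψ hψ => ?_⟩
  rw [Lam_add ψ hp hr]
  have a1 := h1 F ((le_max_left _ _).trans hQ) h ψ hψ
  have a2 := h2 F ((le_max_right _ _).trans hQ) h ψ hψ
  have := norm_add_le (Lam ψ p) (Lam ψ r)
  linarith

lemma Good_smul (c : ℂ) {p : ℝ → ℂ} (gp : Good p) : Good (fun x => c * p x) := by
  intro ε hε
  obtain ⟨Q1, h1⟩ := gp (ε / (‖c‖ + 1)) (by positivity)
  refine ⟨Q1, fun F _ _ hQ h ψ hψ => ?_⟩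
  rw [Lam_smul, norm_mul]
  have a1 := h1 F hQ h ψ hψ
  rw [lt_div_iff₀ (by positivity)] at a1
  nlinarith [norm_nonneg (Lam ψ p), norm_nonneg c]

lemma Good_approx {f : ℝ → ℂ} (hf : Continuous f)
    (H : ∀ ε : ℝ, 0 < ε → ∃ p : ℝ → ℂ, Continuous p ∧ Good p ∧ ∀ x, ‖f x - p x‖ ≤ ε) : Good f := by
  intro ε hε
  obtain ⟨p, hp, gp, hb⟩ := H (ε / 4) (by positivity)
  obtain ⟨Q1, h1⟩ := gp (ε / 2) (by positivity)
  refine ⟨Q1, fun F _ _ hQ h ψ hψ => ?_⟩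
  have e : Lam ψ f = Lam ψ (fun x => f x - p x) + Lam ψ p := by
    have h3 := Lam_add ψ (p := fun x => f x - p x) (r := p) (hf.sub hp) hp
    rw [← h3]; simp
  have a1 := h1 F hQ h ψ hψ
  have a2 := Lam_bound h ψ (fun x => f x - p x) (ε / 4) hb
  rw [e]
  have := norm_add_le (Lam ψ (fun x => f x - p x)) (Lam ψ p)
  linarith

lemma Lam_star (ψ : AddChar F ℂ) (p : ℝ → ℂ) :
    Lam ψ (fun x => (starRingEnd ℂ) (p x)) = (starRingEnd ℂ) (Lam ψ p) := by
  unfold Lam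
  have h : (starRingEnd ℂ) (∫ θ in (0:ℝ)..(2 * Real.pi), p θ) = ∫ θ in (0:ℝ)..(2 * Real.pi), (starRingEnd ℂ) (p θ) := by
    rw [intervalIntegral.integral_of_le Real.two_pi_pos.le, intervalIntegral.integral_of_le Real.two_pi_pos.le]
    exact integral_conj.symm
  have h2 : (starRingEnd ℂ) 2 = 2 := Complex.conj_ofNat 2
  rw [map_sub, map_mul, map_mul, h, map_sum]
  simp [h2]

lemma int_exp (n : ℕ) (hn : 0 < n) : ∫ θ in (0:ℝ)..(2 * Real.pi), (Complex.exp (θ * Complex.I)) ^ n = 0 := by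
  have hc : (n : ℂ) * Complex.I ≠ 0 := mul_ne_zero (by exact_mod_cast hn.ne') Complex.I_ne_zero
  have h := integral_exp_mul_complex (a := 0) (b := 2 * Real.pi) hc
  have e : ∀ θ : ℝ, (Complex.exp (θ * Complex.I)) ^ n = Complex.exp ((n : ℂ) * Complex.I * θ) := by
    intro θ; rw [← Complex.exp_nat_mul]; congr 1; ring
  simp_rw [e]
  rw [h]
  have e2 : Complex.exp ((n : ℂ) * Complex.I * ((2 * Real.pi : ℝ) : ℂ)) = 1 := by
    rw [Complex.exp_eq_one_iff]
    exact ⟨n, by push_cast; ring⟩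
  rw [e2]; simp

lemma Good_pow (n : ℕ) (hn : 0 < n) : Good (fun θ => (Complex.exp (θ * Complex.I)) ^ n) := by
  intro ε hε
  obtain ⟨Q, hQ⟩ := moment_bound n hn ε hε
  refine ⟨Q, fun F _ _ hq h ψ hψ => ?_⟩
  have := hQ F hq h ψ hψ
  unfold Lam
  rw [int_exp n hn, mul_zero, sub_zero]
  have e : ∑ χ ∈ Finset.univ.filter (fun χ : Fˣ →* ℂˣ => χ ≠ 1), Complex.exp ((Complex.arg (ww ψ χ) : ℝ) * Complex.I) ^ n =
      ∑ χ ∈ Finset.univ.filter (fun χ : Fˣ →* ℂˣ => χ ≠ 1), (gaussSum' ψ χ / ((Real.sqrt (Fintype.card F) : ℝ) : ℂ)) ^ n := by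
    refine Finset.sum_congr rfl fun χ hχ => ?_
    rw [ww_exp hψ (Finset.mem_filter.mp hχ).2]; rfl
  rw [e]
  exact this

lemma Good_one : Good (fun _ => 1) := by
  intro ε hε
  refine ⟨0, fun F _ _ _ h ψ hψ => ?_⟩
  have : Lam ψ (fun _ => 1) = 0 := by
    unfold Lam
    have hpos : 0 < Fintype.card F - 2 := by omega
    have hpos' : ((Fintype.card F - 2 : ℕ) : ℂ) ≠ 0 := by exact_mod_cast hpos.ne'
    have hpi : (Real.pi : ℂ) ≠ 0 := by exact_mod_cast Real.pi_ne_zero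
    rw [Finset.sum_const, card_nontriv, card_sub_two h, nsmul_eq_mul, intervalIntegral.integral_const]
    simp only [sub_zero, Complex.real_smul]
    push_cast
    field_simp
    simp
  rw [this, norm_zero]; exact hε

lemma Good_fourier (n : ℤ) : Good (fun θ => fourier n ((θ : ℝ) : AddCircle (2 * Real.pi))) := by
  have hpi : (Real.pi : ℂ) ≠ 0 := by exact_mod_cast Real.pi_ne_zero
  have key : ∀ k : ℕ, (fun θ : ℝ => fourier (k : ℤ) (θ : AddCircle (2 * Real.pi))) = fun θ : ℝ => (Complex.exp (θ * Complex.I)) ^ k := by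
    intro k; funext θ
    rw [fourier_coe_apply, ← Complex.exp_nat_mul]
    congr 1
    push_cast
    field_simp
  have pos : ∀ k : ℕ, Good (fun θ => fourier (k : ℤ) ((θ : ℝ) : AddCircle (2 * Real.pi))) := by
    intro k
    rw [key]
    rcases Nat.eq_zero_or_pos k with h | h
    · subst h; simpa using Good_one
    · exact Good_pow k h
  rcases Int.eq_nat_or_neg n with ⟨k, h | h⟩
  · rw [h]; exact pos k
  · rw [h]
    simp_rw [fourier_neg]
    intro ε hε
    obtain ⟨Q, hQ⟩ := pos k ε hε
    refine ⟨Q, fun F _ _ hq h ψ hψ => ?_⟩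
    rw [Lam_star ψ (fun θ => fourier (k : ℤ) ((θ : ℝ) : AddCircle (2 * Real.pi))), RCLike.norm_conj]
    exact hQ F hq h ψ hψ

lemma Good_all (f : ℂ → ℂ) (hf : Continuous f) : Good (fun θ => f (Complex.exp (θ * Complex.I))) := by
  have : Fact (0 < 2 * Real.pi) := ⟨Real.two_pi_pos⟩
  have hcont : ∀ p : C(AddCircle (2 * Real.pi), ℂ), Continuous (fun θ : ℝ => p (θ : AddCircle (2 * Real.pi))) :=
    fun p => p.continuous.comp (AddCircle.continuous_mk' _)
  have hspan : ∀ p ∈ Submodule.span ℂ (Set.range (@fourier (2 * Real.pi))), Good (fun θ => p ((θ : ℝ) : AddCircle (2 * Real.pi))) := by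
    intro p hp
    induction hp using Submodule.span_induction with
    | mem x hx => obtain ⟨n, rfl⟩ := hx; exact Good_fourier n
    | zero => simpa using Good_smul 0 Good_one
    | add x y _ _ hx hy => exact Good_add (hcont x) (hcont y) hx hy
    | smul c x _ hx => exact Good_smul c hx
  refine Good_approx (by fun_prop) ?_
  intro ε hε
  let h : C(AddCircle (2 * Real.pi), ℂ) := ⟨fun x => f (AddCircle.toCircle x : ℂ), hf.comp (continuous_subtype_val.comp AddCircle.continuous_toCircle)⟩
  have hmem : h ∈ (Submodule.span ℂ (Set.range (@fourier (2 * Real.pi)))).topologicalClosure := by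
    rw [span_fourier_closure_eq_top]; trivial
  have hmem2 : h ∈ closure (Submodule.span ℂ (Set.range (@fourier (2 * Real.pi))) : Set C(AddCircle (2 * Real.pi), ℂ)) := hmem
  obtain ⟨p, hp, hd⟩ := Metric.mem_closure_iff.mp hmem2 ε hε
  refine ⟨fun θ => p (θ : AddCircle (2 * Real.pi)), hcont p, hspan p hp, fun x => ?_⟩
  have e : f (Complex.exp (x * Complex.I)) = h (x : AddCircle (2 * Real.pi)) := by
    show _ = f (AddCircle.toCircle (x : AddCircle (2 * Real.pi)) : ℂ)
    rw [AddCircle.toCircle_apply_mk, div_self Real.two_pi_pos.ne', one_mul, Circle.coe_exp]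
  rw [e, ← ContinuousMap.sub_apply]
  refine ((h - p).norm_coe_le_norm _).trans ?_
  rw [← dist_eq_norm]
  exact hd.le


end GS

/-- **Equidistribution of Gauss sum angles (Deligne).** For every continuous `f : S¹ → ℂ`
and `ε > 0` there is `Q` such that for all finite fields `F` with `q ≥ Q` elements (`q > 2`)
and every nontrivial additive character `ψ`, the average of `f (g(ψ,χ)/√q)` over nontrivial
multiplicative characters `χ` is within `ε` of `(1/2π) ∫₀^{2π} f(e^{iθ}) dθ`. -/
theorem gauss_sum_angles_equidistributed
    (f : ℂ → ℂ) (hf : Continuous f) (ε : ℝ) (hε : 0 < ε) :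
    ∃ Q : ℕ, ∀ (F : Type) [Field F] [Fintype F],
      Q ≤ Fintype.card F → 2 < Fintype.card F →
      ∀ ψ : AddChar F ℂ, ψ ≠ 1 →
      ‖(1 / ((Fintype.card F : ℂ) - 2)) *
          (∑ χ ∈ Finset.univ.filter (fun χ : Fˣ →* ℂˣ => χ ≠ 1),
            f (gaussSum' ψ χ / ((Real.sqrt (Fintype.card F) : ℝ) : ℂ))) -
        (1 / (2 * (Real.pi : ℂ))) *
          ∫ θ in (0:ℝ)..(2 * Real.pi), f (Complex.exp (θ * Complex.I))‖ < ε := by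
  obtain ⟨Q, hQ⟩ := GS.Good_all f hf ε hε
  refine ⟨Q, fun F _ _ hq h ψ hψ => ?_⟩
  have := hQ F hq h ψ hψ
  unfold GS.Lam at this
  have e : ∑ χ ∈ Finset.univ.filter (fun χ : Fˣ →* ℂˣ => χ ≠ 1),
      f (Complex.exp ((Complex.arg (GS.ww ψ χ) : ℝ) * Complex.I)) =
      ∑ χ ∈ Finset.univ.filter (fun χ : Fˣ →* ℂˣ => χ ≠ 1),
        f (gaussSum' ψ χ / ((Real.sqrt (Fintype.card F) : ℝ) : ℂ)) := by
    refine Finset.sum_congr rfl fun χ hχ => ?_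
    rw [GS.ww_exp hψ (Finset.mem_filter.mp hχ).2]; rfl
  rw [e] at this
  exact this
end

section
/- Weil's bound for Kloosterman sums: For every finite field F_q with q elements, every nontrivial additive character ψ : (F_q,+) → ℂˣ and every a ∈ F_q^×, one has |Kl_2(a, q)| ≤ 2√q. -/
open Finset
open scoped Classical

/-- The Kloosterman sum `Kl_2(a, q) = ∑_{x ∈ F_q^×} ψ(x + a x⁻¹)`. -/
noncomputable def Kl2 {F : Type*} [Field F] [Fintype F]
    (ψ : AddChar F ℂ) (a : Fˣ) : ℂ :=
  ∑ x : Fˣ, ψ ((x : F) + (a : F) * (x : F)⁻¹)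

set_option linter.unusedSectionVars false

namespace Weil
open Polynomial

lemma exists_frob (F K : Type*) [Field F] [Fintype F] [Field K] [Algebra F K] (i : ℕ) :
    ∃ φ : K →ₐ[F] K, ∀ x, φ x = x ^ (Fintype.card F ^ i) := by
  refine ⟨(FiniteField.frobeniusAlgHom F K) ^ i, fun x => ?_⟩
  induction i with
  | zero => simp
  | succ n ih =>
    rw [pow_succ', AlgHom.mul_apply, ih]
    simp [pow_succ, pow_mul]

section Stepanov
variable {F : Type*} [Field F] [Fintype F]

noncomputable def stB (a : F) (k : ℕ) : F[X] :=
  ∑ i ∈ range (k+1), (X ^ (Fintype.card F ^ k + Fintype.card F ^ i)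
    + C a * X ^ (Fintype.card F ^ k - Fintype.card F ^ i))

lemma stB_eq (a : F) (k : ℕ) : ∃ r : F[X], r.degree < ((2 * Fintype.card F ^ k : ℕ) : WithBot ℕ) ∧
    stB a k = X ^ (2 * Fintype.card F ^ k) + r := by
  have hq : 1 < Fintype.card F := Fintype.one_lt_card
  have hpos : 0 < Fintype.card F ^ k := by positivity
  refine ⟨∑ i ∈ range k, (X ^ (Fintype.card F ^ k + Fintype.card F ^ i)
    + C a * X ^ (Fintype.card F ^ k - Fintype.card F ^ i)) + C a, ?_, ?_⟩
  · rw [← Polynomial.mem_degreeLT]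
    have key : ∀ (c : F) (n : ℕ), n < 2 * Fintype.card F ^ k →
        C c * X ^ n ∈ degreeLT F (2 * Fintype.card F ^ k) := by
      intro c n hn
      rw [Polynomial.mem_degreeLT]
      exact lt_of_le_of_lt (degree_C_mul_X_pow_le _ _) (by exact_mod_cast hn)
    refine Submodule.add_mem _ (Submodule.sum_mem _ fun i hi => Submodule.add_mem _ ?_ ?_) ?_
    · have : Fintype.card F ^ i < Fintype.card F ^ k :=
        Nat.pow_lt_pow_right hq (mem_range.1 hi)
      simpa using key 1 _ (by omega : Fintype.card F ^ k + Fintype.card F ^ i < _)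
    · exact key _ _ (by omega)
    · simpa using key a 0 (by omega)
  · rw [stB, sum_range_succ]
    simp [two_mul]; ring

lemma stB_monic (a : F) (k : ℕ) : (stB a k).Monic := by
  obtain ⟨r, hr, h⟩ := stB_eq a k
  rw [h]; exact monic_X_pow_add hr

lemma stB_natDegree (a : F) (k : ℕ) : (stB a k).natDegree = 2 * Fintype.card F ^ k := by
  obtain ⟨r, hr, h⟩ := stB_eq a k
  have hpos : 0 < Fintype.card F ^ k := by have := Fintype.card_pos (α := F); positivity
  rw [h]; apply natDegree_eq_of_degree_eq_some
  rw [degree_add_eq_left_of_degree_lt]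
  · simp
  · rw [degree_X_pow]; exact hr

variable {K : Type*} [Field K] [Algebra F K]

lemma stB_aeval (a : F) (k : ℕ) (x : K) (hx : x ≠ 0) : aeval x (stB a k) =
   x ^ (Fintype.card F ^ k) * ∑ i ∈ range (k+1), (x + algebraMap F K a * x⁻¹) ^ (Fintype.card F ^ i) := by
  have hq : 1 < Fintype.card F := Fintype.one_lt_card
  rw [stB, map_sum, mul_sum]
  refine sum_congr rfl fun i hi => ?_
  obtain ⟨φ, hφ⟩ := exists_frob F K i
  have e : (x + algebraMap F K a * x⁻¹) ^ (Fintype.card F ^ i) = x ^ (Fintype.card F ^ i) + algebraMap F K a * (x ^ (Fintype.card F ^ i))⁻¹ := by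
    rw [← hφ, map_add, map_mul, map_inv₀, hφ, AlgHom.commutes]
  rw [e]
  have : Fintype.card F ^ i ≤ Fintype.card F ^ k :=
        Nat.pow_le_pow_right hq.le (by simpa [Nat.lt_succ_iff] using hi)
  simp only [map_add, map_mul, map_pow, aeval_X, aeval_C]
  rw [pow_add, pow_sub₀ _ hx this]; ring

/-- the auxiliary polynomials -/
noncomputable def stE (a : F) (k t : ℕ) : F[X] :=
  X ^ (t % Fintype.card F ^ k + (t / Fintype.card F ^ (k+1)) * Fintype.card F ^ (k+1)
    + Fintype.card F ^ k * (Fintype.card F - 1 - (t / Fintype.card F ^ k) % Fintype.card F)) *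
   stB a k ^ ((t / Fintype.card F ^ k) % Fintype.card F)

noncomputable def stH (a b : F) (k t : ℕ) : F[X] :=
  X ^ (Fintype.card F ^ (k+1) * (t % Fintype.card F ^ k) + t / Fintype.card F ^ (k+1)
    + Fintype.card F ^ k * (Fintype.card F - 1 - (t / Fintype.card F ^ k) % Fintype.card F)) *
   (C b * X ^ (Fintype.card F ^ k) - stB a k) ^ ((t / Fintype.card F ^ k) % Fintype.card F)

lemma stE_natDegree (a : F) (k t : ℕ) : (stE a k t).natDegree =
    t + Fintype.card F ^ k * (Fintype.card F - 1) := by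
  have hq : 1 < Fintype.card F := Fintype.one_lt_card
  rw [stE, Monic.natDegree_mul (monic_X_pow _) ((stB_monic _ _).pow _), natDegree_X_pow, natDegree_pow,
    stB_natDegree]
  have h1 := Nat.mod_add_div t (Fintype.card F ^ k)
  have h2 := Nat.mod_add_div (t / Fintype.card F ^ k) (Fintype.card F)
  have h3 := Nat.mod_lt (t / Fintype.card F ^ k) (by omega : Fintype.card F > 0)
  rw [Nat.div_div_eq_div_mul, ← pow_succ] at h2
  set j := (t / Fintype.card F ^ k) % Fintype.card F
  set i := t / Fintype.card F ^ (k+1)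
  obtain ⟨u, hu⟩ : ∃ u, Fintype.card F = 1 + j + u := ⟨Fintype.card F - 1 - j, by omega⟩
  have e1 : Fintype.card F - 1 - j = u := by omega
  have e2 : Fintype.card F - 1 = u + j := by omega
  rw [e1, e2, pow_succ]
  rw [← h2] at h1
  generalize Fintype.card F ^ k = m at *
  generalize t % m = l at *
  rw [← h1]; ring

lemma stE_monic (a : F) (k t : ℕ) : (stE a k t).Monic :=
  (monic_X_pow _).mul ((stB_monic _ _).pow _)

lemma stH_natDegree (a b : F) (k t : ℕ) (ht : t < (Fintype.card F ^ k + 2) * Fintype.card F ^ (k+1)) :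
    (stH a b k t).natDegree + 1 < (Fintype.card F ^ k + 2) * Fintype.card F ^ (k+1) := by
  have hq : 1 < Fintype.card F := Fintype.one_lt_card
  have hm : 0 < Fintype.card F ^ k := by positivity
  have hC : (C b * X ^ (Fintype.card F ^ k) - stB a k).natDegree ≤ 2 * Fintype.card F ^ k := by
    refine (natDegree_sub_le _ _).trans (max_le ((natDegree_C_mul_X_pow_le _ _).trans (by omega))
      (stB_natDegree a k).le)
  refine lt_of_le_of_lt (Nat.add_le_add_right natDegree_mul_le 1) ?_
  rw [natDegree_X_pow]
  refine lt_of_le_of_lt (Nat.add_le_add_right (Nat.add_le_add_left (natDegree_pow_le.trans (Nat.mul_le_mul_left _ hC)) _) 1) ?_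
  have h3 := Nat.mod_lt (t / Fintype.card F ^ k) (by omega : Fintype.card F > 0)
  have h4 := Nat.mod_lt t hm
  have h5 : t / Fintype.card F ^ (k+1) < Fintype.card F ^ k + 2 := by
    rw [Nat.div_lt_iff_lt_mul (by positivity)]; exact ht
  set j := (t / Fintype.card F ^ k) % Fintype.card F
  set i := t / Fintype.card F ^ (k+1)
  set l := t % Fintype.card F ^ k
  obtain ⟨u, hu⟩ : ∃ u, Fintype.card F = 1 + j + u := ⟨Fintype.card F - 1 - j, by omega⟩
  have e1 : Fintype.card F - 1 - j = u := by omega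
  rw [e1]
  have e3 : Fintype.card F ^ (k+1) = Fintype.card F ^ k * (1 + j + u) := by rw [pow_succ]; congr 1
  generalize Fintype.card F ^ (k+1) = M at *
  generalize Fintype.card F ^ k = m at *
  have : M * l + M ≤ M * m := by rw [← Nat.mul_succ]; exact Nat.mul_le_mul_left _ h4
  have : M ≥ 2 * m := by rw [e3, mul_comm 2]; exact Nat.mul_le_mul_left _ (by omega)
  nlinarith

lemma st_exists (a b : F) (k : ℕ) : ∃ c : Fin ((Fintype.card F ^ k + 2) * Fintype.card F ^ (k+1)) → F,
    c ≠ 0 ∧ ∑ t, c t • stH a b k t = 0 := by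
  set N := (Fintype.card F ^ k + 2) * Fintype.card F ^ (k+1)
  let L : (Fin N → F) →ₗ[F] F[X] := Fintype.linearCombination F (fun t : Fin N => stH a b k t)
  have hN : 1 ≤ N := by
    have hq : 1 < Fintype.card F := Fintype.one_lt_card
    have : 0 < N := by positivity
    omega
  have hL : ∀ c, L c ∈ degreeLT F (N - 1) := by
    intro c
    simp only [L, Fintype.linearCombination_apply]
    refine Submodule.sum_mem _ fun t _ => Submodule.smul_mem _ _ ?_
    rw [mem_degreeLT]
    refine lt_of_le_of_lt degree_le_natDegree ?_
    have := stH_natDegree a b k t t.2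
    norm_cast; omega
  have hk := LinearMap.ker_ne_bot_of_finrank_lt (f := L.codRestrict _ hL) (by
    rw [LinearEquiv.finrank_eq (degreeLTEquiv F (N-1))]; simp; omega)
  rw [LinearMap.ker_codRestrict] at hk
  obtain ⟨c, hc, h0⟩ := Submodule.exists_mem_ne_zero_of_ne_bot hk
  exact ⟨c, h0, by simpa [L, Fintype.linearCombination_apply] using hc⟩

lemma st_ne_zero (a : F) (k N : ℕ) (c : Fin N → F) (hc : c ≠ 0) : ∑ t, c t • stE a k t ≠ 0 := by
  obtain ⟨t, ht⟩ := Function.ne_iff.1 hc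
  have hne : ∀ t : Fin N, stE a k t ≠ 0 := fun t => (stE_monic a k t).ne_zero
  intro h
  have := degree_sum_eq_of_disjoint (fun t : Fin N => c t • stE a k t) univ (by
    rintro i ⟨-, hi⟩ j ⟨-, hj⟩ hij h
    have hi' : c i ≠ 0 := fun h => hi (by simp [h])
    have hj' : c j ≠ 0 := fun h => hj (by simp [h])
    simp only [Function.comp, smul_eq_C_mul, degree_C_mul hi', degree_C_mul hj'] at h
    have h := natDegree_eq_of_degree_eq h
    rw [stE_natDegree, stE_natDegree] at h
    exact hij (Fin.ext (by omega)))
  rw [h, degree_zero] at this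
  have h2 := Finset.le_sup (f := fun t : Fin N => degree (c t • stE a k t)) (mem_univ t)
  rw [← this, le_bot_iff, degree_eq_bot, smul_eq_zero] at h2
  exact h2.elim ht (hne t)

lemma st_key (a b : F) (k t : ℕ) (x : K) (hQ : x ^ (Fintype.card F ^ (k+1)) ^ 2 = x)
    (A : K) (hA : aeval x (stB a k) = x ^ (Fintype.card F ^ k) * A)
    (hAM : A ^ (Fintype.card F ^ (k+1)) = algebraMap F K b - A) :
    x ^ (Fintype.card F ^ k * (Fintype.card F - 1)) * (aeval x (stE a k t)) ^ (Fintype.card F ^ (k+1))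
      = (x ^ (Fintype.card F ^ k * (Fintype.card F - 1))) ^ (Fintype.card F ^ (k+1)) *
        aeval x (stH a b k t) := by
  have hq : 1 < Fintype.card F := Fintype.one_lt_card
  have h3 := Nat.mod_lt (t / Fintype.card F ^ k) (by omega : Fintype.card F > 0)
  rw [stE, stH]
  simp only [map_mul, map_pow, map_sub, aeval_X, aeval_C, hA]
  set j := (t / Fintype.card F ^ k) % Fintype.card F
  set i := t / Fintype.card F ^ (k+1)
  set l := t % Fintype.card F ^ k
  obtain ⟨u, hu⟩ : ∃ u, Fintype.card F = 1 + j + u := ⟨Fintype.card F - 1 - j, by omega⟩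
  have e1 : Fintype.card F - 1 - j = u := by omega
  have e2 : Fintype.card F - 1 = u + j := by omega
  rw [e1, e2]
  generalize Fintype.card F ^ (k+1) = M at *
  generalize Fintype.card F ^ k = m at *
  have e3 : algebraMap F K b * x ^ m - x ^ m * A = x ^ m * A ^ M := by rw [hAM]; ring
  rw [e3]
  have e4 : x ^ i = (x ^ M ^ 2) ^ i := by rw [hQ]
  have : x ^ (M * l + i + m * u) = x ^ (M * l) * (x ^ M ^ 2) ^ i * x ^ (m * u) := by
    rw [pow_add, pow_add, ← e4]
  rw [this]
  ring

theorem stepanov [Fintype K] (a b : F) (k : ℕ) (hK : Module.finrank F K = 2 * (k+1)) :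
    #{x : K | x ≠ 0 ∧ Algebra.trace F K (x + algebraMap F K a * x⁻¹) = b} ≤
      Fintype.card F ^ (2 * k + 1) + 4 * Fintype.card F ^ (k+1) := by
  have hq : 1 < Fintype.card F := Fintype.one_lt_card
  obtain ⟨N, hN, c, hc, hH⟩ : ∃ N, N = (Fintype.card F ^ k + 2) * Fintype.card F ^ (k+1) ∧
      ∃ c : Fin N → F, c ≠ 0 ∧ ∑ t, c t • stH a b k t = 0 := ⟨_, rfl, st_exists a b k⟩
  set G : F[X] := ∑ t, c t • stE a k t with hG
  have hG0 : G ≠ 0 := st_ne_zero a k N c hc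
  have hdeg : G.natDegree ≤ N + Fintype.card F ^ (k+1) := by
    refine natDegree_sum_le_of_forall_le _ _ fun t _ => (natDegree_smul_le _ _).trans ?_
    rw [stE_natDegree, pow_succ]
    exact Nat.add_le_add (t.2.le) (Nat.mul_le_mul_left _ (by omega))
  have hroot : ∀ x ∈ ({x : K | x ≠ 0 ∧ Algebra.trace F K (x + algebraMap F K a * x⁻¹) = b} : Finset K),
      x ∈ (G.map (algebraMap F K)).roots.toFinset := by
    intro x hx
    rw [mem_filter] at hx
    obtain ⟨-, hx, htr⟩ := hx
    rw [Multiset.mem_toFinset, mem_roots (by simpa using hG0), IsRoot, eval_map_algebraMap]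
    set A := ∑ i ∈ range (k+1), (x + algebraMap F K a * x⁻¹) ^ (Fintype.card F ^ i) with hAdef
    have hA := stB_aeval a k x hx
    have hQ : x ^ (Fintype.card F ^ (k+1)) ^ 2 = x := by
      rw [← pow_mul, mul_comm, ← hK, ← Module.card_eq_pow_finrank]
      exact FiniteField.pow_card x
    obtain ⟨φ, hφ⟩ := exists_frob F K (k+1)
    have hAM : A ^ (Fintype.card F ^ (k+1)) = algebraMap F K b - A := by
      rw [eq_sub_iff_add_eq', ← htr, FiniteField.algebraMap_trace_eq_sum_pow, hK, two_mul,
        sum_range_add, Nat.card_eq_fintype_card, ← hAdef, ← hφ, hAdef, map_sum]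
      congr 1
      refine sum_congr rfl fun i _ => ?_
      rw [hφ, ← pow_mul, ← pow_add, add_comm i]
    have hM : (aeval x G) ^ (Fintype.card F ^ (k+1)) = 0 := by
      have hne : x ^ (Fintype.card F ^ k * (Fintype.card F - 1)) ≠ 0 := pow_ne_zero _ hx
      have : x ^ (Fintype.card F ^ k * (Fintype.card F - 1)) * (aeval x G) ^ (Fintype.card F ^ (k+1)) =
        (x ^ (Fintype.card F ^ k * (Fintype.card F - 1))) ^ (Fintype.card F ^ (k+1)) *
        aeval x (∑ t, c t • stH a b k t) := by
        rw [← hφ, hG, map_sum, map_sum, map_sum, mul_sum, mul_sum]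
        refine sum_congr rfl fun t _ => ?_
        rw [map_smul, map_smul, map_smul, mul_smul_comm, mul_smul_comm, hφ, st_key a b k t x hQ A hA hAM]
      rw [hH, map_zero, mul_zero] at this
      exact (mul_eq_zero.1 this).resolve_left hne
    exact eq_zero_of_pow_eq_zero hM
  refine (card_le_card hroot).trans ((Multiset.toFinset_card_le _).trans ((card_roots' _).trans ?_))
  rw [natDegree_map]
  refine hdeg.trans ?_
  rw [hN]
  have : Fintype.card F ^ (2*k+1) = Fintype.card F ^ k * Fintype.card F ^ (k+1) := by
    rw [← pow_add]; congr 1; ring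
  rw [this]; nlinarith [Nat.zero_le (Fintype.card F ^ (k+1))]

end Stepanov
end Weil

namespace Weil
open Polynomial
section LFun
variable {F : Type*} [Field F] [Fintype F]

/-- The multiplicative weight on monic polynomials. -/
noncomputable def lam (ψ : AddChar F ℂ) (a : F) (f : F[X]) : ℂ :=
  if f.coeff 0 = 0 then 0 else ψ (-f.nextCoeff - a * (f.coeff 1 / f.coeff 0))

lemma lam_one (ψ : AddChar F ℂ) (a : F) : lam ψ a 1 = 1 := by
  have : (1 : F[X]).coeff 1 = 0 := by rw [coeff_one]; simp
  simp [lam, this, nextCoeff]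

lemma lam_mul (ψ : AddChar F ℂ) (a : F) {f g : F[X]} (hf : f.Monic) (hg : g.Monic) :
    lam ψ a (f * g) = lam ψ a f * lam ψ a g := by
  unfold lam
  rw [hf.nextCoeff_mul hg, mul_coeff_zero, mul_coeff_one]
  by_cases h1 : f.coeff 0 = 0
  · simp [h1]
  by_cases h2 : g.coeff 0 = 0
  · simp [h2]
  rw [if_neg h1, if_neg h2, if_neg (mul_ne_zero h1 h2), ← AddChar.map_add_eq_mul]
  congr 1
  field_simp
  ring

lemma lam_pow (ψ : AddChar F ℂ) (a : F) {f : F[X]} (hf : f.Monic) (n : ℕ) :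
    lam ψ a (f ^ n) = lam ψ a f ^ n := by
  induction n with
  | zero => simp [lam_one]
  | succ n ih => rw [pow_succ, lam_mul ψ a (hf.pow n) hf, ih, pow_succ]

/-- monic polynomials of degree `r` -/
noncomputable def mon (F : Type*) [Field F] [Fintype F] (r : ℕ) : Finset F[X] :=
  (univ : Finset (Fin r → F)).image (fun c => X ^ r + ∑ i : Fin r, C (c i) * X ^ (i : ℕ))

lemma mem_mon {r : ℕ} {f : F[X]} : f ∈ mon F r ↔ f.Monic ∧ f.natDegree = r := by
  rw [mon, mem_image]
  constructor
  · rintro ⟨c, -, rfl⟩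
    have hd : (∑ i : Fin r, C (c i) * X ^ (i : ℕ)).degree < (r : WithBot ℕ) := by
      rw [← mem_degreeLT]
      refine Submodule.sum_mem _ fun i _ => ?_
      rw [mem_degreeLT]
      exact lt_of_le_of_lt (degree_C_mul_X_pow_le _ _) (by exact_mod_cast i.2)
    refine ⟨monic_X_pow_add hd, ?_⟩
    apply natDegree_eq_of_degree_eq_some
    rw [degree_add_eq_left_of_degree_lt]
    · simp
    · rw [degree_X_pow]; exact hd
  · rintro ⟨hf, rfl⟩
    refine ⟨fun i => f.coeff i, mem_univ _, ?_⟩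
    conv_rhs => rw [hf.as_sum]
    rw [Fin.sum_univ_eq_sum_range (fun i => C (f.coeff i) * X ^ i)]

noncomputable def aS (ψ : AddChar F ℂ) (a : F) (r : ℕ) : ℂ := ∑ f ∈ mon F r, lam ψ a f

lemma aS_zero (ψ : AddChar F ℂ) (a : F) : aS ψ a 0 = 1 := by
  have : mon F 0 = {1} := by
    ext f; rw [mem_mon, mem_singleton]
    constructor
    · rintro ⟨h, h0⟩; exact h.natDegree_eq_zero.1 h0
    · rintro rfl; simp
  rw [aS, this, sum_singleton, lam_one]

lemma aS_one (ψ : AddChar F ℂ) (a : Fˣ) : aS ψ (a : F) 1 = ∑ x : Fˣ, ψ ((x : F) + (a : F) * (x : F)⁻¹) := by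
  symm
  rw [aS, ← sum_filter_of_ne (p := fun f : F[X] => f.coeff 0 ≠ 0) (by
    intro f _ h h0; exact h (by simp [lam, h0]))]
  refine sum_bij (fun x _ => X - C (x : F)) ?_ ?_ ?_ ?_
  · intro x _
    rw [mem_filter, mem_mon]
    exact ⟨⟨monic_X_sub_C _, natDegree_X_sub_C _⟩, by simp⟩
  · intro x _ y _ h
    have := congrArg (fun f => coeff f 0) h
    exact Units.ext (by simpa using this)
  · intro f hf
    rw [mem_filter, mem_mon] at hf
    obtain ⟨⟨hm, hd⟩, h0⟩ := hf
    refine ⟨Units.mk0 (-f.coeff 0) (by simpa using h0), mem_univ _, ?_⟩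
    conv_rhs => rw [hm.as_sum, hd]
    simp
  · intro x _
    simp [lam, nextCoeff]

lemma aS_two (ψ : AddChar F ℂ) (hψ : ψ ≠ 1) (a : Fˣ) : aS ψ (a : F) 2 = Fintype.card F := by
  have hprim := AddChar.IsPrimitive.of_ne_one hψ
  have h1 : aS ψ (a : F) 2 = ∑ c : F × F, if c.1 = 0 then 0 else ψ (c.2 * (-1 - a / c.1)) := by
    symm
    rw [aS]
    refine sum_bij (fun c _ => X ^ 2 + C c.2 * X + C c.1) ?_ ?_ ?_ ?_
    · intro c _
      rw [mem_mon]
      constructor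
      · monicity!
      · compute_degree!
    · intro c _ d _ h
      have h0 := congrArg (fun f => coeff f 0) h
      have h1 := congrArg (fun f => coeff f 1) h
      simp [coeff_X, coeff_C] at h0 h1
      exact Prod.ext h0 h1
    · intro f hf
      rw [mem_mon] at hf
      refine ⟨(f.coeff 0, f.coeff 1), mem_univ _, ?_⟩
      conv_rhs => rw [hf.1.as_sum, hf.2]
      simp [sum_range_succ]; ring
    · intro c _
      have hd : (X ^ 2 + C c.2 * X + C c.1 : F[X]).natDegree = 2 := by compute_degree!
      rw [lam, nextCoeff_of_natDegree_pos (by omega), hd]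
      simp [coeff_X, coeff_C]
      congr 2
      ring
  rw [h1, Fintype.sum_prod_type]
  have : ∀ x : F, (∑ y : F, if x = 0 then 0 else ψ (y * (-1 - a / x))) =
      if x = -(a : F) then (Fintype.card F : ℂ) else 0 := by
    intro x
    by_cases hx : x = 0
    · have : (0 : F) ≠ -(a : F) := by simp
      simp [hx, this]
    · simp only [if_neg hx]
      rw [AddChar.sum_mulShift _ hprim]
      have : (-1 - (a : F) / x = 0) ↔ x = -(a : F) := by
        field_simp
        constructor <;> intro h <;> linear_combination -h
      simp [this]
  simp [this]

lemma aS_ge (ψ : AddChar F ℂ) (hψ : ψ ≠ 1) (a : F) (r : ℕ) (hr : 3 ≤ r) : aS ψ a r = 0 := by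
  obtain ⟨s, hs⟩ := AddChar.ne_one_iff.1 hψ
  have h : aS ψ a r = ψ s * aS ψ a r := by
    conv_rhs => rw [aS, mul_sum]
    rw [aS]
    have hdeg : ∀ s : F, ∀ f ∈ mon F r, f + C s * X ^ (r-1) ∈ mon F r := by
      intro s f hf
      rw [mem_mon] at hf ⊢
      have : (C s * X ^ (r-1)).degree < f.degree := by
        rw [degree_eq_natDegree hf.1.ne_zero, hf.2]
        refine lt_of_le_of_lt (degree_C_mul_X_pow_le _ _) ?_
        norm_cast; omega
      exact ⟨hf.1.add_of_left this, by rw [natDegree_add_eq_left_of_degree_lt this, hf.2]⟩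
    refine sum_bij' (fun f _ => f + C s * X ^ (r-1)) (fun f _ => f + C (-s) * X ^ (r-1))
      (hdeg _) (hdeg _) (by intros; simp) (by intros; simp) ?_
    intro f hf
    have h2 := hdeg s f hf
    rw [mem_mon] at hf h2
    rw [lam, lam, nextCoeff_of_natDegree_pos (by omega), nextCoeff_of_natDegree_pos (by omega), hf.2, h2.2]
    have n0 : ¬ (r - 1 = 0) := by omega
    have n1 : ¬ (1 = r - 1) := by omega
    have n2 : ¬ (0 = r - 1) := by omega
    simp only [coeff_add, coeff_C_mul, coeff_X_pow, if_neg n1, if_neg n2, mul_zero, add_zero, if_true, mul_one]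
    split_ifs
    · simp
    · rw [← AddChar.map_add_eq_mul]; congr 1; ring
  have : (1 - ψ s) * aS ψ a r = 0 := by linear_combination h
  exact (mul_eq_zero.1 this).resolve_left (sub_ne_zero.2 (Ne.symm hs))

lemma sum_multiples (ψ : AddChar F ℂ) (a : F) (d : ℕ) (g : F[X]) (hg : g.Monic) (hd : g.natDegree ≤ d) :
    ∑ f ∈ mon F d, (if g ∣ f then lam ψ a f else 0) = lam ψ a g * aS ψ a (d - g.natDegree) := by
  rw [← sum_filter, aS, mul_sum]
  symm
  refine sum_bij (fun h _ => g * h) ?_ ?_ ?_ ?_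
  · intro h hh
    rw [mem_mon] at hh
    rw [mem_filter, mem_mon, hg.natDegree_mul hh.1]
    exact ⟨⟨hg.mul hh.1, by omega⟩, dvd_mul_right _ _⟩
  · intro h _ h' _ e
    exact mul_left_cancel₀ hg.ne_zero e
  · intro f hf
    rw [mem_filter, mem_mon] at hf
    obtain ⟨⟨hm, hdf⟩, h, rfl⟩ := hf
    have hh : h.Monic := hg.of_mul_monic_left hm
    rw [hg.natDegree_mul hh] at hdf
    exact ⟨h, by rw [mem_mon]; exact ⟨hh, by omega⟩, rfl⟩
  · intro h hh
    rw [mem_mon] at hh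
    rw [lam_mul ψ a hg hh.1]

/-- monic irreducibles whose degree divides `r` -/
noncomputable def irrD (F : Type*) [Field F] [Fintype F] (r : ℕ) : Finset F[X] :=
  {P ∈ (range (r+1)).biUnion (mon F) | Irreducible P ∧ P.natDegree ∣ r}

lemma mem_irrD {r : ℕ} (hr : 1 ≤ r) {P : F[X]} : P ∈ irrD F r ↔ P.Monic ∧ Irreducible P ∧ P.natDegree ∣ r := by
  simp only [irrD, mem_filter, mem_biUnion, mem_range, mem_mon]
  constructor
  · rintro ⟨⟨i, hi, h1, h2⟩, h3, h4⟩; exact ⟨h1, h3, h4⟩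
  · rintro ⟨h1, h3, h4⟩; exact ⟨⟨_, Nat.lt_succ_of_le (Nat.le_of_dvd hr h4), h1, rfl⟩, h3, h4⟩

noncomputable def sS (ψ : AddChar F ℂ) (a : F) (r : ℕ) : ℂ :=
  ∑ P ∈ irrD F r, (P.natDegree : ℂ) * lam ψ a P ^ (r / P.natDegree)

open UniqueFactorizationMonoid in
lemma mangoldt (d : ℕ) (f : F[X]) (hf : f.Monic) (hd : f.natDegree = d) :
    d = ∑ r ∈ Icc 1 d, ∑ P ∈ irrD F r, if P ^ (r / P.natDegree) ∣ f then P.natDegree else 0 := by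
  have hf0 := hf.ne_zero
  set s := normalizedFactors f with hs
  have hprod : s.prod = f := by
    rw [hs, prod_normalizedFactors_eq hf0, hf.normalize_eq_self]
  have hmon : ∀ P ∈ s, P.Monic := fun P hP =>
    by
    rw [← normalize_normalized_factor P hP]
    exact monic_normalize (irreducible_of_normalized_factor P hP).ne_zero
  have hirr : ∀ P ∈ s, Irreducible P := fun P hP => irreducible_of_normalized_factor P hP
  have h1 : d = ∑ P ∈ s.toFinset, s.count P * P.natDegree := by
    rw [← hd, ← hprod, natDegree_multiset_prod_of_monic _ hmon, Finset.sum_multiset_map_count]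
    simp
  have hpow : ∀ P : F[X], P.Monic → Irreducible P → ∀ e : ℕ, P ^ e ∣ f ↔ e ≤ s.count P := by
    intro P hP hi e
    rw [pow_dvd_iff_le_emultiplicity, emultiplicity_eq_count_normalizedFactors hi hf0, hP.normalize_eq_self]
    norm_cast
  have h2 : ∀ r ∈ Icc 1 d, (∑ P ∈ irrD F r, if P ^ (r / P.natDegree) ∣ f then P.natDegree else 0) =
      ∑ P ∈ s.toFinset, if P.natDegree ∣ r ∧ r / P.natDegree ≤ s.count P then P.natDegree else 0 := by
    intro r hr
    rw [mem_Icc] at hr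
    rw [← sum_filter, ← sum_filter]
    refine sum_congr ?_ fun _ _ => rfl
    ext P
    rw [mem_filter, mem_filter, mem_irrD hr.1, Multiset.mem_toFinset]
    constructor
    · rintro ⟨⟨hm, hi, hdv⟩, hp⟩
      rw [hpow P hm hi] at hp
      have : 0 < r / P.natDegree := Nat.div_pos (Nat.le_of_dvd hr.1 hdv) hi.natDegree_pos
      exact ⟨Multiset.count_pos.1 (by omega), hdv, hp⟩
    · rintro ⟨hP, hdv, hc⟩
      exact ⟨⟨hmon P hP, hirr P hP, hdv⟩, (hpow P (hmon P hP) (hirr P hP) _).2 hc⟩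
  rw [sum_congr rfl h2, sum_comm]
  conv_lhs => rw [h1]
  refine sum_congr rfl fun P hP => ?_
  rw [Multiset.mem_toFinset] at hP
  have hδ : 0 < P.natDegree := (hirr P hP).natDegree_pos
  rw [← sum_filter, sum_const, smul_eq_mul]
  congr 1
  have hle : s.count P * P.natDegree ≤ d := by
    have := natDegree_le_of_dvd ((hpow P (hmon P hP) (hirr P hP) _).2 le_rfl) hf0
    rwa [natDegree_pow, hd] at this
  have : {r ∈ Icc 1 d | P.natDegree ∣ r ∧ r / P.natDegree ≤ s.count P} =
      (Icc 1 (s.count P)).image (fun e => e * P.natDegree) := by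
    ext r
    simp only [mem_filter, mem_image, mem_Icc]
    constructor
    · rintro ⟨⟨h1, h2⟩, hdv, hc⟩
      exact ⟨r / P.natDegree, ⟨Nat.div_pos (Nat.le_of_dvd h1 hdv) hδ, hc⟩, Nat.div_mul_cancel hdv⟩
    · rintro ⟨e, ⟨he1, he2⟩, rfl⟩
      refine ⟨⟨Nat.mul_pos he1 hδ, (Nat.mul_le_mul_right _ he2).trans hle⟩, dvd_mul_left _ _, ?_⟩
      rwa [Nat.mul_div_cancel _ hδ]
  rw [this, card_image_of_injective _ (fun x y h => Nat.eq_of_mul_eq_mul_right hδ h)]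
  simp

lemma recurrence (ψ : AddChar F ℂ) (a : F) (d : ℕ) :
    (d : ℂ) * aS ψ a d = ∑ r ∈ Icc 1 d, sS ψ a r * aS ψ a (d - r) := by
  have h1 : (d : ℂ) * aS ψ a d = ∑ f ∈ mon F d, ∑ r ∈ Icc 1 d, ∑ P ∈ irrD F r,
      (P.natDegree : ℂ) * (if P ^ (r / P.natDegree) ∣ f then lam ψ a f else 0) := by
    rw [aS, mul_sum]
    refine sum_congr rfl fun f hf => ?_
    rw [mem_mon] at hf
    have := congrArg (Nat.cast : ℕ → ℂ) (mangoldt d f hf.1 hf.2)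
    rw [this]
    push_cast
    rw [sum_mul]
    refine sum_congr rfl fun r _ => ?_
    rw [sum_mul]
    refine sum_congr rfl fun P _ => ?_
    split_ifs <;> simp
  rw [h1, sum_comm]
  refine sum_congr rfl fun r hr => ?_
  rw [mem_Icc] at hr
  rw [sum_comm, sS, sum_mul]
  refine sum_congr rfl fun P hP => ?_
  rw [mem_irrD hr.1] at hP
  have hdeg : (P ^ (r / P.natDegree)).natDegree = r := by
    rw [natDegree_pow, Nat.div_mul_cancel hP.2.2]
  rw [← mul_sum, sum_multiples ψ a d _ (hP.1.pow _) (by omega), hdeg, lam_pow ψ a hP.1, mul_assoc]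

variable {K : Type*} [Field K] [Algebra F K]

open IntermediateField in
lemma minpoly_inv_nextCoeff [FiniteDimensional F K] (x : K) (hx : x ≠ 0) :
    (minpoly F x⁻¹).nextCoeff = (minpoly F x).coeff 1 / (minpoly F x).coeff 0 := by
  have hxi : IsIntegral F x := .of_finite F x
  have hxi' : IsIntegral F x⁻¹ := .of_finite F x⁻¹
  set P := minpoly F x with hP
  have hPm : P.Monic := minpoly.monic hxi
  have h0 : P.coeff 0 ≠ 0 := minpoly.coeff_zero_ne_zero hxi hx
  have hpos : 0 < P.natDegree := minpoly.natDegree_pos hxi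
  have hadj : F⟮x⁻¹⟯ = F⟮x⟯ := by
    apply le_antisymm
    · rw [adjoin_simple_le_iff]; exact inv_mem (mem_adjoin_simple_self F x)
    · rw [adjoin_simple_le_iff]; simpa using inv_mem (mem_adjoin_simple_self F x⁻¹)
  have hdeg : (minpoly F x⁻¹).natDegree = P.natDegree := by
    rw [← adjoin.finrank hxi', hadj, adjoin.finrank hxi]
  have hntd : P.natTrailingDegree = 0 := natTrailingDegree_eq_zero.2 (Or.inr h0)
  have hRd : P.reverse.natDegree = P.natDegree := by rw [reverse_natDegree, hntd, Nat.sub_zero]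
  have hRlc : P.reverse.leadingCoeff = P.coeff 0 := by rw [reverse_leadingCoeff, trailingCoeff, hntd]
  have hroot : aeval x⁻¹ P.reverse = 0 := by
    let := invertibleOfNonzero hx
    rw [aeval_def, ← invOf_eq_inv, eval₂_reverse_eq_zero_iff]
    exact minpoly.aeval F x
  have hdvd : minpoly F x⁻¹ ∣ C (P.coeff 0)⁻¹ * P.reverse :=
    minpoly.dvd F _ (by simp [hroot])
  have hmon : (C (P.coeff 0)⁻¹ * P.reverse).Monic := by
    rw [Monic, leadingCoeff_mul, leadingCoeff_C, hRlc, inv_mul_cancel₀ h0]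
  have hd : (C (P.coeff 0)⁻¹ * P.reverse).natDegree = P.natDegree := by
    rw [natDegree_C_mul (inv_ne_zero h0), hRd]
  have heq := eq_of_monic_of_dvd_of_natDegree_le (minpoly.monic hxi') hmon hdvd (by rw [hd, hdeg])
  have := nextCoeff_of_natDegree_pos (p := C (P.coeff 0)⁻¹ * P.reverse) (by omega)
  rw [hd, coeff_C_mul, coeff_reverse, revAt_le (by omega)] at this
  rw [← heq, this, show P.natDegree - (P.natDegree - 1) = 1 by omega]
  field_simp

open IntermediateField in
lemma trace_lam [FiniteDimensional F K] (ψ : AddChar F ℂ) (a : F) (x : K) (hx : x ≠ 0) :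
    lam ψ a (minpoly F x) ^ (Module.finrank F K / (minpoly F x).natDegree) =
      ψ (Algebra.trace F K (x + algebraMap F K a * x⁻¹)) := by
  have hxi : IsIntegral F x := .of_finite F x
  have hadj : F⟮x⁻¹⟯ = F⟮x⟯ := by
    apply le_antisymm
    · rw [adjoin_simple_le_iff]; exact inv_mem (mem_adjoin_simple_self F x)
    · rw [adjoin_simple_le_iff]; simpa using inv_mem (mem_adjoin_simple_self F x⁻¹)
  have he : Module.finrank F K / (minpoly F x).natDegree = Module.finrank F⟮x⟯ K := by
    rw [← Module.finrank_mul_finrank F F⟮x⟯ K, adjoin.finrank hxi,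
      Nat.mul_div_cancel_left _ (minpoly.natDegree_pos hxi)]
  rw [he, ← Algebra.smul_def, map_add, map_smul, trace_eq_finrank_mul_minpoly_nextCoeff,
    trace_eq_finrank_mul_minpoly_nextCoeff, minpoly_inv_nextCoeff x hx, hadj, lam,
    if_neg (minpoly.coeff_zero_ne_zero hxi hx), ← AddChar.map_nsmul_eq_pow]
  congr 1
  rw [nsmul_eq_mul, smul_eq_mul]
  ring

lemma card_minpoly_fiber [Fintype K] (P : F[X]) (hm : P.Monic) (hi : Irreducible P)
    (hd : P.natDegree ∣ Module.finrank F K) : #{x : K | minpoly F x = P} = P.natDegree := by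
  have hdvd := hi.natDegree_dvd_iff_dvd_X_pow_card_pow_sub_X.1 hd
  rw [Nat.card_eq_fintype_card, ← Module.card_eq_pow_finrank] at hdvd
  have hsp : Splits (P.map (algebraMap F K)) := by
    refine Splits.of_dvd (IsSplittingField.splits K (X ^ Fintype.card K - X : F[X])) ?_ (map_dvd (algebraMap F K) hdvd)
    exact map_ne_zero (FiniteField.X_pow_card_sub_X_ne_zero _ Fintype.one_lt_card)
  rw [← card_rootSet_eq_natDegree (PerfectField.separable_of_irreducible hi) hsp, ← Set.toFinset_card]
  congr 1
  ext x
  rw [mem_filter, Set.mem_toFinset, mem_rootSet]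
  constructor
  · rintro ⟨-, rfl⟩; exact ⟨hi.ne_zero, minpoly.aeval F x⟩
  · rintro ⟨-, h⟩; exact ⟨mem_univ _, (minpoly.eq_of_irreducible_of_monic hi h hm).symm⟩

lemma sS_eq [Fintype K] (ψ : AddChar F ℂ) (a : F) :
    sS ψ a (Module.finrank F K) =
      ∑ x : K with x ≠ 0, ψ (Algebra.trace F K (x + algebraMap F K a * x⁻¹)) := by
  have hr : 1 ≤ Module.finrank F K := Module.finrank_pos
  have h1 : ∑ x : K with x ≠ 0, ψ (Algebra.trace F K (x + algebraMap F K a * x⁻¹)) =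
     ∑ x : K, lam ψ a (minpoly F x) ^ (Module.finrank F K / (minpoly F x).natDegree) := by
    rw [sum_filter]
    refine sum_congr rfl fun x _ => ?_
    split_ifs with h
    · exact (trace_lam ψ a x h).symm
    · have : x = 0 := by simpa using h
      subst this
      rw [minpoly.zero, natDegree_X, Nat.div_one, lam, if_pos (by simp), zero_pow (by omega)]
  rw [h1, ← sum_fiberwise_of_maps_to (t := irrD F (Module.finrank F K)) (g := fun x => minpoly F x)]
  · rw [sS]
    refine sum_congr rfl fun P hP => ?_
    rw [mem_irrD hr] at hP
    rw [← card_minpoly_fiber (K := K) P hP.1 hP.2.1 hP.2.2, ← nsmul_eq_mul, ← sum_const]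
    refine sum_congr rfl fun x hx => ?_
    rw [mem_filter] at hx
    rw [hx.2, card_minpoly_fiber P hP.1 hP.2.1 hP.2.2]
  · intro x _
    have hxi : IsIntegral F x := .of_finite F x
    rw [mem_irrD hr]
    exact ⟨minpoly.monic hxi, minpoly.irreducible hxi, minpoly.degree_dvd hxi⟩

end LFun
end Weil

namespace Weil
open Polynomial
section Final
variable {F : Type*} [Field F] [Fintype F]

lemma S_bound {K : Type*} [Field K] [Algebra F K] [Fintype K] (ψ : AddChar F ℂ) (hψ : ψ ≠ 1) (a : F) (k : ℕ)
    (hK : Module.finrank F K = 2 * (k+1)) :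
    ‖∑ x : K with x ≠ 0, ψ (Algebra.trace F K (x + algebraMap F K a * x⁻¹))‖ ≤
      9 * Fintype.card F * (Fintype.card F : ℝ) ^ (k+1) := by
  set q := Fintype.card F with hq
  have hq1 : 1 < q := Fintype.one_lt_card
  set N : F → ℕ := fun b => #{x : K | x ≠ 0 ∧ Algebra.trace F K (x + algebraMap F K a * x⁻¹) = b} with hN
  have hNle : ∀ b, (N b : ℝ) ≤ (q : ℝ) ^ (2 * k + 1) + 4 * (q : ℝ) ^ (k+1) := fun b => by
    exact_mod_cast stepanov a b k hK
  have h1 : ∑ x : K with x ≠ 0, ψ (Algebra.trace F K (x + algebraMap F K a * x⁻¹)) =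
      ∑ b : F, (N b : ℂ) * ψ b := by
    rw [← sum_fiberwise (s := {x : K | x ≠ 0})
      (g := fun x => Algebra.trace F K (x + algebraMap F K a * x⁻¹))]
    refine sum_congr rfl fun b _ => ?_
    rw [hN, ← nsmul_eq_mul, ← sum_const, filter_filter]
    refine sum_congr rfl fun x hx => ?_
    rw [mem_filter] at hx
    rw [hx.2.2]
  have h2 : ∑ b : F, N b = q ^ (2 * (k+1)) - 1 := by
    rw [← hK, ← Module.card_eq_pow_finrank (K := F) (V := K)]
    have := card_eq_sum_card_fiberwise (s := ({x : K | x ≠ 0} : Finset K)) (t := (univ : Finset F))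
      (f := fun x => Algebra.trace F K (x + algebraMap F K a * x⁻¹)) (fun _ _ => by simp)
    simp only [filter_filter] at this
    rw [hN, ← this, filter_ne', card_erase_of_mem (mem_univ _), card_univ]
  have h2' : ∑ b : F, (N b : ℝ) = (q : ℝ) ^ (2 * (k+1)) - 1 := by
    rw [← Nat.cast_sum, h2, Nat.cast_sub (Nat.one_le_pow _ _ (by omega))]; simp
  have h3 : ∑ b : F, (N b : ℂ) * ψ b = ∑ b : F, (((N b : ℝ) - (q : ℝ) ^ (2 * k + 1) : ℝ) : ℂ) * ψ b := by
    have : ∑ b : F, ψ b = 0 := AddChar.sum_eq_zero_of_ne_one hψ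
    push_cast
    simp only [sub_mul, sum_sub_distrib, ← mul_sum, this, mul_zero, sub_zero]
  rw [h1, h3]
  calc _ ≤ ∑ b : F, ‖(((N b : ℝ) - (q : ℝ) ^ (2 * k + 1) : ℝ) : ℂ) * ψ b‖ := norm_sum_le _ _
    _ ≤ ∑ b : F, ((q : ℝ) ^ (2 * k + 1) + 8 * (q : ℝ) ^ (k+1) - N b) := by
        refine sum_le_sum fun b _ => ?_
        rw [norm_mul, AddChar.norm_apply, mul_one, Complex.norm_real, Real.norm_eq_abs, abs_le]
        have := hNle b
        have h0 : (0 : ℝ) ≤ (q : ℝ) ^ (k+1) := by positivity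
        constructor <;> linarith
    _ = 1 + 8 * q * (q : ℝ) ^ (k+1) := by
        rw [sum_sub_distrib, h2', sum_const, card_univ, ← hq, nsmul_eq_mul]; ring
    _ ≤ _ := by
        have h5 : (1 : ℝ) ≤ q := by exact_mod_cast hq1.le
        have h6 : (1 : ℝ) ≤ (q : ℝ) ^ (k+1) := one_le_pow₀ h5
        nlinarith

lemma sS_bound (ψ : AddChar F ℂ) (hψ : ψ ≠ 1) (a : F) (k : ℕ) :
    ‖sS ψ a (2 * (k+1))‖ ≤ 9 * Fintype.card F * (Fintype.card F : ℝ) ^ (k+1) := by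
  obtain ⟨p, hp⟩ := CharP.exists F
  have : Fact p.Prime := ⟨CharP.char_is_prime F p⟩
  have : NeZero (2 * (k+1)) := ⟨by omega⟩
  have hfin := FiniteField.finrank_extension F p (2 * (k+1))
  let := Fintype.ofFinite (FiniteField.Extension F p (2 * (k+1)))
  have h := S_bound (K := FiniteField.Extension F p (2 * (k+1))) ψ hψ a k hfin
  rwa [← sS_eq, hfin] at h

lemma sS_eq_roots (ψ : AddChar F ℂ) (hψ : ψ ≠ 1) (a : Fˣ) (α β : ℂ) (h1 : α + β = - Kl2 ψ a)
    (h2 : α * β = Fintype.card F) (n : ℕ) :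
    sS ψ (a : F) (n+1) = - (α ^ (n+1) + β ^ (n+1)) := by
  have a0 := aS_zero ψ (a : F)
  have a1 : aS ψ (a : F) 1 = -(α + β) := by rw [h1, neg_neg, aS_one, Kl2]
  have a2 : aS ψ (a : F) 2 = α * β := by rw [h2, aS_two ψ hψ]
  have r1 : sS ψ (a : F) 1 = -(α + β) := by
    have := recurrence ψ (a : F) 1
    simp [a0, a1] at this
    rw [← this]; ring
  induction n using Nat.strong_induction_on with
  | _ n ih =>
    match n with
    | 0 => simpa using r1
    | 1 =>
      have := recurrence ψ (a : F) 2
      rw [sum_Icc_succ_top (by omega)] at this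
      simp [a0, a1, a2, r1] at this
      simp only [Nat.reduceAdd]
      linear_combination -this
    | m + 2 =>
      have := recurrence ψ (a : F) (m + 3)
      rw [aS_ge ψ hψ _ _ (by omega), sum_Icc_succ_top (by omega), sum_Icc_succ_top (by omega),
        sum_Icc_succ_top (by omega)] at this
      have hz : ∑ r ∈ Icc 1 m, sS ψ (a : F) r * aS ψ (a : F) (m + 3 - r) = 0 := by
        refine sum_eq_zero fun r hr => ?_
        rw [mem_Icc] at hr
        rw [aS_ge ψ hψ _ _ (by omega), mul_zero]
      rw [hz, show m + 3 - (m + 1) = 2 by omega, show m + 3 - (m + 1 + 1) = 1 by omega,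
        show m + 3 - (m + 2 + 1) = 0 by omega, a0, a1, a2, ih m (by omega), ih (m+1) (by omega)] at this
      linear_combination -this

lemma growth (α β : ℂ) (q C : ℝ) (hq : 0 < q) (hαβ : ‖α‖ * ‖β‖ = q)
    (h : ∀ k : ℕ, ‖α ^ (2 * (k+1)) + β ^ (2 * (k+1))‖ ≤ C * q ^ (k+1)) : ‖α‖ ^ 2 ≤ q := by
  by_contra! hlt
  have hβ : ‖β‖ ^ 2 ≤ q := by
    by_contra! h2
    have : q * q < ‖α‖ ^ 2 * ‖β‖ ^ 2 := mul_lt_mul'' hlt h2 hq.le hq.le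
    rw [← mul_pow, hαβ] at this
    nlinarith
  have hρ : 1 < ‖α‖ ^ 2 / q := by rwa [one_lt_div hq]
  obtain ⟨n, hn⟩ := pow_unbounded_of_one_lt (C + 1) hρ
  have hn' : C + 1 < (‖α‖ ^ 2 / q) ^ (n+1) :=
    hn.trans_le (pow_le_pow_right₀ hρ.le (Nat.le_succ n))
  rw [div_pow, lt_div_iff₀ (by positivity)] at hn'
  have h3 : ‖α ^ (2 * (n+1))‖ ≤ ‖α ^ (2 * (n+1)) + β ^ (2 * (n+1))‖ + ‖β ^ (2 * (n+1))‖ := by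
    simpa using norm_sub_le (α ^ (2 * (n+1)) + β ^ (2 * (n+1))) (β ^ (2 * (n+1)))
  have h4 : ‖β ^ (2 * (n+1))‖ ≤ q ^ (n+1) := by
    rw [norm_pow, pow_mul]; exact pow_le_pow_left₀ (by positivity) hβ _
  rw [norm_pow, pow_mul] at h3
  have := h n
  linarith

end Final
end Weil

/-- **Weil's bound for Kloosterman sums.** For every finite field `F_q`, every nontrivial
additive character `ψ` and every `a ∈ F_q^×`, `|Kl_2(a, q)| ≤ 2√q`. -/
theorem weil_bound_kloosterman
    {F : Type*} [Field F] [Fintype F] (ψ : AddChar F ℂ) (hψ : ψ ≠ 1) (a : Fˣ) :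
    ‖Kl2 ψ a‖ ≤ 2 * Real.sqrt (Fintype.card F) := by
  obtain ⟨s, hs⟩ := IsAlgClosed.exists_pow_nat_eq ((Kl2 ψ a) ^ 2 - 4 * Fintype.card F) (n := 2) (by norm_num)
  set α : ℂ := (-Kl2 ψ a + s) / 2 with hα
  set β : ℂ := (-Kl2 ψ a - s) / 2 with hβ
  have h1 : α + β = - Kl2 ψ a := by rw [hα, hβ]; ring
  have h2 : α * β = Fintype.card F := by rw [hα, hβ]; linear_combination (-1/4) * hs
  have hq : (0 : ℝ) < Fintype.card F := by exact_mod_cast Fintype.card_pos (α := F)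
  have hn : ‖α‖ * ‖β‖ = Fintype.card F := by rw [← norm_mul, h2]; simp
  have hb : ∀ k : ℕ, ‖α ^ (2 * (k+1)) + β ^ (2 * (k+1))‖ ≤
      9 * Fintype.card F * (Fintype.card F : ℝ) ^ (k+1) := by
    intro k
    have h := Weil.sS_bound ψ hψ (a : F) k
    have e := Weil.sS_eq_roots ψ hψ a α β h1 h2 (2 * k + 1)
    rw [show 2 * k + 1 + 1 = 2 * (k + 1) by ring] at e
    rwa [e, norm_neg] at h
  have hA := Weil.growth α β _ _ hq hn hb
  have hB := Weil.growth β α _ (9 * Fintype.card F) hq (by rw [mul_comm, hn])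
    (fun k => by rw [add_comm]; exact hb k)
  have hA' := Real.le_sqrt_of_sq_le hA
  have hB' := Real.le_sqrt_of_sq_le hB
  calc ‖Kl2 ψ a‖ = ‖α + β‖ := by rw [h1, norm_neg]
    _ ≤ ‖α‖ + ‖β‖ := norm_add_le _ _
    _ ≤ _ := by linarith
end
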